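/- Let R1 be a reduced root system spanning V*. The set of generic linear residual points of R1 is finite, nonempty, and stable under the action of the Weyl group W0 by postcomposition. -/

import Mathlib

open Classical

noncomputable section

namespace GenRes

variable (V : Type*) [AddCommGroup V] [Module ℝ V]

/-- a reduced (crystallographic) root system in `V*` spanning `V*`:  a finite set of
nonzero linear functionals on `V`, spanning `V*`, closed under the reflections
associated to the coroots, integral, and reduced -/
structure RedRootSystem where
  roots : Finset (Module.Dual ℝ V)
  zero_not_mem : (0 : Module.Dual ℝ V) ∉ roots
  spanning : Submodule.span ℝ (roots : Set (Module.Dual ℝ V)) = ⊤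
  coroot : Module.Dual ℝ V → V
  coroot_two : ∀ α ∈ roots, α (coroot α) = 2
  reflect_mem : ∀ α ∈ roots, ∀ β ∈ roots, β - β (coroot α) • α ∈ roots
  integral : ∀ α ∈ roots, ∀ β ∈ roots, ∃ z : ℤ, β (coroot α) = (z : ℝ)
  reduced : ∀ α ∈ roots, ∀ c : ℝ, c • α ∈ roots → c = 1 ∨ c = -1

variable {V} (rs : RedRootSystem V)

/-- a parameter function `k : R1 → ℝ` is `W0`-invariant iff it is invariant under all
the reflections `β ↦ β − β(α∨)α` -/
def Invariant (k : rs.roots → ℝ) : Prop :=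
  ∀ α β : rs.roots,
    k ⟨(β : Module.Dual ℝ V) - (β : Module.Dual ℝ V) (rs.coroot α) • (α : Module.Dual ℝ V),
        rs.reflect_mem α α.2 β β.2⟩ = k β

/-- the space `K` of `W0`-invariant parameter functions `R1 → ℝ`, as a submodule of the
space of all functions `R1 → ℝ` -/
def ParamSub : Submodule ℝ (rs.roots → ℝ) where
  carrier := {k | Invariant rs k}
  add_mem' := by
    intro a b ha hb α β
    simp only [Pi.add_apply, ha α β, hb α β]
  zero_mem' := by intro α β; rfl
  smul_mem' := by
    intro c a ha α β
    simp only [Pi.smul_apply, ha α β]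

/-- `ξ ∈ V` is a linear `(R1,k)`-residual point:
`#{α ∈ R1 : α(ξ) = k(α)} = #{α ∈ R1 : α(ξ) = 0} + dim V` -/
def IsLinResidual (k : rs.roots → ℝ) (ξ : V) : Prop :=
  {α : rs.roots | (α : Module.Dual ℝ V) ξ = k α}.ncard =
    {α : rs.roots | (α : Module.Dual ℝ V) ξ = 0}.ncard + Module.finrank ℝ V

/-- a linear map `ξ : K → V` is a generic linear residual point of `R1` if `ξ(k)` is a
linear `(R1,k)`-residual point for all `k` in a dense open subset of `K` -/
def IsGeneric (ξ : (ParamSub rs) →ₗ[ℝ] V) : Prop :=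
  ∃ U : Set (ParamSub rs), IsOpen U ∧ Dense U ∧
    ∀ k ∈ U, IsLinResidual rs (k : rs.roots → ℝ) (ξ k)

/-- the reflection of `V` associated to the root `α`:  `v ↦ v − α(v)·α∨` -/
def reflV (α : Module.Dual ℝ V) : V →ₗ[ℝ] V :=
  LinearMap.id - α.smulRight (rs.coroot α)

/-- the element of the Weyl group `W0` given by a word in the reflections -/
def weylOf (L : List (Module.Dual ℝ V)) : V →ₗ[ℝ] V :=
  (L.map (fun α => reflV rs α)).prod


section FileP1a
section LieCore
open Module Polynomial

/-- Jacobson's lemma. -/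
theorem jacobson_nilp {K M : Type*} [Field K] [CharZero K] [AddCommGroup M] [Module K M]
    [FiniteDimensional K M] (A B C : Module.End K M) (hC : A * B - B * A = C)
    (hAC : A * C = C * A) : IsNilpotent C := by
  have htr : ∀ r : K[X], LinearMap.trace K M (aeval C r * C) = 0 := by
    intro r
    have hcomm : Commute A (aeval C r) := by
      have : Commute A C := hAC
      induction r using Polynomial.induction_on' with
      | add p q hp hq => rw [map_add]; exact hp.add_right hq
      | monomial n a =>
        rw [aeval_monomial]
        exact (Algebra.commute_algebraMap_right a A).mul_right (this.pow_right n)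
    have e : aeval C r * C = aeval C r * (A * B - B * A) := by rw [hC]
    rw [e, mul_sub, map_sub, ← mul_assoc, ← mul_assoc, ← hcomm.eq, mul_assoc A,
      LinearMap.trace_mul_comm, sub_self]
  have hm : minpoly K C ≠ 0 := minpoly.ne_zero (Algebra.IsIntegral.isIntegral C)
  obtain ⟨q, hq, hqX⟩ := Polynomial.exists_eq_pow_rootMultiplicity_mul_and_not_dvd _ hm 0
  set k := rootMultiplicity 0 (minpoly K C)
  rw [map_zero, sub_zero] at hq hqX
  have hcop : IsCoprime (X ^ (k+1)) q := by
    apply IsCoprime.pow_left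
    exact (Polynomial.irreducible_X.coprime_iff_not_dvd).2 hqX
  obtain ⟨u, v, huv⟩ := hcop
  have h0 : C ^ k * aeval C q = 0 := by
    have := minpoly.aeval K C
    rw [hq] at this; simpa using this
  have h1 : aeval C u * C ^ (k+1) + aeval C v * aeval C q = 1 := by
    have := congrArg (aeval C) huv; simpa using this
  set π := aeval C u * C ^ (k+1) with hπ
  have hid : IsIdempotentElem π := by
    have : π * (1 - π) = 0 := by
      have e : 1 - π = aeval C q * aeval C v := by
        rw [← map_mul, mul_comm, map_mul, ← h1]; abel
      rw [e, hπ, pow_succ', mul_assoc, mul_assoc C, ← mul_assoc (C^k), h0]; simp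
    unfold IsIdempotentElem
    rw [mul_sub, mul_one, sub_eq_zero] at this
    exact this.symm
  have hpi : π = 0 := by
    have ht : LinearMap.trace K M π = 0 := by
      have := htr (u * X ^ k)
      rwa [map_mul (aeval C), map_pow (aeval C), aeval_X, mul_assoc, ← pow_succ] at this
    have := (LinearMap.IsIdempotentElem.isProj_range π hid).trace
    rw [ht] at this
    have h3 : finrank K (LinearMap.range π) = 0 := by exact_mod_cast this.symm
    rw [Submodule.finrank_eq_zero, LinearMap.range_eq_bot] at h3
    exact h3
  refine ⟨k, ?_⟩
  rw [hpi, zero_add] at h1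
  calc C ^ k = C ^ k * (aeval C v * aeval C q) := by rw [h1, mul_one]
    _ = 0 := by rw [← map_mul, mul_comm v, map_mul, ← mul_assoc, h0, zero_mul]

theorem trace_zero_aux {K M : Type*} [Field K] [CharZero K] [AddCommGroup M] [Module K M]
    [FiniteDimensional K M] (A B C : Module.End K M) (hC : A * B - B * A = C)
    (hAC : A * C = C * A) (hA : IsNilpotent A) : LinearMap.trace K M (A * B) = 0 := by
  obtain ⟨N, hN⟩ := jacobson_nilp A B C hC hAC
  have hpow : ∀ m : ℕ, A ^ (m+1) * B = B * A ^ (m+1) + (m + 1 : K) • (A ^ m * C) := by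
    intro m
    have hC' : A * B = B * A + C := by rw [← hC]; abel
    induction m with
    | zero => simp [hC']
    | succ m ih =>
      rw [pow_succ', mul_assoc, ih, mul_add, ← mul_assoc A B, hC', add_mul, mul_smul_comm]
      have e1 : C * A ^ (m+1) = A ^ (m+1) * C := ((Commute.pow_left (show Commute A C from hAC) _).eq).symm
      rw [e1, ← mul_assoc A, ← pow_succ', mul_assoc B, ← pow_succ']
      push_cast
      module
  have hCk : ∀ m k : ℕ, ∀ v, (A ^ m) v = 0 → (A ^ m) ((C ^ k) v) = 0 := by
    intro m k v hv
    have : Commute (A ^ m) (C ^ k) := Commute.pow_pow (show Commute A C from hAC) _ _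
    rw [← Module.End.mul_apply, this.eq, Module.End.mul_apply, hv, map_zero]
  have key : ∀ m : ℕ, ∀ v, (A ^ m) v = 0 → ∃ k, ((A * B) ^ k) v = 0 := by
    intro m
    induction m with
    | zero => intro v hv; exact ⟨0, by simpa using hv⟩
    | succ m ih =>
      intro v hv
      have step : ∀ w, (A ^ (m+1)) w = 0 →
          (A ^ m) ((A * B) w) = (m + 1 : K) • (A ^ m) (C w) := by
        intro w hw
        rw [← Module.End.mul_apply, ← mul_assoc, ← pow_succ, hpow]
        simp [hw]
      have h2 : ∀ k, (A ^ m) (((A * B) ^ k) v - ((m+1 : K) ^ k) • (C ^ k) v) = 0 := by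
        intro k
        induction k with
        | zero => simp
        | succ k ihk =>
          set r := ((A * B) ^ k) v - ((m+1 : K) ^ k) • (C ^ k) v with hr
          have e : ((A * B) ^ k) v = r + ((m+1 : K) ^ k) • (C ^ k) v := by rw [hr]; abel
          have h3 : (A ^ (m+1)) ((C^k) v) = 0 := hCk _ _ _ hv
          have h4 : (A ^ (m+1)) r = 0 := by
            rw [pow_succ', Module.End.mul_apply, ihk, map_zero]
          have h5 : (A ^ m) (C r) = 0 := by simpa using hCk m 1 r ihk
          rw [pow_succ', Module.End.mul_apply, e, map_add, map_smul, map_sub, map_add, map_smul,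
            step _ h3, step _ h4, h5, pow_succ' C, Module.End.mul_apply, map_smul, pow_succ]
          module
      have h6 := h2 N
      rw [hN] at h6
      simp only [LinearMap.zero_apply, smul_zero, sub_zero] at h6
      obtain ⟨k, hk⟩ := ih _ h6
      exact ⟨k + N, by rw [pow_add, Module.End.mul_apply, hk]⟩
  have : IsNilpotent (A * B) := by
    rw [Module.End.isNilpotent_iff_of_finite]
    obtain ⟨n, hn⟩ := hA
    intro v
    exact key n v (by simp [hn])
  exact (LinearMap.isNilpotent_trace_of_isNilpotent this).eq_zero

/-- the raising argument -/
theorem raise_aux {K M : Type*} [Field K] [CharZero K] [AddCommGroup M] [Module K M]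
    [FiniteDimensional K M] (E V Y : Module.End K M) (h1 : E * V - V * E = Y)
    (h2 : Y * E - E * Y = E) (hE : IsNilpotent E) (f : M) (hf : E f = 0) (hY : Y f = - f) :
    f = 0 := by
  have hYE : ∀ k : ℕ, E ^ k * Y = Y * E ^ k - (k : K) • E ^ k := by
    intro k
    induction k with
    | zero => simp
    | succ k ih =>
      have e : E * Y = Y * E - E := eq_sub_of_add_eq' (sub_eq_iff_eq_add.1 h2).symm
      rw [pow_succ', mul_assoc, ih, mul_sub, ← mul_assoc, e, sub_mul, mul_assoc, mul_smul_comm,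
        ← pow_succ']
      push_cast; module
  have hEV : ∀ j : ℕ, E ^ (j+1) * V = V * E ^ (j+1) + (j+1 : K) • (Y * E ^ j)
      - ((j : K) * (j + 1) / 2) • E ^ j := by
    intro j
    have e : E * V = V * E + Y := by rw [← h1]; abel
    induction j with
    | zero => simp [e]
    | succ j ih =>
      rw [pow_succ E (j+1), mul_assoc, e, mul_add, ← mul_assoc, ih, hYE]
      simp only [sub_mul, add_mul, smul_mul_assoc, mul_assoc, ← pow_succ]
      push_cast
      module
  have h : ∀ j : ℕ, ∃ w, (E ^ j) w = f := by
    intro j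
    induction j with
    | zero => exact ⟨f, by simp⟩
    | succ j ih =>
      obtain ⟨w, hw⟩ := ih
      have h3 := congrArg (fun T => T w) (hEV j)
      have h4 : (E ^ (j+1)) w = 0 := by rw [pow_succ', Module.End.mul_apply, hw, hf]
      simp only [Module.End.mul_apply, LinearMap.add_apply, LinearMap.sub_apply,
        LinearMap.smul_apply, h4, map_zero, hw, hY, zero_add] at h3
      have hc : (-(j+1 : K) - (j : K) * (j+1)/2) ≠ 0 := by
        have : (-(j+1 : K) - (j : K) * (j+1)/2) = -(((j+1) * (j+2) : ℕ) : K)/2 := by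
          push_cast; ring
        rw [this]
        apply div_ne_zero _ two_ne_zero
        rw [neg_ne_zero]
        exact_mod_cast (Nat.mul_ne_zero (Nat.succ_ne_zero j) (Nat.succ_ne_zero (j+1)))
      refine ⟨(-(j+1 : K) - (j : K) * (j+1)/2)⁻¹ • V w, ?_⟩
      rw [map_smul, h3, inv_smul_eq_iff₀ hc]
      module
  obtain ⟨n, hn⟩ := hE
  obtain ⟨w, hw⟩ := h n
  rw [← hw, hn]; rfl

/-- perturbation lemma for linear independence -/
theorem linInd_perturb {K M ι : Type*} [Field K] [CharZero K] [AddCommGroup M] [Module K M]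
    [FiniteDimensional K M] [Fintype ι] (v w : ι → M) (hv : LinearIndependent K v) :
    ∃ t : K, t ≠ 0 ∧ LinearIndependent K (fun i => v i + t • w i) := by
  classical
  let V := Fintype.linearCombination K v
  let W := Fintype.linearCombination K w
  have hV : LinearMap.ker V = ⊥ := by
    rw [LinearMap.ker_eq_bot]
    exact linearIndependent_iff_injective_fintypeLinearCombination.1 hv
  obtain ⟨g, hg⟩ := LinearMap.exists_leftInverse_of_injective V hV
  have hfin : {μ : K | Module.End.HasEigenvalue (g ∘ₗ W) μ}.Finite := 
    Module.End.finite_hasEigenvalue _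
  have hfin2 : ({0} ∪ (fun μ : K => -μ⁻¹) '' {μ : K | Module.End.HasEigenvalue (g ∘ₗ W) μ}).Finite :=
    (Set.finite_singleton _).union (hfin.image _)
  obtain ⟨t, ht⟩ := hfin2.exists_notMem
  simp only [Set.mem_union, not_or] at ht
  have ht0 : t ≠ 0 := ht.1
  refine ⟨t, ht0, ?_⟩
  rw [Fintype.linearIndependent_iff]
  intro c hc
  have h1 : V c + t • W c = 0 := by
    rw [← hc]
    simp only [V, W, Fintype.linearCombination_apply, Finset.smul_sum, ← Finset.sum_add_distrib]
    apply Finset.sum_congr rfl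
    intro i _; module
  have h2 : c + t • (g ∘ₗ W) c = 0 := by
    have := congrArg g h1
    rw [map_add, map_smul, map_zero, ← LinearMap.comp_apply g V, hg] at this
    simpa using this
  by_contra hne
  have hc0 : c ≠ 0 := by
    rintro rfl; exact hne (by simp)
  apply ht.2
  refine ⟨-t⁻¹, ?_, by simp⟩
  apply Module.End.hasEigenvalue_of_hasEigenvector (x := c)
  refine ⟨?_, hc0⟩
  rw [Module.End.mem_eigenspace_iff]
  have : t • (g ∘ₗ W) c = - c := by rw [eq_neg_iff_add_eq_zero, add_comm]; exact h2
  calc (g ∘ₗ W) c = t⁻¹ • (t • (g ∘ₗ W) c) := by rw [smul_smul, inv_mul_cancel₀ ht0, one_smul]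
    _ = _ := by rw [this]; module

end LieCore

end FileP1a

section FileP1b
section LieCore2
open Module LieAlgebra

theorem lie_core {K L : Type*} [Field K] [CharZero K] [LieRing L] [LieAlgebra K L]
    [FiniteDimensional K L] [LieAlgebra.IsKilling K L] (x : L)
    (hx : ⨆ c : K, (ad K L x).eigenspace c = ⊤) :
    finrank K ((ad K L x).eigenspace 1) ≤ finrank K ((ad K L x).eigenspace 0) := by
  classical
  set g : K → Submodule K L := fun c => (ad K L x).eigenspace c with hg
  have adl : ∀ u v : L, ad K L u * ad K L v - ad K L v * ad K L u = ad K L ⁅u, v⁆ := by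
    intro u v; ext w
    simp only [LinearMap.sub_apply, Module.End.mul_apply, ad_apply]
    rw [leibniz_lie u v w]; abel
  have mem_g : ∀ c u, u ∈ g c ↔ ⁅x, u⁆ = c • u := by
    intro c u; simp [hg, Module.End.mem_eigenspace_iff]
  have lie_mem : ∀ a b u v, u ∈ g a → v ∈ g b → ⁅u, v⁆ ∈ g (a + b) := by
    intro a b u v hu hv
    rw [mem_g] at *
    rw [leibniz_lie, hu, hv, smul_lie, lie_smul, add_smul]
  have g_ind : ∀ {P : L → Prop}, (∀ c, ∀ u ∈ g c, P u) → P 0 → (∀ u v, P u → P v → P (u + v)) →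
      ∀ u, P u := by
    intro P h1 h0 h2 u
    have hu : u ∈ ⨆ c : K, g c := by rw [hx]; trivial
    exact Submodule.iSup_induction g (motive := P) hu h1 h0 h2
  let κ := killingForm K L
  have κdef : ∀ u v, κ u v = LinearMap.trace K L (ad K L u * ad K L v) := fun u v => rfl
  have κsymm : ∀ u v, κ u v = κ v u := fun u v => LieModule.traceForm_comm K L L u v
  have κinv : ∀ u v w, κ ⁅u, v⁆ w = κ u ⁅v, w⁆ := fun u v w =>
    LieModule.traceForm_apply_lie_apply K L L u v w
  have κinv' : ∀ u v w, κ ⁅u, v⁆ w = - κ v ⁅u, w⁆ := fun u v w =>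
    LieModule.traceForm_apply_lie_apply' K L L u v w
  have κnd : ∀ u, (∀ v, κ u v = 0) → u = 0 := fun u hu =>
    (IsKilling.killingForm_nondegenerate K L).1 u hu
  have κorth : ∀ a b u v, a + b ≠ 0 → u ∈ g a → v ∈ g b → κ u v = 0 := by
    intro a b u v hab hu hv
    have h := κinv' x u v
    rw [(mem_g _ _).1 hu, (mem_g _ _).1 hv] at h
    simp only [map_smul, LinearMap.smul_apply, smul_eq_mul] at h
    have : (a + b) * κ u v = 0 := by linear_combination h
    exact (mul_eq_zero.1 this).resolve_left hab
  have proj : ∀ c, ∀ f', ∃ f ∈ g c, ∀ w ∈ g (-c), κ f' w = κ f w := by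
    intro c
    apply g_ind
    · intro d u hu
      by_cases hd : d = c
      · subst hd; exact ⟨u, hu, fun _ _ => rfl⟩
      · refine ⟨0, zero_mem _, fun w hw => ?_⟩
        rw [map_zero, LinearMap.zero_apply]
        exact κorth d (-c) u w (by intro h; apply hd; linear_combination h) hu hw
    · exact ⟨0, zero_mem _, fun _ _ => rfl⟩
    · rintro u v ⟨f, hf, h⟩ ⟨f', hf', h'⟩
      refine ⟨f + f', add_mem hf hf', fun w hw => ?_⟩
      simp [h w hw, h' w hw]
  have nd : ∀ c, ∀ y ∈ g c, (∀ w ∈ g (-c), κ y w = 0) → y = 0 := by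
    intro c y hy h
    apply κnd
    intro w'
    obtain ⟨w, hw, h2⟩ := proj (-c) w'
    rw [κsymm, h2 y (by simpa using hy), κsymm, h w hw]
  have sep : ∀ c (W : Submodule K L) (e : L), W ≤ g (-c) → e ∈ g (-c) → e ∉ W →
      ∃ u ∈ g c, (∀ w ∈ W, κ u w = 0) ∧ κ u e ≠ 0 := by
    intro c W e hW he heW
    obtain ⟨ψ, hψ1, hψ2⟩ := Submodule.exists_le_ker_of_notMem heW
    obtain ⟨f', hf'⟩ : ∃ f', κ f' = ψ := by
      have hinj : Function.Injective κ := by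
        rw [← LinearMap.ker_eq_bot, LinearMap.ker_eq_bot']
        intro m hm
        exact κnd m (fun v => by rw [hm]; rfl)
      have : finrank K L = finrank K (Module.Dual K L) := (Subspace.dual_finrank_eq).symm
      exact (LinearMap.injective_iff_surjective_of_finrank_eq_finrank this).1 hinj ψ
    obtain ⟨f, hf, hf2⟩ := proj c f'
    refine ⟨f, hf, fun w hw => ?_, ?_⟩
    · rw [← hf2 w (hW hw), hf']; exact hψ2 hw
    · rw [← hf2 e he, hf']; exact hψ1
  have nilp : ∀ e ∈ g 1, IsNilpotent (ad K L e) := by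
    intro e he
    rw [Module.End.isNilpotent_iff_of_finite]
    have hfin : {μ : K | Module.End.HasEigenvalue (ad K L x) μ}.Finite :=
      Module.End.finite_hasEigenvalue _
    have hstep : ∀ (k : ℕ) c u, u ∈ g c → ((ad K L e) ^ k) u ∈ g (c + k) := by
      intro k c u hu
      induction k with
      | zero => simpa using hu
      | succ k ih =>
        rw [pow_succ', Module.End.mul_apply, ad_apply]
        have := lie_mem _ _ _ _ he ih
        convert this using 1
        push_cast; congr 1; ring
    apply g_ind
    · intro c u hu
      by_contra hcon
      push Not at hcon
      have : Set.range (fun k : ℕ => c + (k : K)) ⊆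
          {μ : K | Module.End.HasEigenvalue (ad K L x) μ} := by
        rintro _ ⟨k, rfl⟩
        exact Module.End.hasEigenvalue_of_hasEigenvector ⟨hstep k c u hu, hcon k⟩
      refine Set.infinite_range_of_injective ?_ (hfin.subset this)
      intro a b hab
      simpa using hab
    · exact ⟨0, by simp⟩
    · rintro u v ⟨n, hn⟩ ⟨m, hm⟩
      refine ⟨n + m, ?_⟩
      rw [map_add]
      have e1 : ((ad K L e) ^ (n + m)) u = 0 := by
        rw [add_comm, pow_add, Module.End.mul_apply, hn, map_zero]
      have e2 : ((ad K L e) ^ (n + m)) v = 0 := by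
        rw [pow_add, Module.End.mul_apply, hm, map_zero]
      rw [e1, e2, add_zero]
  -- the image of g 0 under ad e
  let im : L → Submodule K L := fun e => (g 0).map (ad K L e)
  have im_le : ∀ e ∈ g 1, im e ≤ g 1 := by
    rintro e he _ ⟨z, hz, rfl⟩
    have := lie_mem _ _ _ _ he hz
    simpa using this
  -- maximal rank
  obtain ⟨e, he, hmax⟩ : ∃ e ∈ g 1, ∀ e' ∈ g 1, finrank K (im e') ≤ finrank K (im e) := by
    have hbdd : BddAbove ((fun e => finrank K (im e)) '' (g 1 : Set L)) := by
      refine ⟨finrank K L, ?_⟩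
      rintro _ ⟨e, _, rfl⟩
      exact Submodule.finrank_le _
    have hne : ((fun e => finrank K (im e)) '' (g 1 : Set L)).Nonempty :=
      ⟨_, 0, zero_mem _, rfl⟩
    obtain ⟨e, he, h⟩ := Nat.sSup_mem hne hbdd
    refine ⟨e, he, fun e' he' => ?_⟩
    have := le_csSup hbdd ⟨e', he', rfl⟩
    simp only at h this
    rw [h]; exact this
  by_cases honto : im e = g 1
  · have h1 : finrank K (g 1) ≤ finrank K (g 0) := by
      rw [← honto]; exact Submodule.finrank_map_le _ _
    exact h1
  exfalso
  -- slice lemma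
  have slice : ∀ z ∈ g 0, ⁅e, z⁆ = 0 → ∀ u ∈ g 1, ⁅u, z⁆ ∈ im e := by
    intro z hz hez u hu
    by_contra hcon
    let b := Module.finBasis K (im e)
    have hb : ∀ i, ∃ w ∈ g 0, ⁅e, w⁆ = (b i : L) := by
      intro i
      obtain ⟨w, hw, h⟩ := (b i).2
      exact ⟨w, hw, h⟩
    choose w hw hwb using hb
    let v0 : Option (Fin (finrank K (im e))) → L := fun o => o.elim ⁅u, z⁆ (fun i => (b i : L))
    let w0 : Option (Fin (finrank K (im e))) → L := fun o => o.elim 0 (fun i => ⁅u, w i⁆)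
    have hli : LinearIndependent K v0 := by
      rw [linearIndependent_option]
      constructor
      · have : LinearIndependent K (fun i => (b i : L)) :=
          b.linearIndependent.map' (im e).subtype (Submodule.ker_subtype _)
        exact this
      · intro h
        apply hcon
        have hle : Submodule.span K (Set.range (v0 ∘ (some : _ → Option _))) ≤ im e := by
          rw [Submodule.span_le]
          rintro _ ⟨i, rfl⟩
          exact (b i).2
        exact hle h
    obtain ⟨t, ht, hli2⟩ := linInd_perturb v0 w0 hli
    have hin : ∀ o, v0 o + t • w0 o ∈ im (e + t • u) := by
      intro o
      cases o with
      | none =>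
        refine ⟨t⁻¹ • z, Submodule.smul_mem _ _ hz, ?_⟩
        simp [v0, w0, hez, smul_smul, ht]
      | some i =>
        refine ⟨w i, hw i, ?_⟩
        simp [v0, w0, hwb]
    have h3 : LinearIndependent K (fun o => (⟨v0 o + t • w0 o, hin o⟩ : im (e + t • u))) := by
      apply LinearIndependent.of_comp (im (e + t • u)).subtype
      exact hli2
    have h4 := h3.fintype_card_le_finrank
    have h5 := hmax (e + t • u) (add_mem he (Submodule.smul_mem _ _ hu))
    simp at h4
    omega
  -- e in the image of (ad e)^2 on g (-1)
  obtain ⟨v, hv, hev⟩ : ∃ v ∈ g (-1), ⁅e, ⁅e, v⁆⁆ = - e := by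
    by_contra hcon
    push Not at hcon
    let W : Submodule K L := (g (-1)).map (ad K L e * ad K L e)
    have hWle : W ≤ g (-(-1)) := by
      rintro _ ⟨u, hu, rfl⟩
      have := lie_mem _ _ _ _ he (lie_mem _ _ _ _ he hu)
      simpa using this
    have heW : e ∉ W := by
      rintro ⟨u, hu, h⟩
      refine hcon (-u) (neg_mem hu) ?_
      have h' : ⁅e, ⁅e, u⁆⁆ = e := h
      rw [lie_neg, lie_neg, h']
    obtain ⟨u, hu, h1, h2⟩ := sep (-1) W e hWle (by simpa using he) heW
    have h3 : ⁅e, ⁅e, u⁆⁆ = 0 := by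
      apply nd 1 _ (by simpa using lie_mem _ _ _ _ he (lie_mem _ _ _ _ he hu))
      intro w hw
      have h4 : κ u ⁅e, ⁅e, w⁆⁆ = 0 := h1 _ ⟨w, hw, rfl⟩
      rw [κinv', κinv', h4]; simp
    apply h2
    rw [κsymm, κdef]
    apply trace_zero_aux (ad K L e) (ad K L u) (ad K L ⁅e, u⁆) _ _ (nilp e he)
    · exact adl e u
    · have : ad K L ⁅e, ⁅e, u⁆⁆ = 0 := by rw [h3, map_zero]
      rw [← adl] at this
      exact sub_eq_zero.1 this
  set y := ⁅e, v⁆ with hy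
  have hyg : y ∈ g 0 := by simpa using lie_mem _ _ _ _ he hv
  have hye : ⁅y, e⁆ = e := by rw [← lie_skew, hev, neg_neg]
  have hxe : ⁅x, e⁆ = e := by simpa using (mem_g 1 e).1 he
  -- f
  obtain ⟨w, hw1, hw2⟩ : ∃ w ∈ g 1, w ∉ im e :=
    SetLike.exists_of_lt (lt_of_le_of_ne (im_le e he) honto)
  obtain ⟨f, hf, hf1, hf2⟩ := sep (-1) (im e) w (by simpa using im_le e he) (by simpa using hw1) hw2
  have hef : ⁅e, f⁆ = 0 := by
    apply nd 0 _ (by simpa using lie_mem _ _ _ _ he hf)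
    intro z hz
    have h4 : κ f ⁅e, z⁆ = 0 := hf1 _ ⟨z, by simpa using hz, rfl⟩
    rw [κinv', h4, neg_zero]
  have hxg : x ∈ g 0 := by rw [mem_g]; simp
  have hzf : ⁅x - y, f⁆ = 0 := by
    have hzg : x - y ∈ g 0 := sub_mem hxg hyg
    apply nd (-1) _ (by simpa using lie_mem _ _ _ _ hzg hf)
    intro u hu
    rw [κinv', ← lie_skew, map_neg, neg_neg]
    apply hf1
    apply slice _ hzg _ _ (by simpa using hu)
    rw [← lie_skew, sub_lie, hxe, hye]; simp
  have hyf : ⁅y, f⁆ = - f := by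
    have h := (mem_g _ _).1 hf
    rw [sub_lie, sub_eq_zero] at hzf
    rw [← hzf, h]; simp
  have : f = 0 := by
    apply raise_aux (ad K L e) (ad K L v) (ad K L y) _ _ (nilp e he) f hef hyf
    · exact adl e v
    · rw [adl, hye]
  apply hf2
  rw [this]; simp

end LieCore2

end FileP1b

section FileP2a
section LieCount
open Module LieAlgebra LieModule LieAlgebra.IsKilling

theorem cartan_ineq {K L : Type*} [Field K] [CharZero K] [LieRing L] [LieAlgebra K L]
    [FiniteDimensional K L] [LieAlgebra.IsKilling K L] (H : LieSubalgebra K L)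
    [H.IsCartanSubalgebra] [IsTriangularizable K H L] (x : H) :
    {α : H.root | (α : Weight K H L) x = 1}.ncard ≤
      {α : H.root | (α : Weight K H L) x = 0}.ncard + finrank K H := by
  classical
  set g : K → Submodule K L := fun c => (ad K L (x : L)).eigenspace c with hg
  have root_le : ∀ χ : H → K, (rootSpace H χ).toSubmodule ≤ g (χ x) := by
    intro χ u hu
    have := lie_eq_smul_of_mem_rootSpace hu x
    rw [hg, Module.End.mem_eigenspace_iff]
    exact this
  have htop : ⨆ χ : Weight K H L, (rootSpace H χ).toSubmodule = ⊤ := by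
    have := iSup_genWeightSpace_eq_top' K H L
    have h2 := congrArg LieSubmodule.toSubmodule this
    rwa [LieSubmodule.iSup_toSubmodule, LieSubmodule.top_toSubmodule] at h2
  have hx : ⨆ c : K, g c = ⊤ := by
    rw [eq_top_iff, ← htop]
    exact iSup_le fun χ => (root_le χ).trans (le_iSup g _)
  have hcore := lie_core (x : L) hx
  have hex : ∀ α : H.root, ∃ e : L, e ∈ rootSpace H (α : Weight K H L) ∧ e ≠ 0 := by
    intro α
    exact (α : Weight K H L).exists_ne_zero
  choose e he he0 using hex
  have hli : LinearIndependent K e := by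
    have h1 := iSupIndep_genWeightSpace' K H L
    rw [← LieSubmodule.iSupIndep_toSubmodule] at h1
    have h2 : iSupIndep (fun α : H.root => (rootSpace H (α : Weight K H L)).toSubmodule) :=
      h1.comp (f := fun α : H.root => (α : Weight K H L)) Subtype.val_injective
    exact h2.linearIndependent _ he he0
  -- lower bound
  have hlow : {α : H.root | (α : Weight K H L) x = 1}.ncard ≤ finrank K (g 1) := by
    let e1 : {α : H.root | (α : Weight K H L) x = 1} → g 1 := fun α => ⟨e α, by
      have := root_le _ (he α)
      rwa [show (α.1 : Weight K H L) x = 1 from α.2] at this⟩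
    have h1 : LinearIndependent K e1 := by
      apply LinearIndependent.of_comp (g 1).subtype
      exact hli.comp _ Subtype.val_injective
    have := h1.fintype_card_le_finrank
    rwa [← Nat.card_eq_fintype_card] at this
  have hup : finrank K (g 0) ≤ {α : H.root | (α : Weight K H L) x = 0}.ncard + finrank K H := by
    let A : Submodule K L := H.toSubmodule ⊔
      Submodule.span K (Set.range fun α : {α : H.root | (α : Weight K H L) x = 0} => e α)
    let G : Submodule K L := ⨆ c : {c : K // c ≠ 0}, g c
    have hAG : A ⊔ G = ⊤ := by
      rw [eq_top_iff, ← htop]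
      apply iSup_le
      intro χ
      by_cases hχx : χ x = 0
      · apply le_sup_of_le_left
        by_cases hχ : χ.IsZero
        · apply le_sup_of_le_left
          have : (χ : H → K) = 0 := hχ
          rw [this, rootSpace_zero_eq]
          exact le_rfl
        · apply le_sup_of_le_right
          have hmem : χ ∈ H.root := by simpa [LieSubalgebra.root] using hχ
          intro u hu
          have h1 := finrank_rootSpace_eq_one χ hχ
          obtain ⟨c, hc⟩ := exists_smul_eq_of_finrank_eq_one h1
            (x := (⟨e ⟨χ, hmem⟩, he ⟨χ, hmem⟩⟩ : rootSpace H χ))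
            (by intro h; exact he0 ⟨χ, hmem⟩ (congrArg Subtype.val h)) ⟨u, hu⟩
          have hc' : c • e ⟨χ, hmem⟩ = u := congrArg Subtype.val hc
          rw [← hc']
          exact Submodule.smul_mem _ _ (Submodule.subset_span ⟨⟨⟨χ, hmem⟩, hχx⟩, rfl⟩)
      · apply le_sup_of_le_right
        exact (root_le χ).trans (le_iSup (fun c : {c : K // c ≠ 0} => g c) ⟨_, hχx⟩)
    have hdis : Disjoint (g 0) G := by
      have := (Module.End.eigenspaces_iSupIndep (ad K L (x : L))) 0
      refine this.mono_right ?_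
      apply iSup_le
      rintro ⟨c, hc⟩
      exact le_iSup₂_of_le c hc le_rfl
    have hA0 : A ≤ g 0 := by
      apply sup_le
      · intro u hu
        have h2 : u ∈ rootSpace H (0 : H → K) := by rw [rootSpace_zero_eq]; exact hu
        exact root_le 0 h2
      · rw [Submodule.span_le]
        rintro _ ⟨α, rfl⟩
        have := root_le _ (he α)
        rwa [show (α.1 : Weight K H L) x = 0 from α.2] at this
    have hgA : g 0 ≤ A := by
      have h1 : g 0 = A ⊔ G ⊓ g 0 := by
        rw [← sup_inf_assoc_of_le G hA0, hAG, top_inf_eq]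
      rw [h1, inf_comm, hdis.eq_bot, sup_bot_eq]
    calc finrank K (g 0) ≤ finrank K A := Submodule.finrank_mono hgA
      _ ≤ finrank K H.toSubmodule + finrank K (Submodule.span K (Set.range fun α : {α : H.root | (α : Weight K H L) x = 0} => e α)) :=
        Submodule.finrank_add_le_finrank_add_finrank _ _
      _ ≤ finrank K H + {α : H.root | (α : Weight K H L) x = 0}.ncard := by
        gcongr
        · exact le_rfl
        · have := finrank_range_le_card (R := K) (fun α : {α : H.root | (α : Weight K H L) x = 0} => e α)
          rw [← Nat.card_eq_fintype_card] at this
          exact this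
      _ = _ := add_comm _ _
  exact hlow.trans (hcore.trans hup)

theorem rp_ineq {ι K M N : Type*} [Finite ι] [Field K] [CharZero K] [IsAlgClosed K]
    [AddCommGroup M] [Module K M] [AddCommGroup N] [Module K N]
    (P : RootPairing ι K M N) [P.IsReduced] [P.IsCrystallographic] [P.IsIrreducible]
    [P.IsRootSystem] (φ : Module.Dual K M) :
    {i | φ (P.root i) = 1}.ncard ≤ {i | φ (P.root i) = 0}.ncard + finrank K M := by
  classical
  have := Fintype.ofFinite ι
  obtain ⟨b⟩ := P.nonempty_base
  let H := RootPairing.GeckConstruction.cartanSubalgebra' b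
  let Q := RootPairing.GeckConstruction.equivRootSystem b
  let w : M ≃ₗ[K] Dual K H := Q.weightEquiv
  let x : H := (Module.evalEquiv K H).symm (φ ∘ₗ w.symm.toLinearMap)
  have hx : ∀ ψ : Dual K H, ψ x = φ (w.symm ψ) := by
    intro ψ
    have := LinearMap.congr_fun ((Module.evalEquiv K H).apply_symm_apply (φ ∘ₗ w.symm.toLinearMap)) ψ
    exact this
  have hroot : ∀ i, w (P.root i) = (Q.indexEquiv i).1.toLinear := by
    intro i
    exact RootPairing.Hom.root_weightMap_apply _ _ i Q.toHom
  have hval : ∀ i, (Q.indexEquiv i).1 x = φ (P.root i) := by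
    intro i
    have := hx (Q.indexEquiv i).1.toLinear
    rw [← hroot, LinearEquiv.symm_apply_apply, hroot] at this
    exact this
  have hc : ∀ c, {i | φ (P.root i) = c}.ncard =
      {α : H.root | α.1 x = c}.ncard := by
    intro c
    apply Set.ncard_congr (fun i _ => Q.indexEquiv i)
    · intro i hi; exact (hval i).trans hi
    · intro i j _ _ h; exact Q.indexEquiv.injective h
    · intro α hα
      refine ⟨Q.indexEquiv.symm α, ?_, by simp⟩
      have := hval (Q.indexEquiv.symm α)
      rw [Equiv.apply_symm_apply] at this
      exact this.symm.trans hα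
  rw [hc, hc]
  have hfin : finrank K M = finrank K H := by
    rw [w.finrank_eq, Subspace.dual_finrank_eq]
  rw [hfin]
  exact cartan_ineq H x

end LieCount

end FileP2a

section FileR0
open Module Submodule

section RSdefs
variable {E : Type*} [AddCommGroup E] [Module ℝ E]

/-- finite reduced crystallographic root system in a space with positive definite form -/
structure RS (B : E →ₗ[ℝ] E →ₗ[ℝ] ℝ) (Φ : Finset E) : Prop where
  symm : ∀ x y, B x y = B y x
  pos : ∀ x, x ≠ 0 → 0 < B x x
  zero : (0 : E) ∉ Φ
  refl : ∀ α ∈ Φ, ∀ β ∈ Φ, β - (2 * B α β / B α α) • α ∈ Φ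
  int : ∀ α ∈ Φ, ∀ β ∈ Φ, ∃ z : ℤ, 2 * B α β / B α α = z
  red : ∀ α ∈ Φ, ∀ c : ℝ, c • α ∈ Φ → c = 1 ∨ c = -1

/-- irreducibility -/
def Irr (B : E →ₗ[ℝ] E →ₗ[ℝ] ℝ) (Φ : Finset E) : Prop :=
  ∀ X ⊆ Φ, X.Nonempty → (∀ α ∈ X, ∀ β ∈ Φ, B α β ≠ 0 → β ∈ X) → X = Φ

variable {B : E →ₗ[ℝ] E →ₗ[ℝ] ℝ} {Φ : Finset E}

lemma RS.ne_zero (h : RS B Φ) {α : E} (ha : α ∈ Φ) : α ≠ 0 := by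
  rintro rfl; exact h.zero ha

lemma RS.pos' (h : RS B Φ) {α : E} (ha : α ∈ Φ) : 0 < B α α := h.pos _ (h.ne_zero ha)

lemma RS.neg_mem (h : RS B Φ) {α : E} (ha : α ∈ Φ) : -α ∈ Φ := by
  have := h.refl α ha α ha
  have hp := h.pos' ha
  rw [mul_div_assoc, div_self hp.ne'] at this
  convert this using 1
  module

lemma exists_coords (Φ : Finset E) : ∃ (n : ℕ) (v : Fin n → E) (c : E → Fin n → ℝ),
    n = finrank ℝ (span ℝ (Φ : Set E)) ∧ (∀ j, v j ∈ Φ) ∧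
    (∀ α ∈ Φ, α = ∑ j, c α j • v j) ∧ (∀ j, c (v j) = Pi.single j 1) := by
  obtain ⟨b, hb, hs, hl⟩ := exists_linearIndependent ℝ (Φ : Set E)
  have hfin : b.Finite := Φ.finite_toSet.subset hb
  have := hfin.fintype
  let e := Fintype.equivFin b
  let v : Fin (Fintype.card b) → E := fun j => (e.symm j : E)
  have hv : LinearIndependent ℝ v := hl.comp _ e.symm.injective
  have hr : Set.range v = b := by
    ext x; constructor
    · rintro ⟨j, rfl⟩; exact (e.symm j).2
    · intro hx; exact ⟨e ⟨x, hx⟩, by simp [v]⟩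
  have hex : ∀ α : E, ∃ c : Fin (Fintype.card b) → ℝ, α ∈ Φ → α = ∑ j, c j • v j := by
    intro α
    by_cases ha : α ∈ Φ
    · have : α ∈ span ℝ (Set.range v) := by
        rw [hr, hs]; exact subset_span ha
      obtain ⟨c, hc⟩ := (mem_span_range_iff_exists_fun ℝ).1 this
      exact ⟨c, fun _ => hc.symm⟩
    · exact ⟨0, fun h => (ha h).elim⟩
  choose c hc using hex
  have hvm : ∀ j, v j ∈ Φ := fun j => hb (e.symm j).2
  refine ⟨_, v, c, ?_, hvm, fun α ha => hc α ha, ?_⟩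
  · have h0 := finrank_span_eq_card hv
    rw [hr, hs, Fintype.card_fin] at h0
    exact h0.symm
  · intro j
    have h1 := hc (v j) (hvm j)
    have h2 : ∑ i, (Pi.single j 1 : Fin (Fintype.card b) → ℝ) i • v i = v j := by
      simp [Pi.single_apply]
    have h3 := Fintype.linearIndependent_iff.1 hv (c (v j) - Pi.single j 1) (by
      simp only [Pi.sub_apply, sub_smul, Finset.sum_sub_distrib, h2, ← h1, sub_self])
    funext i
    have := h3 i
    simpa [sub_eq_zero] using this

end RSdefs

end FileR0

section FileP2b
open Module Submodule

section ConstIneq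
variable {E : Type*} [AddCommGroup E] [Module ℝ E]
variable {B : E →ₗ[ℝ] E →ₗ[ℝ] ℝ} {Φ : Finset E}

/-- complex extension of a real vector of coefficients to a functional -/
def cfun {n : ℕ} (t : Fin n → ℝ) : Dual ℂ (Fin n → ℂ) :=
  ∑ j, (t j : ℂ) • LinearMap.proj j

lemma cfun_apply {n : ℕ} (t : Fin n → ℝ) (v : Fin n → ℂ) :
    cfun t v = ∑ j, (t j : ℂ) * v j := by
  simp [cfun, LinearMap.sum_apply]

theorem const_ineq (h : RS B Φ) (hirr : Irr B Φ) (hne : Φ.Nonempty) (l : E →ₗ[ℝ] ℝ)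
    (c : ℝ) (hc : c ≠ 0) :
    (Φ.filter (fun α => l α = c)).card ≤ (Φ.filter (fun α => l α = 0)).card +
      finrank ℝ (span ℝ (Φ : Set E)) := by
  obtain ⟨n, v, co, hn, hvm, hco, hcov⟩ := exists_coords Φ
  have hf : ∀ (f : E →ₗ[ℝ] ℝ) (α : E), α ∈ Φ →
      cfun (fun j => f (v j)) (fun j => ((co α j : ℝ) : ℂ)) = (f α : ℂ) := by
    intro f α ha
    rw [cfun_apply]
    conv_rhs => rw [hco α ha]
    simp [mul_comm]
  have hcoinj : ∀ α ∈ Φ, ∀ β ∈ Φ, co α = co β → α = β := by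
    intro α ha β hb hab
    rw [hco α ha, hco β hb, hab]
  let root : Φ ↪ (Fin n → ℂ) := ⟨fun α j => ((co α.1 j : ℝ) : ℂ), by
    intro α β hab
    apply Subtype.ext
    apply hcoinj _ α.2 _ β.2
    funext j
    have hj : ((co α.1 j : ℝ) : ℂ) = ((co β.1 j : ℝ) : ℂ) := congrFun hab j
    exact_mod_cast hj⟩
  let cor : E → (E →ₗ[ℝ] ℝ) := fun α => (2 / B α α) • B α
  have hcor : ∀ α β, cor α β = 2 * B α β / B α α := by
    intro α β; simp [cor]; ring
  let C : Φ → Dual ℂ (Fin n → ℂ) := fun α => cfun (fun j => cor α.1 (v j))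
  have hC : ∀ α β : Φ, C α (root β) = ((2 * B α.1 β.1 / B α.1 α.1 : ℝ) : ℂ) := by
    intro α β
    rw [← hcor]
    exact hf (cor α.1) β.1 β.2
  have h2 : ∀ α ∈ Φ, 2 * B α α / B α α = 2 := by
    intro α ha
    rw [mul_div_assoc, div_self (h.pos' ha).ne', mul_one]
  have hCinj : Function.Injective C := by
    intro α β hab
    have e1 : ∀ γ : Φ, 2 * B α.1 γ.1 / B α.1 α.1 = 2 * B β.1 γ.1 / B β.1 β.1 := by
      intro γ
      have := hC α γ
      rw [hab, hC β γ] at this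
      exact_mod_cast this.symm
    have pa := h.pos' α.2
    have pb := h.pos' β.2
    have ea := e1 α
    have eb := e1 β
    rw [h2 _ α.2] at ea
    rw [h2 _ β.2] at eb
    have sy := h.symm β.1 α.1
    have k1 : B β.1 α.1 = B β.1 β.1 := by field_simp at ea; linarith
    have k2 : B α.1 β.1 = B α.1 α.1 := by field_simp at eb; linarith
    by_contra hne'
    have : α.1 - β.1 ≠ 0 := fun hh => hne' (Subtype.ext (sub_eq_zero.1 hh))
    have := h.pos _ this
    simp only [map_sub, LinearMap.sub_apply] at this
    linarith
  have hspan : span ℂ (Set.range root) = ⊤ := by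
    rw [eq_top_iff]
    intro x _
    have : x = ∑ j, x j • root ⟨v j, hvm j⟩ := by
      funext i
      have : ∀ j, root ⟨v j, hvm j⟩ i = if i = j then 1 else 0 := by
        intro j
        change ((co (v j) i : ℝ) : ℂ) = _
        rw [hcov]
        by_cases hij : i = j
        · subst hij; simp
        · simp [hij]
      simp [Finset.sum_apply, this]
    rw [this]
    exact sum_mem fun j _ => smul_mem _ _ (subset_span ⟨_, rfl⟩)
  let p : (Fin n → ℂ) →ₗ[ℂ] Dual ℂ (Fin n → ℂ) →ₗ[ℂ] ℂ := Dual.eval ℂ (Fin n → ℂ)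
  have hp : ∀ i, p (root i) ((⟨C, hCinj⟩ : Φ ↪ _) i) = 2 := by
    intro i
    change C i (root i) = 2
    rw [hC, h2 _ i.2]; norm_num
  have hrefl : ∀ α β : Φ, root β - C α (root β) • root α =
      root ⟨_, h.refl α α.2 β β.2⟩ := by
    intro α β
    have hli : co (β.1 - (2 * B α.1 β.1 / B α.1 α.1) • α.1) =
        co β.1 - (2 * B α.1 β.1 / B α.1 α.1) • co α.1 := by
      -- coordinates linear: use functional evaluation
      have hlinv : LinearIndependent ℝ v := by
        rw [linearIndependent_iff_card_eq_finrank_span, Fintype.card_fin]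
        refine hn.trans ?_
        rw [Set.finrank]
        apply congrArg (fun S : Submodule ℝ E => finrank ℝ S)
        apply le_antisymm
        · apply span_le.2
          intro x hx
          rw [hco x hx]
          exact sum_mem fun j _ => smul_mem _ _ (subset_span ⟨_, rfl⟩)
        · apply span_mono
          rintro _ ⟨j, rfl⟩; exact hvm j
      have h3 := Fintype.linearIndependent_iff.1 hlinv
        (co (β.1 - (2 * B α.1 β.1 / B α.1 α.1) • α.1) -
        (co β.1 - (2 * B α.1 β.1 / B α.1 α.1) • co α.1)) (by
          simp only [Pi.sub_apply, Pi.smul_apply, sub_smul, Finset.sum_sub_distrib, smul_eq_mul,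
            mul_smul, ← Finset.smul_sum, ← hco _ (h.refl α α.2 β β.2), ← hco _ α.2, ← hco _ β.2,
            sub_self])
      funext j
      have := h3 j
      simp only [Pi.sub_apply] at this ⊢
      linarith
    funext j
    rw [hC]
    change ((co β.1 j : ℝ) : ℂ) - _ * ((co α.1 j : ℝ) : ℂ) =
      ((co (β.1 - (2 * B α.1 β.1 / B α.1 α.1) • α.1) j : ℝ) : ℂ)
    rw [hli]
    simp
  have hs : ∀ i, Set.MapsTo (Module.preReflection (root i) (p.flip ((⟨C, hCinj⟩ : Φ ↪ _) i)))
      (Set.range root) (Set.range root) := by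
    rintro i _ ⟨j, rfl⟩
    exact ⟨_, (hrefl i j).symm⟩
  let P := RootPairing.mk'' p root ⟨C, hCinj⟩ hp hs hspan
  have hintg : ∀ i j, ∃ z : ℤ, (z : ℂ) = p (root i) ((⟨C, hCinj⟩ : Φ ↪ _) j) := by
    intro i j
    obtain ⟨z, hz⟩ := h.int j j.2 i i.2
    refine ⟨z, ?_⟩
    change _ = C j (root i)
    rw [hC, hz]; simp
  have i1 : P.IsRootSystem := RootPairing.isRootSystem_mk'' hintg
  have i2 : P.IsCrystallographic := ⟨hintg⟩
  have hroot0 : ∀ i : Φ, root i ≠ 0 := by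
    intro i h0
    have := hp i
    rw [h0] at this
    simp at this
  have i3 : P.IsReduced := by
    constructor
    intro i j hij
    change ¬ LinearIndependent ℂ ![root i, root j] at hij
    change root i = root j ∨ root i = - root j
    have hj0 := hroot0 j
    rw [LinearIndependent.pair_symm_iff, LinearIndependent.pair_iff' hj0] at hij
    push Not at hij
    obtain ⟨a, ha⟩ := hij
    obtain ⟨t, ht⟩ : ∃ t, root j t ≠ 0 := by
      by_contra hcon
      push Not at hcon
      exact hj0 (funext hcon)
    have hct : (co j.1 t : ℝ) ≠ 0 := by
      intro h0; apply ht; change ((co j.1 t : ℝ) : ℂ) = 0; rw [h0]; simp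
    have har : a = ((co i.1 t / co j.1 t : ℝ) : ℂ) := by
      have h1 := congrFun ha t
      change a * ((co j.1 t : ℝ) : ℂ) = ((co i.1 t : ℝ) : ℂ) at h1
      push_cast
      rw [eq_div_iff (by exact_mod_cast hct), h1]
    set r := co i.1 t / co j.1 t with hr
    have hco' : co i.1 = r • co j.1 := by
      funext s
      have h1 := congrFun ha s
      rw [har] at h1
      change (r : ℂ) * ((co j.1 s : ℝ) : ℂ) = ((co i.1 s : ℝ) : ℂ) at h1
      exact_mod_cast h1.symm
    have hij' : i.1 = r • j.1 := by
      rw [hco _ i.2, hco', ]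
      conv_rhs => rw [hco _ j.2]
      simp [Finset.smul_sum, mul_smul]
    have hm := i.2
    rw [hij'] at hm
    rcases h.red j.1 j.2 r hm with h1 | h1
    · left; rw [← ha, har, h1]; simp
    · right; rw [← ha, har, h1]; simp
  have hn0 : Nonempty (Fin n) := by
    obtain ⟨α, ha⟩ := hne
    by_contra hcon
    rw [not_nonempty_iff] at hcon
    exact hroot0 ⟨α, ha⟩ (Subsingleton.elim _ _)
  have i4 : P.IsIrreducible := by
    apply RootPairing.IsIrreducible.mk'
    intro q hq hqb
    have hq' : ∀ i : Φ, ∀ x ∈ q, x - C i x • root i ∈ q := by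
      intro i x hx
      have := hq i
      rw [Module.End.mem_invtSubmodule] at this
      have := this hx
      rw [mem_comap] at this
      exact this
    have hvan : ∀ i : Φ, root i ∉ q → ∀ x ∈ q, C i x = 0 := by
      intro i hi x hx
      by_contra hne'
      apply hi
      have h1 := q.sub_mem hx (hq' i x hx)
      rw [sub_sub_cancel] at h1
      exact (q.smul_mem_iff hne').1 h1
    let X : Finset E := Φ.filter (fun α => ∃ ha : α ∈ Φ, root ⟨α, ha⟩ ∈ q)
    by_cases hX : X.Nonempty
    · have := hirr X (Finset.filter_subset _ _) hX (by
        intro α ha β hb hab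
        obtain ⟨ha1, _, ha2⟩ := Finset.mem_filter.1 ha
        refine Finset.mem_filter.2 ⟨hb, hb, ?_⟩
        by_contra hbq
        have := hvan ⟨β, hb⟩ hbq _ ha2
        rw [hC] at this
        have h3 : 2 * B β α / B β β = 0 := by exact_mod_cast this
        have := (h.pos' hb).ne'
        rw [h.symm] at hab
        field_simp at h3
        exact hab (by linarith))
      rw [eq_top_iff, ← hspan]
      apply span_le.2
      rintro _ ⟨i, rfl⟩
      have hi : i.1 ∈ X := by rw [this]; exact i.2
      obtain ⟨_, _, h3⟩ := Finset.mem_filter.1 hi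
      exact h3
    · exfalso
      apply hqb
      rw [eq_bot_iff]
      intro x hx
      have hall : ∀ i : Φ, C i x = 0 := by
        intro i
        apply hvan i _ x hx
        intro hi
        exact hX ⟨i.1, Finset.mem_filter.2 ⟨i.2, i.2, hi⟩⟩
      have htop := i1.span_coroot_eq_top
      have hall' : ∀ f ∈ span ℂ (Set.range P.coroot), (f : Dual ℂ (Fin n → ℂ)) x = 0 := by
        intro f hf'
        induction hf' using span_induction with
        | mem f hf' => obtain ⟨i, rfl⟩ := hf'; exact hall i
        | zero => rfl
        | add f g _ _ h1 h2 => simp [h1, h2]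
        | smul a f _ h1 => simp [h1]
      rw [mem_bot]
      funext j
      have : (LinearMap.proj j : Dual ℂ (Fin n → ℂ)) ∈ span ℂ (Set.range P.coroot) := by
        have h5 : span ℂ (Set.range P.coroot) = ⊤ := htop
        rw [h5]; trivial
      exact hall' _ this
  have main := rp_ineq P (cfun (fun j => (c⁻¹ • l) (v j)))
  have hval : ∀ i : Φ, cfun (fun j => (c⁻¹ • l) (v j)) (P.root i) = ((c⁻¹ * l i.1 : ℝ) : ℂ) :=
    fun i => hf (c⁻¹ • l) i.1 i.2
  have cnt : ∀ (r : ℝ) (q : ℂ), (∀ i : Φ, cfun (fun j => (c⁻¹ • l) (v j)) (P.root i) = q ↔ l i.1 = r) →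
      {i | cfun (fun j => (c⁻¹ • l) (v j)) (P.root i) = q}.ncard =
      (Φ.filter (fun α => l α = r)).card := by
    intro r q hrq
    rw [← Set.ncard_coe_finset]
    apply Set.ncard_congr (fun (i : Φ) _ => i.1)
    · intro i hi
      simp only [Finset.coe_filter, Set.mem_ofPred_eq]
      exact ⟨i.2, (hrq i).1 hi⟩
    · intro i j _ _ hij; exact Subtype.ext hij
    · intro α hα
      simp only [Finset.coe_filter, Set.mem_ofPred_eq] at hα
      exact ⟨⟨α, hα.1⟩, (hrq _).2 hα.2, rfl⟩
  rw [cnt c 1, cnt 0 0] at main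
  · rw [← hn]
    simpa using main
  · intro i
    rw [hval]
    simp [hc]
  · intro i
    rw [hval]
    norm_cast
    rw [inv_mul_eq_one₀ hc, eq_comm]

end ConstIneq

end FileP2b

section FileP3a
open Module Submodule

section Basics
variable {E : Type*} [AddCommGroup E] [Module ℝ E]

/-- admissible parameters -/
structure KP (B : E →ₗ[ℝ] E →ₗ[ℝ] ℝ) (Φ : Finset E) (κ : E → ℝ) : Prop where
  inv : ∀ α ∈ Φ, ∀ β ∈ Φ, κ (β - (2 * B α β / B α α) • α) = κ β
  nz : ∀ α ∈ Φ, κ α ≠ 0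
  ind : ∀ α ∈ Φ, ∀ β ∈ Φ, B α α ≠ B β β → ∀ m j : ℤ, m * κ α + j * κ β = 0 → m = 0 ∧ j = 0

/-- the key inequality -/
def KI (Φ : Finset E) (κ : E → ℝ) (l : E →ₗ[ℝ] ℝ) : Prop :=
  (Φ.filter (fun α => l α = κ α)).card ≤ (Φ.filter (fun α => l α = 0)).card +
      finrank ℝ (span ℝ (Φ : Set E))

variable {B : E →ₗ[ℝ] E →ₗ[ℝ] ℝ} {Φ : Finset E} {κ : E → ℝ}

lemma RS.norm_refl (h : RS B Φ) {α : E} (ha : α ∈ Φ) (β : E) :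
    B (β - (2 * B α β / B α α) • α) (β - (2 * B α β / B α α) • α) = B β β := by
  have := (h.pos' ha).ne'
  have hs := h.symm β α
  simp only [map_sub, LinearMap.sub_apply, map_smul, LinearMap.smul_apply, smul_eq_mul, hs]
  field_simp
  ring

lemma RS.refl_left (h : RS B Φ) {α : E} (ha : α ∈ Φ) (β : E) :
    B α (β - (2 * B α β / B α α) • α) = - B α β := by
  have := (h.pos' ha).ne'
  simp only [map_sub, map_smul, smul_eq_mul]
  field_simp
  ring

lemma RS.cs (h : RS B Φ) (x y : E) : B x y ^ 2 ≤ B x x * B y y := by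
  by_cases hx : x = 0
  · subst hx; simp
  have hp := h.pos x hx
  have h0 : 0 ≤ B (y - (B x y / B x x) • x) (y - (B x y / B x x) • x) := by
    by_cases hz : y - (B x y / B x x) • x = 0
    · rw [hz]; simp
    · exact (h.pos _ hz).le
  simp only [map_sub, LinearMap.sub_apply, map_smul, LinearMap.smul_apply, smul_eq_mul,
    h.symm y x] at h0
  field_simp at h0
  nlinarith

lemma RS.cs_lt (h : RS B Φ) {α β : E} (ha : α ∈ Φ) (hb : β ∈ Φ) (h1 : β ≠ α) (h2 : β ≠ -α) :
    B α β ^ 2 < B α α * B β β := by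
  have hp := h.pos' ha
  have h0 : 0 < B (β - (B α β / B α α) • α) (β - (B α β / B α α) • α) := by
    apply h.pos
    intro hz
    have hz' : β = (B α β / B α α) • α := sub_eq_zero.1 hz
    have hb' := hb
    rw [hz'] at hb'
    rcases h.red α ha _ hb' with h3 | h3
    · rw [h3] at hz'; exact h1 (by simpa using hz')
    · rw [h3] at hz'; exact h2 (by simpa using hz')
  simp only [map_sub, LinearMap.sub_apply, map_smul, LinearMap.smul_apply, smul_eq_mul,
    h.symm β α] at h0
  field_simp at h0
  nlinarith

lemma KP.mono {Ψ : Finset E} (k : KP B Φ κ) (hs : Ψ ⊆ Φ) : KP B Ψ κ :=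
  ⟨fun α ha β hb => k.inv α (hs ha) β (hs hb), fun α ha => k.nz α (hs ha),
   fun α ha β hb => k.ind α (hs ha) β (hs hb)⟩

lemma span_orth_disjoint (h : RS B Φ) {X Y : Finset E}
    (hXY : ∀ x ∈ X, ∀ y ∈ Y, B x y = 0) :
    span ℝ (X : Set E) ⊓ span ℝ (Y : Set E) = ⊥ := by
  rw [eq_bot_iff]
  rintro z ⟨hz1, hz2⟩
  have h1 : ∀ y ∈ Y, B z y = 0 := by
    intro y hy
    have : span ℝ (X : Set E) ≤ LinearMap.ker (B.flip y) := by
      apply span_le.2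
      intro x hx
      exact hXY x hx y hy
    exact this hz1
  have h2 : span ℝ (Y : Set E) ≤ LinearMap.ker (B z) := by
    apply span_le.2
    intro y hy
    exact h1 y hy
  have h3 : B z z = 0 := h2 hz2
  by_contra hne
  have := h.pos z hne
  linarith

lemma KI_split (h : RS B Φ) {X : Finset E} (hX : X ⊆ Φ)
    (hcl : ∀ α ∈ X, ∀ β ∈ Φ, B α β ≠ 0 → β ∈ X) (l : E →ₗ[ℝ] ℝ)
    (h1 : KI X κ l) (h2 : KI (Φ \ X) κ l) : KI Φ κ l := by
  unfold KI at *
  have hd : Disjoint X (Φ \ X) := Finset.disjoint_sdiff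
  have hu : Φ = X ∪ (Φ \ X) := (Finset.union_sdiff_of_subset hX).symm
  have hc : ∀ p : E → Prop, (Φ.filter p).card = (X.filter p).card + ((Φ \ X).filter p).card := by
    intro p
    conv_lhs => rw [hu, Finset.filter_union]
    exact Finset.card_union_of_disjoint (Finset.disjoint_filter_filter hd)
  have hsp : finrank ℝ (span ℝ (Φ : Set E)) = finrank ℝ (span ℝ (X : Set E)) +
      finrank ℝ (span ℝ ((Φ \ X : Finset E) : Set E)) := by
    have h3 := Submodule.finrank_sup_add_finrank_inf_eq (span ℝ (X : Set E))
      (span ℝ ((Φ \ X : Finset E) : Set E))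
    rw [span_orth_disjoint h (X := X) (Y := Φ \ X), finrank_bot, add_zero, ← span_union] at h3
    · rw [← h3, ← Finset.coe_union, ← hu]
    · intro x hx y hy
      by_contra hne
      exact (Finset.mem_sdiff.1 hy).2 (hcl x hx y (Finset.mem_sdiff.1 hy).1 hne)
  rw [hc, hc, hsp]
  omega

lemma RS.sub_left (h : RS B Φ) {X : Finset E} (hX : X ⊆ Φ)
    (hcl : ∀ α ∈ X, ∀ β ∈ Φ, B α β ≠ 0 → β ∈ X) : RS B X := by
  refine ⟨h.symm, h.pos, fun h0 => h.zero (hX h0), ?_,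
    fun α ha β hb => h.int α (hX ha) β (hX hb), fun α ha c hc => h.red α (hX ha) c (hX hc)⟩
  intro α ha β hb
  by_cases h0 : B α β = 0
  · rw [h0]; simpa using hb
  · apply hcl α ha _ (h.refl α (hX ha) β (hX hb))
    rw [h.refl_left (hX ha)]
    simpa using h0

lemma RS.sub_right (h : RS B Φ) {X : Finset E}
    (hcl : ∀ α ∈ X, ∀ β ∈ Φ, B α β ≠ 0 → β ∈ X) : RS B (Φ \ X) := by
  have hX : Φ \ X ⊆ Φ := Finset.sdiff_subset
  refine ⟨h.symm, h.pos, fun h0 => h.zero (hX h0), ?_,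
    fun α ha β hb => h.int α (hX ha) β (hX hb), fun α ha c hc => h.red α (hX ha) c (hX hc)⟩
  intro α ha β hb
  by_cases h0 : B α β = 0
  · rw [h0]; simpa using hb
  · refine Finset.mem_sdiff.2 ⟨h.refl α (hX ha) β (hX hb), fun hm => ?_⟩
    apply (Finset.mem_sdiff.1 ha).2
    apply hcl _ hm α (hX ha)
    rw [h.symm, h.refl_left (hX ha)]
    simpa using h0

/-- reduction to the irreducible case -/
theorem KI_of_irr
    (hI : ∀ Ψ : Finset E, RS B Ψ → Irr B Ψ → Ψ.Nonempty → KP B Ψ κ → ∀ l : E →ₗ[ℝ] ℝ, KI Ψ κ l)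
    (h : RS B Φ) (k : KP B Φ κ) (l : E →ₗ[ℝ] ℝ) : KI Φ κ l := by
  induction hn : Φ.card using Nat.strong_induction_on generalizing Φ with
  | _ n ih =>
  by_cases hne : Φ.Nonempty
  swap
  · rw [Finset.not_nonempty_iff_eq_empty] at hne
    subst hne
    simp [KI]
  by_cases hirr : Irr B Φ
  · exact hI Φ h hirr hne k l
  · unfold Irr at hirr
    push Not at hirr
    obtain ⟨X, hX, hXn, hcl, hXne⟩ := hirr
    have hlt : X.card < n := by
      rw [← hn]
      exact Finset.card_lt_card (Finset.ssubset_iff_subset_ne.2 ⟨hX, hXne⟩)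
    have hXp : 0 < X.card := hXn.card_pos
    have hsd : (Φ \ X).card < n := by
      rw [Finset.card_sdiff_of_subset hX, hn]; omega
    exact KI_split h hX hcl l (ih _ hlt (h.sub_left hX hcl) (k.mono hX) rfl)
      (ih _ hsd (h.sub_right hcl) (k.mono Finset.sdiff_subset) rfl)

/-- conjugation lemma -/
lemma conj_lemma (h : RS B Φ) (hirr : Irr B Φ) (p : E → Prop)
    (hp : ∀ α ∈ Φ, ∀ β ∈ Φ, p β → p (β - (2 * B α β / B α α) • α))
    {α β : E} (ha : α ∈ Φ) (hb : β ∈ Φ) (hpa : p α) : ∃ γ ∈ Φ, p γ ∧ B γ β ≠ 0 := by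
  let X := Φ.filter (fun β => ∃ γ ∈ Φ, p γ ∧ B γ β ≠ 0)
  have hX : X = Φ := by
    apply hirr X (Finset.filter_subset _ _)
    · exact ⟨α, Finset.mem_filter.2 ⟨ha, α, ha, hpa, (h.pos' ha).ne'⟩⟩
    · intro δ hd ε he hde
      obtain ⟨hd1, γ, hg, hpg, hgd⟩ := Finset.mem_filter.1 hd
      refine Finset.mem_filter.2 ⟨he, ?_⟩
      by_cases hge : B γ ε = 0
      · refine ⟨_, h.refl δ hd1 γ hg, hp δ hd1 γ hg hpg, ?_⟩
        have := (h.pos' hd1).ne'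
        have hgd' : B δ γ ≠ 0 := by rwa [h.symm]
        simp only [map_sub, LinearMap.sub_apply, map_smul, LinearMap.smul_apply, smul_eq_mul, hge]
        rw [zero_sub]
        apply neg_ne_zero.2
        positivity
      · exact ⟨γ, hg, hpg, hge⟩
  have : β ∈ X := by rw [hX]; exact hb
  exact (Finset.mem_filter.1 this).2

/-- if every root not orthogonal to some element of `F` is in the span of `F`, then every root
is non-orthogonal to some element of `F` -/
lemma span_principle (hirr : Irr B Φ) (hsymm : ∀ x y, B x y = B y x) {F : Finset E}
    (hF : ∃ f ∈ F, f ∈ Φ ∧ B f f ≠ 0)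
    (hs : ∀ β ∈ Φ, (∃ f ∈ F, B f β ≠ 0) → β ∈ span ℝ (F : Set E)) :
    ∀ β ∈ Φ, ∃ f ∈ F, B f β ≠ 0 := by
  let X := Φ.filter (fun β => ∃ f ∈ F, B f β ≠ 0)
  have hX : X = Φ := by
    apply hirr X (Finset.filter_subset _ _)
    · obtain ⟨f, h1, h2, h3⟩ := hF
      exact ⟨f, Finset.mem_filter.2 ⟨h2, f, h1, h3⟩⟩
    · intro δ hd ε he hde
      obtain ⟨hd1, hd2⟩ := Finset.mem_filter.1 hd
      refine Finset.mem_filter.2 ⟨he, ?_⟩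
      by_contra hcon
      push Not at hcon
      have h1 : span ℝ (F : Set E) ≤ LinearMap.ker (B ε) := by
        apply span_le.2
        intro f hf
        change B ε f = 0
        rw [hsymm]; exact hcon f hf
      have h2 : B ε δ = 0 := h1 (hs δ hd1 hd2)
      rw [hsymm] at h2
      exact hde h2
  intro β hb
  have : β ∈ X := by rw [hX]; exact hb
  exact (Finset.mem_filter.1 this).2

lemma KP.neg (h : RS B Φ) (k : KP B Φ κ) {α : E} (ha : α ∈ Φ) : κ (-α) = κ α := by
  have := k.inv α ha α ha
  rw [mul_div_assoc, div_self (h.pos' ha).ne'] at this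
  rw [← this]
  congr 1
  module

/-- integers for a non-orthogonal non-proportional pair -/
lemma RS.ints (h : RS B Φ) {α β : E} (ha : α ∈ Φ) (hb : β ∈ Φ) (h1 : β ≠ α) (h2 : β ≠ -α)
    (h0 : B α β ≠ 0) : ∃ p q : ℤ, 2 * B α β = p * B α α ∧ 2 * B α β = q * B β β ∧
      0 < p * q ∧ p * q < 4 := by
  obtain ⟨p, hp⟩ := h.int α ha β hb
  obtain ⟨q, hq⟩ := h.int β hb α ha
  have pa := h.pos' ha
  have pb := h.pos' hb
  rw [h.symm β α] at hq
  rw [div_eq_iff pa.ne'] at hp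
  rw [div_eq_iff pb.ne'] at hq
  refine ⟨p, q, hp, hq, ?_⟩
  have hlt := h.cs_lt ha hb h1 h2
  have hpp : 0 < B α α * B β β := by positivity
  have e : ((p * q : ℤ) : ℝ) * (B α α * B β β) = 4 * B α β ^ 2 := by
    push_cast
    calc (p * q : ℝ) * (B α α * B β β) = (p * B α α) * (q * B β β) := by ring
      _ = _ := by rw [← hp, ← hq]; ring
  have hsq : 0 < B α β ^ 2 := by positivity
  constructor
  · by_contra hc
    have : ((p * q : ℤ) : ℝ) ≤ 0 := by exact_mod_cast not_lt.1 hc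
    nlinarith
  · by_contra hc
    have : (4 : ℝ) ≤ ((p * q : ℤ) : ℝ) := by exact_mod_cast not_lt.1 hc
    nlinarith

lemma int_prod_cases {p q : ℤ} (h1 : 0 < p * q) (h2 : p * q < 4) :
    (p = 1 ∨ p = -1 ∨ q = 1 ∨ q = -1) ∧ (p = q ∨ p = 2 * q ∨ p = 3 * q ∨ q = 2 * p ∨ q = 3 * p) := by
  have hp : p ≠ 0 := by rintro rfl; simp at h1
  have hq : q ≠ 0 := by rintro rfl; simp at h1
  have a1 : |p| * |q| < 4 := by rw [← abs_mul, abs_of_pos h1]; exact h2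
  have p1 : 1 ≤ |p| := Int.one_le_abs hp
  have q1 : 1 ≤ |q| := Int.one_le_abs hq
  have p2 : |p| < 4 := by nlinarith
  have q2 : |q| < 4 := by nlinarith
  rw [abs_lt] at p2 q2
  obtain ⟨p3, p4⟩ := p2
  obtain ⟨q3, q4⟩ := q2
  interval_cases p <;> interval_cases q <;> simp_all

lemma kappa_same (h : RS B Φ) (k : KP B Φ κ) {α β : E} (ha : α ∈ Φ) (hb : β ∈ Φ)
    (hn : B α α = B β β) (h0 : B α β ≠ 0) : κ α = κ β := by
  by_cases h1 : β = α
  · rw [h1]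
  by_cases h2 : β = -α
  · rw [h2, k.neg h ha]
  obtain ⟨p, q, hp, hq, h3, h4⟩ := h.ints ha hb h1 h2 h0
  have pa := h.pos' ha
  have hpq : p = q := by
    rw [hp, ← hn] at hq
    exact_mod_cast mul_right_cancel₀ pa.ne' hq
  subst hpq
  have hc := (int_prod_cases h3 h4).1
  have e1 : 2 * B α β / B α α = p := by rw [div_eq_iff pa.ne', hp]
  have r1 := k.inv α ha β hb
  have m1 := h.refl α ha β hb
  have r2 := k.inv β hb _ m1
  have pb := h.pos' hb
  have e2 : 2 * B β (β - (2 * B α β / B α α) • α) / B β β = 2 - p * p := by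
    rw [e1]
    simp only [map_sub, map_smul, smul_eq_mul]
    rw [h.symm β α]
    field_simp
    rw [show B α β = p * B β β / 2 by linarith]
    ring
  have hpp : (p : ℝ) = 1 ∨ (p : ℝ) = -1 := by
    rcases hc with h | h | h | h <;> simp [h]
  rw [e2, e1] at r2
  rw [e1] at r1
  rcases hpp with h5 | h5 <;> rw [h5] at r1 r2
  · rw [← r1, ← r2, ← k.neg h ha]
    congr 1; module
  · rw [← r1, ← r2]
    congr 1; module

end Basics

end FileP3a

section FileP3b
open Module Submodule

section Lengths
variable {E : Type*} [AddCommGroup E] [Module ℝ E]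
variable {B : E →ₗ[ℝ] E →ₗ[ℝ] ℝ} {Φ : Finset E} {κ : E → ℝ}

lemma kappa_len (h : RS B Φ) (hirr : Irr B Φ) (k : KP B Φ κ) {α β : E} (ha : α ∈ Φ) (hb : β ∈ Φ)
    (hn : B α α = B β β) : κ α = κ β := by
  obtain ⟨γ, hg, ⟨h1, h2⟩, h3⟩ := conj_lemma h hirr (fun x => B x x = B α α ∧ κ x = κ α) (by
    intro δ hd ε he ⟨h1, h2⟩
    refine ⟨?_, ?_⟩
    · rw [h.norm_refl hd, h1]
    · rw [k.inv δ hd ε he, h2]) ha hb ⟨rfl, rfl⟩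
  rw [← h2]
  exact kappa_same h k hg hb (h1.trans hn) h3

lemma exists_nonorth_len (h : RS B Φ) (hirr : Irr B Φ) {α β : E} (ha : α ∈ Φ) (hb : β ∈ Φ) :
    ∃ γ ∈ Φ, B γ γ = B α α ∧ B γ β ≠ 0 := by
  obtain ⟨γ, hg, h1, h3⟩ := conj_lemma h hirr (fun x => B x x = B α α) (by
    intro δ hd ε he h1
    rw [h.norm_refl hd, h1]) ha hb rfl
  exact ⟨γ, hg, h1, h3⟩

lemma ratio_cases (h : RS B Φ) (hirr : Irr B Φ) {α β : E} (ha : α ∈ Φ) (hb : β ∈ Φ) :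
    B α α = B β β ∨ B α α = 2 * B β β ∨ B α α = 3 * B β β ∨ B β β = 2 * B α α ∨
      B β β = 3 * B α α := by
  obtain ⟨γ, hg, h1, h3⟩ := exists_nonorth_len h hirr ha hb
  rw [← h1]
  by_cases e1 : β = γ
  · left; rw [e1]
  by_cases e2 : β = -γ
  · left; rw [e2]; simp
  obtain ⟨p, q, hp, hq, h4, h5⟩ := h.ints hg hb e1 e2 h3
  have hq0 : (q : ℝ) ≠ 0 := by
    intro h0
    have : q = 0 := by exact_mod_cast h0
    simp [this] at h4
  have hp0 : (p : ℝ) ≠ 0 := by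
    intro h0
    have : p = 0 := by exact_mod_cast h0
    simp [this] at h4
  have hpq := hp.symm.trans hq
  rcases (int_prod_cases h4 h5).2 with h | h | h | h | h
  · left
    rw [h] at hpq
    exact mul_left_cancel₀ hq0 hpq
  · right; right; right; left
    rw [h] at hpq
    push_cast at hpq
    apply mul_left_cancel₀ hq0; linarith
  · right; right; right; right
    rw [h] at hpq
    push_cast at hpq
    apply mul_left_cancel₀ hq0; linarith
  · right; left
    rw [h] at hpq
    push_cast at hpq
    apply mul_left_cancel₀ hp0; linarith
  · right; right; left
    rw [h] at hpq
    push_cast at hpq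
    apply mul_left_cancel₀ hp0; linarith

lemma len_cases (h : RS B Φ) (hirr : Irr B Φ) :
    (∀ α ∈ Φ, ∀ β ∈ Φ, B α α = B β β) ∨
    ∃ s ∈ Φ, ∃ l ∈ Φ, (B l l = 2 * B s s ∨ B l l = 3 * B s s) ∧
      ∀ α ∈ Φ, B α α = B s s ∨ B α α = B l l := by
  by_cases hall : ∀ α ∈ Φ, ∀ β ∈ Φ, B α α = B β β
  · left; exact hall
  right
  push Not at hall
  obtain ⟨α, ha, β, hb, hne⟩ := hall
  have key : ∃ s ∈ Φ, ∃ l ∈ Φ, (B l l = 2 * B s s ∨ B l l = 3 * B s s) := by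
    rcases ratio_cases h hirr ha hb with h1 | h1 | h1 | h1 | h1
    · exact (hne h1).elim
    · exact ⟨β, hb, α, ha, Or.inl h1⟩
    · exact ⟨β, hb, α, ha, Or.inr h1⟩
    · exact ⟨α, ha, β, hb, Or.inl h1⟩
    · exact ⟨α, ha, β, hb, Or.inr h1⟩
  obtain ⟨s, hs, l, hl, hsl⟩ := key
  refine ⟨s, hs, l, hl, hsl, ?_⟩
  intro γ hg
  have p1 := h.pos' hs
  have p2 := h.pos' hl
  have p3 := h.pos' hg
  have r1 := ratio_cases h hirr hg hs
  have r2 := ratio_cases h hirr hg hl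
  by_contra hcon
  push Not at hcon
  obtain ⟨c1, c2⟩ := hcon
  rcases hsl with h0 | h0 <;>
  rcases r1 with h1 | h1 | h1 | h1 | h1 <;> rcases r2 with h2 | h2 | h2 | h2 | h2 <;>
    first | exact c1 h1 | exact c2 h2 | linarith

lemma RS.scale (h : RS B Φ) {t : ℝ} (ht : 0 < t) : RS (t • B) Φ := by
  have e : ∀ α β, 2 * (t • B) α β / (t • B) α α = 2 * B α β / B α α := by
    intro α β
    simp only [LinearMap.smul_apply, smul_eq_mul]
    rw [show 2 * (t * B α β) = t * (2 * B α β) by ring, mul_div_mul_left _ _ ht.ne']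
  refine ⟨fun x y => ?_, fun x hx => ?_, h.zero, ?_, ?_, h.red⟩
  · simp [h.symm x y]
  · have := h.pos x hx
    simp only [LinearMap.smul_apply, smul_eq_mul]; positivity
  · intro α ha β hb; rw [e]; exact h.refl α ha β hb
  · intro α ha β hb; rw [e]; exact h.int α ha β hb

lemma Irr.scale (h : Irr B Φ) {t : ℝ} (ht : 0 < t) : Irr (t • B) Φ := by
  intro X hX hn hc
  apply h X hX hn
  intro α ha β hb hab
  apply hc α ha β hb
  simp only [LinearMap.smul_apply, smul_eq_mul]
  exact mul_ne_zero ht.ne' hab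

lemma g2_two (u v c : ℝ) (h1 : u - v ≠ 0) (h2 : u + v ≠ 0) :
    ¬ ((u = c ∨ u = -c) ∧ (v = c ∨ v = -c)) := by
  rintro ⟨h3 | h3, h4 | h4⟩
  · exact h1 (by linarith)
  · exact h2 (by linarith)
  · exact h2 (by linarith)
  · exact h1 (by linarith)

lemma g2_three (u v w c : ℝ) (h1 : u - v ≠ 0) (h2 : u + v ≠ 0) (h3 : u - w ≠ 0) (h4 : u + w ≠ 0)
    (h5 : v - w ≠ 0) (h6 : v + w ≠ 0) : ((if (u = c ∨ u = -c) then 1 else 0) +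
    (if (v = c ∨ v = -c) then 1 else 0) + (if (w = c ∨ w = -c) then 1 else 0) : ℕ) ≤ 1 := by
  have k1 := g2_two u v c h1 h2
  have k2 := g2_two u w c h3 h4
  have k3 := g2_two v w c h5 h6
  by_cases hp : (u = c ∨ u = -c)
  · have hq : ¬ (v = c ∨ v = -c) := fun hq => k1 ⟨hp, hq⟩
    have hr : ¬ (w = c ∨ w = -c) := fun hq => k2 ⟨hp, hq⟩
    rw [if_pos hp, if_neg hq, if_neg hr]
  · by_cases hq : (v = c ∨ v = -c)
    · have hr : ¬ (w = c ∨ w = -c) := fun hr => k3 ⟨hq, hr⟩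
      rw [if_neg hp, if_pos hq, if_neg hr]
    · rw [if_neg hp, if_neg hq]
      split_ifs <;> norm_num

/-- the counting core for type G2 -/
lemma g2_count (x y a b : ℝ) (ha : a ≠ 0) (hb : b ≠ 0) :
    ((if x = b then 1 else 0) + (if -x = b then 1 else 0) + (if y = b then 1 else 0)
    + (if -y = b then 1 else 0) + (if x - y = b then 1 else 0) + (if y - x = b then 1 else 0)
    + ((if x + y = a then 1 else 0) + (if -x - y = a then 1 else 0)
    + (if 2 * x - y = a then 1 else 0) + (if y - 2 * x = a then 1 else 0)
    + (if 2 * y - x = a then 1 else 0) + (if x - 2 * y = a then 1 else 0)) : ℕ) ≤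
    (((if x = 0 then 1 else 0) + (if -x = 0 then 1 else 0) + (if y = 0 then 1 else 0)
    + (if -y = 0 then 1 else 0) + (if x - y = 0 then 1 else 0) + (if y - x = 0 then 1 else 0)
    + ((if x + y = 0 then 1 else 0) + (if -x - y = 0 then 1 else 0)
    + (if 2 * x - y = 0 then 1 else 0) + (if y - 2 * x = 0 then 1 else 0)
    + (if 2 * y - x = 0 then 1 else 0) + (if x - 2 * y = 0 then 1 else 0)) : ℕ)) + 2 := by
  -- pairs
  have pr : ∀ u v c : ℝ, c ≠ 0 → v = -u →
      ((if u = c then 1 else 0) + (if v = c then 1 else 0) : ℕ) =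
        if (u = c ∨ u = -c) then 1 else 0 := by
    intro u v c hc hv
    subst hv
    by_cases h1 : u = c
    · have : ¬ (-u = c) := fun h2 => hc (by linarith)
      simp [h1]
      intro h3; exact hc (by linarith)
    · by_cases h2 : u = -c
      · simp [h2]; intro h3; exact hc (by linarith)
      · have : ¬ (-u = c) := fun h3 => h2 (by linarith)
        simp [h1, h2, this]
  have pz : ∀ u v : ℝ, v = -u → ((if u = 0 then 1 else 0) + (if v = 0 then 1 else 0) : ℕ) =
      if u = 0 then 2 else 0 := by
    intro u v hv
    subst hv
    by_cases h1 : u = 0 <;> simp [h1]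
  have e1 := pr x (-x) b hb rfl
  have e2 := pr y (-y) b hb rfl
  have e3 := pr (x - y) (y - x) b hb (by ring)
  have e4 := pr (x + y) (-x - y) a ha (by ring)
  have e5 := pr (2 * x - y) (y - 2 * x) a ha (by ring)
  have e6 := pr (2 * y - x) (x - 2 * y) a ha (by ring)
  have z1 := pz x (-x) rfl
  have z2 := pz y (-y) rfl
  have z3 := pz (x - y) (y - x) (by ring)
  have z4 := pz (x + y) (-x - y) (by ring)
  have z5 := pz (2 * x - y) (y - 2 * x) (by ring)
  have z6 := pz (2 * y - x) (x - 2 * y) (by ring)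
  have tri : ∀ u v w c : ℝ, c ≠ 0 → (w = u - v ∨ w = v - u ∨ w = u + v ∨ w = - u - v) →
     ((if (u = c ∨ u = -c) then 1 else 0) + (if (v = c ∨ v = -c) then 1 else 0)
     + (if (w = c ∨ w = -c) then 1 else 0) : ℕ) ≤ 2 := by
    intro u v w c hc hw
    by_cases h1 : (u = c ∨ u = -c)
    · by_cases h2 : (v = c ∨ v = -c)
      · have h3 : ¬ (w = c ∨ w = -c) := by
          rintro h3
          apply hc
          rcases h1 with h1 | h1 <;> rcases h2 with h2 | h2 <;> rcases h3 with h3 | h3 <;>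
            rcases hw with hw | hw | hw | hw <;> linarith
        simp [h3]
        split_ifs <;> norm_num
      · simp [h2]; split_ifs <;> norm_num
    · simp [h1]; split_ifs <;> norm_num
  have t1 := tri x y (x - y) b hb (Or.inl rfl)
  have t2 := tri (2 * x - y) (2 * y - x) (x + y) a ha (Or.inr (Or.inr (Or.inl (by ring))))
  by_cases hz : x = 0 ∨ y = 0 ∨ x - y = 0 ∨ x + y = 0 ∨ 2 * x - y = 0 ∨ 2 * y - x = 0
  · have : 2 ≤ ((if x = 0 then 2 else 0) + (if y = 0 then 2 else 0) + (if x - y = 0 then 2 else 0)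
      + (if x + y = 0 then 2 else 0) + (if 2 * x - y = 0 then 2 else 0)
      + (if 2 * y - x = 0 then 2 else 0) : ℕ) := by
      rcases hz with h | h | h | h | h | h <;> rw [if_pos h] <;> omega
    omega
  · push Not at hz
    obtain ⟨n1, n2, n3, n4, n5, n6⟩ := hz
    have three := g2_three
    have c1 := three x y (x - y) b n3 n4 (by intro h; apply n2; linarith)
      (by intro h; apply n5; linarith) (by intro h; apply n6; linarith)
      (by intro h; apply n1; linarith)
    have c2 := three (2 * x - y) (2 * y - x) (x + y) a (by intro h; apply n3; linarith)
      (by intro h; apply n4; linarith) (by intro h; apply n6; linarith)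
      (by intro h; apply n1; linarith) (by intro h; apply n5; linarith)
      (by intro h; apply n2; linarith)
    omega

end Lengths

end FileP3b

section FileP3c
open Module Submodule

section GTwo
variable {E : Type*} [AddCommGroup E] [Module ℝ E]
variable {B : E →ₗ[ℝ] E →ₗ[ℝ] ℝ} {Φ : Finset E} {κ : E → ℝ}

lemma RS.eq_of_sub (h : RS B Φ) {x y : E} (h0 : B (x - y) (x - y) = 0) : x = y := by
  by_contra hne
  have := h.pos (x - y) (sub_ne_zero.2 hne)
  linarith

/-- coefficient list of G2 -/
def G2L : Finset (ℤ × ℤ) := {(1,0),(-1,0),(0,1),(0,-1),(1,-1),(-1,1),(1,1),(-1,-1),(2,-1),(-2,1),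
  (-1,2),(1,-2)}

lemma int_sq_lt_cases {z : ℤ} {r : ℝ} (hr : r = z) (h : r ^ 2 ≤ 4) :
    r = 0 ∨ r = 1 ∨ r = -1 ∨ r = 2 ∨ r = -2 := by
  subst hr
  have h1 : z ^ 2 ≤ 4 := by exact_mod_cast h
  have h2 : z ≤ 2 := by nlinarith
  have h3 : -2 ≤ z := by nlinarith
  interval_cases z <;> simp

theorem g2_case (h : RS B Φ) (hirr : Irr B Φ) (k : KP B Φ κ)
    (hlen : ∀ α ∈ Φ, B α α = 2 ∨ B α α = 6) (hs : ∃ s ∈ Φ, B s s = 2) (hl : ∃ s ∈ Φ, B s s = 6)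
    (l : E →ₗ[ℝ] ℝ) : KI Φ κ l := by
  -- integrality facts
  have ss : ∀ s ∈ Φ, ∀ t ∈ Φ, B s s = 2 → B t t = 2 →
      B s t = 0 ∨ B s t = 1 ∨ B s t = -1 ∨ B s t = 2 ∨ B s t = -2 := by
    intro s hs t ht h1 h2
    obtain ⟨z, hz⟩ := h.int s hs t ht
    rw [h1] at hz
    have := h.cs s t
    exact int_sq_lt_cases (z := z) (by linarith) (by rw [h1, h2] at this; linarith)
  have sl : ∀ s ∈ Φ, ∀ t ∈ Φ, B s s = 2 → B t t = 6 →
      B s t = 0 ∨ B s t = 3 ∨ B s t = -3 := by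
    intro s hs t ht h1 h2
    obtain ⟨z, hz⟩ := h.int t ht s hs
    rw [h2, h.symm] at hz
    have h3 : B s t = 3 * z := by linarith
    have h4 := h.cs s t
    rw [h1, h2, h3] at h4
    have h5 : z ^ 2 ≤ 1 := by
      have : (z : ℝ) ^ 2 < 2 := by nlinarith
      have : z ^ 2 < 2 := by exact_mod_cast this
      omega
    have h6 : z ≤ 1 := by nlinarith
    have h7 : -1 ≤ z := by nlinarith
    rw [h3]
    interval_cases z <;> norm_num
  obtain ⟨s0, hs0, hs0n⟩ := hs
  obtain ⟨l0, hl0, hl0n⟩ := hl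
  have hex : ∃ e ∈ Φ, ∃ L ∈ Φ, B e e = 2 ∧ B L L = 6 ∧ B e L = 3 := by
    obtain ⟨γ, hg, h1, h2⟩ := exists_nonorth_len h hirr hl0 hs0
    rw [h.symm] at h2
    rcases sl s0 hs0 γ hg hs0n (h1.trans hl0n) with h3 | h3 | h3
    · exact (h2 h3).elim
    · exact ⟨s0, hs0, γ, hg, hs0n, h1.trans hl0n, h3⟩
    · refine ⟨s0, hs0, -γ, h.neg_mem hg, hs0n, by simp [h1, hl0n], by simp [h3]⟩
  obtain ⟨e, he, L, hL, hen, hLn, heL⟩ := hex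
  obtain ⟨f, hf⟩ : ∃ f, f = L - e := ⟨_, rfl⟩
  have hfL : L = e + f := by rw [hf]; abel
  have hef : B e f = 1 := by rw [hf, map_sub]; linarith
  have hfe : B f e = 1 := by rw [h.symm]; exact hef
  have hfn : B f f = 2 := by
    have := hLn
    rw [hfL] at this
    simp only [map_add, LinearMap.add_apply] at this
    linarith
  have rf : ∀ {α β γ : E} (c : ℝ), α ∈ Φ → β ∈ Φ → 2 * B α β / B α α = c → γ = β - c • α → γ ∈ Φ := by
    intro α β γ c ha hb hc hg
    rw [hg, ← hc]; exact h.refl α ha β hb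
  have hfm : f ∈ Φ := by
    have : -f ∈ Φ := rf (α := L) (β := e) 1 hL he (by rw [h.symm, heL, hLn]; norm_num) (by
      rw [hfL]; module)
    simpa using h.neg_mem this
  let em : ℤ × ℤ → E := fun p => (p.1 : ℝ) • e + (p.2 : ℝ) • f
  have nrm : ∀ u v : ℝ, B (u • e + v • f) (u • e + v • f) = 2 * u ^ 2 + 2 * u * v + 2 * v ^ 2 := by
    intro u v
    simp only [map_add, map_smul, LinearMap.add_apply, LinearMap.smul_apply, smul_eq_mul, hen, hef,
      hfe, hfn]
    ring
  have m1 : em (1, -1) ∈ Φ := by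
    have := h.neg_mem (rf (γ := f - e) 1 he hfm (by rw [hen, hef]; norm_num) (by module))
    simp only [em]; convert this using 1; push_cast; module
  have m2 : em (1, -2) ∈ Φ := by
    refine rf 3 hfm hL (by rw [hfL, map_add, hfe, hfn]; norm_num) ?_
    simp only [em]; rw [hfL]; push_cast; module
  have m3 : em (-2, 1) ∈ Φ := by
    refine rf 3 he hL (by rw [heL, hen]; norm_num) ?_
    simp only [em]; rw [hfL]; push_cast; module
  have m0 : ∀ p, em p ∈ Φ → em (-p) ∈ Φ := by
    intro p hp
    have := h.neg_mem hp
    convert this using 1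
    simp only [em, Prod.fst_neg, Prod.snd_neg]; push_cast; module
  have e10 : em (1, 0) = e := by simp [em]
  have e01 : em (0, 1) = f := by simp [em]
  have e11 : em (1, 1) = L := by simp [em, hfL]
  have hGin : ∀ p ∈ G2L, em p ∈ Φ := by
    intro p hp
    simp only [G2L, Finset.mem_insert, Finset.mem_singleton] at hp
    have n1 : em (1, 0) ∈ Φ := by rw [e10]; exact he
    have n2 : em (0, 1) ∈ Φ := by rw [e01]; exact hfm
    have n3 : em (1, 1) ∈ Φ := by rw [e11]; exact hL
    have k1 := m0 _ n1
    have k2 := m0 _ n2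
    have k3 := m0 _ n3
    have k4 := m0 _ m1
    have k5 := m0 _ m2
    have k6 := m0 _ m3
    simp only [Prod.neg_mk, neg_zero, neg_neg] at k1 k2 k3 k4 k5 k6
    rcases hp with rfl | rfl | rfl | rfl | rfl | rfl | rfl | rfl | rfl | rfl | rfl | rfl <;>
      assumption
  -- roots not orthogonal to e,f are in the list
  have hcls : ∀ β ∈ Φ, (B e β ≠ 0 ∨ B f β ≠ 0) → ∃ p ∈ G2L, β = em p := by
    intro β hb hne
    have pL : B L β = B e β + B f β := by rw [hfL]; simp
    have lin : ∀ p : ℤ × ℤ, B (em p) β = p.1 * B e β + p.2 * B f β := by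
      intro p; simp [em]
    have fin : ∀ p : ℤ × ℤ, p ∈ G2L → B e β = 2 * p.1 + p.2 → B f β = p.1 + 2 * p.2 →
        B β β = 2 * p.1 ^ 2 + 2 * p.1 * p.2 + 2 * p.2 ^ 2 → ∃ p ∈ G2L, β = em p := by
      intro p hp h1 h2 h3
      refine ⟨p, hp, h.eq_of_sub ?_⟩
      have n1 := nrm p.1 p.2
      have n2 := lin p
      have n3 := h.symm β (em p)
      simp only [map_sub, LinearMap.sub_apply]
      change B (em p) (em p) = _ at n1
      rw [n1, n3, n2, h3, h1, h2]
      ring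
    rcases hlen β hb with hbn | hbn
    · have c1 := ss e he β hb hen hbn
      have c2 := ss f hfm β hb hfn hbn
      have c3 := sl β hb L hL hbn hLn
      have c4 := sl β hb _ m2 hbn (by rw [nrm]; norm_num)
      have c5 := sl β hb _ m3 hbn (by rw [nrm]; norm_num)
      rw [h.symm] at c3 c4 c5
      rw [pL] at c3
      rw [lin] at c4 c5
      push_cast at c4 c5
      rcases c1 with d1 | d1 | d1 | d1 | d1 <;> rcases c2 with d2 | d2 | d2 | d2 | d2 <;>
        rw [d1, d2] at c3 c4 c5 hne <;>
        first | (norm_num at c3; done) | (norm_num at c4; done) | (norm_num at c5; done) |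
          (norm_num at hne; done) | skip
      · exact fin (1, -1) (by decide) (by rw [d1]; norm_num) (by rw [d2]; norm_num)
          (by rw [hbn]; norm_num)
      · exact fin (0, 1) (by decide) (by rw [d1]; norm_num) (by rw [d2]; norm_num)
          (by rw [hbn]; norm_num)
      · exact fin (-1, 1) (by decide) (by rw [d1]; norm_num) (by rw [d2]; norm_num)
          (by rw [hbn]; norm_num)
      · exact fin (0, -1) (by decide) (by rw [d1]; norm_num) (by rw [d2]; norm_num)
          (by rw [hbn]; norm_num)
      · exact fin (1, 0) (by decide) (by rw [d1]; norm_num) (by rw [d2]; norm_num)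
          (by rw [hbn]; norm_num)
      · exact fin (-1, 0) (by decide) (by rw [d1]; norm_num) (by rw [d2]; norm_num)
          (by rw [hbn]; norm_num)
    · have c1 := sl e he β hb hen hbn
      have c2 := sl f hfm β hb hfn hbn
      have c3 := sl _ m1 β hb (by rw [nrm]; norm_num) hbn
      rw [lin] at c3
      push_cast at c3
      rcases c1 with d1 | d1 | d1 <;> rcases c2 with d2 | d2 | d2 <;>
        rw [d1, d2] at c3 hne <;>
        first | (norm_num at c3; done) | (norm_num at hne; done) | skip
      · exact fin (-1, 2) (by decide) (by rw [d1]; norm_num) (by rw [d2]; norm_num)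
          (by rw [hbn]; norm_num)
      · exact fin (1, -2) (by decide) (by rw [d1]; norm_num) (by rw [d2]; norm_num)
          (by rw [hbn]; norm_num)
      · exact fin (2, -1) (by decide) (by rw [d1]; norm_num) (by rw [d2]; norm_num)
          (by rw [hbn]; norm_num)
      · exact fin (1, 1) (by decide) (by rw [d1]; norm_num) (by rw [d2]; norm_num)
          (by rw [hbn]; norm_num)
      · exact fin (-2, 1) (by decide) (by rw [d1]; norm_num) (by rw [d2]; norm_num)
          (by rw [hbn]; norm_num)
      · exact fin (-1, -1) (by decide) (by rw [d1]; norm_num) (by rw [d2]; norm_num)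
          (by rw [hbn]; norm_num)
  have hall := span_principle hirr h.symm (F := {e, f}) ⟨e, by simp, he, by rw [hen]; norm_num⟩ (by
    intro β hb hne
    obtain ⟨p, -, rfl⟩ := hcls β hb (by simpa using hne)
    refine add_mem (smul_mem _ _ (subset_span (by simp))) (smul_mem _ _ (subset_span (by simp))))
  have hΦ : Φ = G2L.image em := by
    ext β
    rw [Finset.mem_image]
    constructor
    · intro hb
      obtain ⟨p, hp, rfl⟩ := hcls β hb (by simpa using hall β hb)
      exact ⟨p, hp, rfl⟩
    · rintro ⟨p, hp, rfl⟩
      exact hGin p hp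
  have hind : LinearIndependent ℝ ![e, f] := by
    rw [LinearIndependent.pair_iff]
    intro s t hst
    have h1 := congrArg (B e) hst
    have h2 := congrArg (B f) hst
    simp only [map_add, map_smul, smul_eq_mul, hen, hef, hfe, hfn, map_zero] at h1 h2
    constructor <;> linarith
  have hinj : Function.Injective em := by
    intro p q hpq
    rw [LinearIndependent.pair_iff] at hind
    have := hind (p.1 - q.1) (p.2 - q.2) (by
      have h1 : em p - em q = 0 := sub_eq_zero.2 hpq
      simp only [em] at h1
      rw [← h1]; module)
    ext
    · have := this.1; rw [sub_eq_zero] at this; exact_mod_cast this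
    · have := this.2; rw [sub_eq_zero] at this; exact_mod_cast this
  have hrank : 2 ≤ finrank ℝ (span ℝ (Φ : Set E)) := by
    have h1 : finrank ℝ (span ℝ (Set.range ![e, f])) = 2 := by
      rw [finrank_span_eq_card hind, Fintype.card_fin]
    rw [← h1]
    apply Submodule.finrank_mono
    apply span_mono
    rintro _ ⟨i, rfl⟩
    fin_cases i
    · exact he
    · exact hfm
  have kS : ∀ p ∈ G2L, 2 * (p.1 : ℝ) ^ 2 + 2 * p.1 * p.2 + 2 * p.2 ^ 2 = 2 → κ (em p) = κ e := by
    intro p hp hn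
    apply kappa_len h hirr k (hGin p hp) he
    rw [hen, nrm, hn]
  have kL : ∀ p ∈ G2L, 2 * (p.1 : ℝ) ^ 2 + 2 * p.1 * p.2 + 2 * p.2 ^ 2 = 6 → κ (em p) = κ L := by
    intro p hp hn
    apply kappa_len h hirr k (hGin p hp) hL
    rw [hLn, nrm, hn]
  have vl : ∀ p, l (em p) = p.1 * l e + p.2 * l f := by intro p; simp [em]
  have cnt := g2_count (l e) (l f) (κ L) (κ e) (k.nz L hL) (k.nz e he)
  unfold KI
  have e1 : ∀ q : E → Prop, (Φ.filter q).card = ∑ p ∈ G2L, if q (em p) then 1 else 0 := by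
    intro q
    conv_lhs => rw [hΦ, Finset.filter_image, Finset.card_image_of_injective _ hinj]
    rw [Finset.card_filter]
  rw [e1, e1]
  refine le_trans ?_ (Nat.add_le_add_left hrank _)
  have s1 : ∀ w : ℤ × ℤ → ℕ, ∑ p ∈ G2L, w p = w (1,0) + w (-1,0) + w (0,1) + w (0,-1) + w (1,-1) +
      w (-1,1) + (w (1,1) + w (-1,-1) + w (2,-1) + w (-2,1) + w (-1,2) + w (1,-2)) := by
    intro w
    unfold G2L
    repeat rw [Finset.sum_insert (by decide)]
    rw [Finset.sum_singleton]
    ring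
  rw [s1, s1]
  rw [kS (1,0) (by decide) (by norm_num), kS (-1,0) (by decide) (by norm_num),
    kS (0,1) (by decide) (by norm_num), kS (0,-1) (by decide) (by norm_num),
    kS (1,-1) (by decide) (by norm_num), kS (-1,1) (by decide) (by norm_num),
    kL (1,1) (by decide) (by norm_num), kL (-1,-1) (by decide) (by norm_num),
    kL (2,-1) (by decide) (by norm_num), kL (-2,1) (by decide) (by norm_num),
    kL (-1,2) (by decide) (by norm_num), kL (1,-2) (by decide) (by norm_num)]
  have v0 : l (em (1,0)) = l e := by rw [vl]; push_cast; ring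
  have v1 : l (em (-1,0)) = -l e := by rw [vl]; push_cast; ring
  have v2 : l (em (0,1)) = l f := by rw [vl]; push_cast; ring
  have v3 : l (em (0,-1)) = -l f := by rw [vl]; push_cast; ring
  have v4 : l (em (1,-1)) = l e - l f := by rw [vl]; push_cast; ring
  have v5 : l (em (-1,1)) = l f - l e := by rw [vl]; push_cast; ring
  have v6 : l (em (1,1)) = l e + l f := by rw [vl]; push_cast; ring
  have v7 : l (em (-1,-1)) = -l e - l f := by rw [vl]; push_cast; ring
  have v8 : l (em (2,-1)) = 2 * l e - l f := by rw [vl]; push_cast; ring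
  have v9 : l (em (-2,1)) = l f - 2 * l e := by rw [vl]; push_cast; ring
  have v10 : l (em (-1,2)) = 2 * l f - l e := by rw [vl]; push_cast; ring
  have v11 : l (em (1,-2)) = l e - 2 * l f := by rw [vl]; push_cast; ring
  rw [v0, v1, v2, v3, v4, v5, v6, v7, v8, v9, v10, v11]
  exact cnt

end GTwo

end FileP3c

section FileP3d
open Module Submodule

section FrameCount
variable {E : Type*} [AddCommGroup E] [Module ℝ E]

/-- multiplicity of a value -/
def NF (F : Finset E) (l : E →ₗ[ℝ] ℝ) (v : ℝ) : ℤ := ((F.filter (fun f => l f = v)).card : ℤ)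

/-- correlation -/
def CF (F : Finset E) (l : E →ₗ[ℝ] ℝ) (v : ℝ) : ℤ := ∑ g ∈ F, NF F l (l g + v)

/-- number of off-diagonal pairs -/
def LP (F : Finset E) (l : E →ₗ[ℝ] ℝ) (v : ℝ) : ℤ :=
  (((F ×ˢ F).filter (fun p => p.1 ≠ p.2 ∧ p.1 ≠ -p.2 ∧ l p.1 - l p.2 = v)).card : ℤ)

variable {F : Finset E} {l : E →ₗ[ℝ] ℝ}

lemma NF_nonneg (v : ℝ) : 0 ≤ NF F l v := by unfold NF; positivity

lemma NF_neg (hneg : ∀ f ∈ F, -f ∈ F) (v : ℝ) : NF F l (-v) = NF F l v := by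
  unfold NF
  congr 1
  apply Finset.card_bij (fun f _ => -f)
  · intro f hf
    rw [Finset.mem_filter] at hf ⊢
    exact ⟨hneg f hf.1, by rw [map_neg, hf.2, neg_neg]⟩
  · intro f _ g _ h; exact neg_injective h
  · intro f hf
    rw [Finset.mem_filter] at hf
    exact ⟨-f, Finset.mem_filter.2 ⟨hneg f hf.1, by rw [map_neg, hf.2]⟩, by simp⟩

lemma CF_eq (hneg : ∀ f ∈ F, -f ∈ F) (h0 : ∀ f ∈ F, f ≠ -f) (v : ℝ) :
    CF F l v = LP F l v + (if v = 0 then (F.card : ℤ) else 0) + NF F l (v / 2) := by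
  have e1 : LP F l v = ∑ g ∈ F, (((F.filter (fun f => f ≠ g ∧ f ≠ -g ∧ l f - l g = v)).card : ℤ)) := by
    unfold LP
    rw [Finset.card_filter, Finset.sum_product_right]
    push_cast
    apply Finset.sum_congr rfl
    intro g _
    rw [Finset.card_filter]
    push_cast
    rfl
  have e2 : (if v = 0 then (F.card : ℤ) else 0) = ∑ g ∈ F, if v = 0 then (1 : ℤ) else 0 := by
    split_ifs <;> simp
  have e3 : NF F l (v / 2) = ∑ g ∈ F, if -(2 * l g) = v then (1 : ℤ) else 0 := by
    rw [← NF_neg hneg]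
    unfold NF
    rw [Finset.card_filter]
    push_cast
    apply Finset.sum_congr rfl
    intro g _
    congr 1
    rw [eq_iff_iff]
    constructor <;> intro h <;> linarith
  rw [e1, e2, e3, CF, ← Finset.sum_add_distrib, ← Finset.sum_add_distrib]
  apply Finset.sum_congr rfl
  intro g hg
  unfold NF
  have : F.filter (fun f => l f = l g + v) = F.filter (fun f => f ≠ g ∧ f ≠ -g ∧ l f - l g = v) ∪
      (({g} : Finset E).filter (fun f => l f = l g + v) ∪
        ({-g} : Finset E).filter (fun f => l f = l g + v)) := by
    ext f
    simp only [Finset.mem_union, Finset.mem_filter, Finset.mem_singleton]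
    constructor
    · rintro ⟨h1, h2⟩
      by_cases h3 : f = g
      · right; left; exact ⟨h3, h2⟩
      by_cases h4 : f = -g
      · right; right; exact ⟨h4, h2⟩
      · left; exact ⟨h1, h3, h4, by linarith⟩
    · rintro (⟨h1, _, _, h2⟩ | ⟨h1, h2⟩ | ⟨h1, h2⟩)
      · exact ⟨h1, by linarith⟩
      · exact ⟨h1 ▸ hg, h2⟩
      · exact ⟨h1 ▸ hneg g hg, h2⟩
  rw [this, Finset.card_union_of_disjoint, Finset.card_union_of_disjoint, Finset.card_filter _ {g},
    Finset.card_filter _ {-g}, Finset.sum_singleton, Finset.sum_singleton]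
  · have c1 : (l g = l g + v) ↔ v = 0 := by constructor <;> intro h <;> linarith
    have c2 : (l (-g) = l g + v) ↔ -(2 * l g) = v := by
      rw [map_neg]; constructor <;> intro h <;> linarith
    simp only [c1, c2]
    push_cast
    ring
  · rw [Finset.disjoint_left]
    simp only [Finset.mem_filter, Finset.mem_singleton]
    rintro f ⟨h1, _⟩ ⟨h2, _⟩
    exact h0 g hg (h1.symm.trans h2)
  · rw [Finset.disjoint_left]
    simp only [Finset.mem_filter, Finset.mem_singleton, Finset.mem_union]
    rintro f ⟨_, h1, h2, _⟩ (⟨h3, _⟩ | ⟨h3, _⟩)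
    · exact h1 h3
    · exact h2 h3

lemma sum_fib (W : Finset ℝ) (hW : ∀ f ∈ F, l f ∈ W) (t : ℝ → ℤ) :
    ∑ g ∈ F, t (l g) = ∑ w ∈ W, NF F l w * t w := by
  rw [← Finset.sum_fiberwise_of_maps_to hW]
  apply Finset.sum_congr rfl
  intro w _
  rw [Finset.sum_congr rfl (g := fun _ => t w)]
  · simp [NF]
  · intro f hf
    rw [(Finset.mem_filter.1 hf).2]

lemma NF_zero_of {w : ℝ} (h : ∀ f ∈ F, l f ≠ w) : NF F l w = 0 := by
  unfold NF
  rw [Finset.filter_false_of_mem h]; simp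

lemma quad_bound (a : ℝ) (W : Finset ℝ) :
    ∑ w ∈ W, (NF F l w - NF F l (w + a)) ^ 2 ≤ 2 * (CF F l 0 - CF F l a) := by
  let T := F.image l
  let W' := W ∪ (T ∪ T.image (fun x => x - a))
  have hT : ∀ f ∈ F, l f ∈ T := fun f hf => Finset.mem_image_of_mem _ hf
  calc _ ≤ ∑ w ∈ W', (NF F l w - NF F l (w + a)) ^ 2 := by
        apply Finset.sum_le_sum_of_subset_of_nonneg Finset.subset_union_left
        intro i _ _; positivity
    _ = ∑ w ∈ W', NF F l w * NF F l (w + 0) + ∑ w ∈ W', NF F l (w + a) * NF F l (w + a + 0)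
        - 2 * ∑ w ∈ W', NF F l w * NF F l (w + a) := by
        rw [Finset.mul_sum, ← Finset.sum_add_distrib, ← Finset.sum_sub_distrib]
        apply Finset.sum_congr rfl
        intro w _; rw [add_zero, add_zero]; ring
    _ = _ := by
        rw [← sum_fib W' _ (fun w => NF F l (w + 0)), ← sum_fib W' _ (fun w => NF F l (w + a))]
        · have : ∑ w ∈ W', NF F l (w + a) * NF F l (w + a + 0) =
              ∑ w ∈ W'.image (fun x => x + a), NF F l w * NF F l (w + 0) := by
            rw [Finset.sum_image]
            intro x _ y _ h; exact add_right_cancel h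
          rw [this, ← sum_fib (W'.image (fun x => x + a)) _ (fun w => NF F l (w + 0))]
          · unfold CF; ring
          · intro f hf
            rw [Finset.mem_image]
            refine ⟨l f - a, ?_, by ring⟩
            exact Finset.mem_union_right _ (Finset.mem_union_right _
              (Finset.mem_image_of_mem _ (hT f hf)))
        · intro f hf
          exact Finset.mem_union_right _ (Finset.mem_union_left _ (hT f hf))
        · intro f hf
          exact Finset.mem_union_right _ (Finset.mem_union_left _ (hT f hf))

/-- independence over the integers -/
def ZInd (a b : ℝ) : Prop := ∀ m j : ℤ, m * a + j * b = 0 → m = 0 ∧ j = 0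

lemma ZInd.ne_left {a b : ℝ} (h : ZInd a b) : a ≠ 0 := by
  intro h0
  have := (h 1 0 (by simp [h0])).1
  norm_num at this

lemma ZInd.eq {a b : ℝ} (h : ZInd a b) {m j m' j' : ℤ} (e : m * a + j * b = m' * a + j' * b) :
    m = m' ∧ j = j' := by
  have := h (m - m') (j - j') (by push_cast; linarith)
  omega

lemma exists_far (w c : ℝ) (hc : c ≠ 0) : ∃ M : ℕ, ∀ i : ℕ, M ≤ i → NF F l (w + i * c) = 0 := by
  have hfin : {i : ℕ | ∃ f ∈ F, l f = w + i * c}.Finite := by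
    apply Set.Finite.of_finite_image (f := fun i : ℕ => w + i * c)
    · apply Set.Finite.subset (F.image l).finite_toSet
      rintro _ ⟨i, ⟨f, hf, h1⟩, rfl⟩
      rw [Finset.coe_image]
      exact ⟨f, hf, h1⟩
    · intro i _ j _ hij
      simp only [add_right_inj] at hij
      exact_mod_cast mul_right_cancel₀ hc hij
  obtain ⟨M, hM⟩ := hfin.bddAbove
  refine ⟨M + 1, fun i hi => NF_zero_of fun f hf h1 => ?_⟩
  have := hM ⟨f, hf, h1⟩
  omega

lemma exists_top (w c : ℝ) (hc : c ≠ 0) (hw : 0 < NF F l w) : ∃ p : ℕ,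
    (∀ i : ℕ, i ≤ p → 0 < NF F l (w + i * c)) ∧ NF F l (w + (p + 1 : ℕ) * c) = 0 := by
  obtain ⟨M, hM⟩ := exists_far (F := F) (l := l) w c hc
  have hex : ∃ p : ℕ, NF F l (w + (p + 1 : ℕ) * c) = 0 := ⟨M, hM _ (by omega)⟩
  refine ⟨Nat.find hex, ?_, Nat.find_spec hex⟩
  intro i hi
  cases i with
  | zero => simpa using hw
  | succ i =>
    have := Nat.find_min hex (m := i) (by omega)
    exact lt_of_le_of_ne (NF_nonneg _) (Ne.symm this)

lemma chain_ray (w c : ℝ) (hc : c ≠ 0) : ∃ M : ℕ,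
    NF F l w ≤ ∑ i ∈ Finset.range M, (NF F l (w + i * c) - NF F l (w + (i + 1 : ℕ) * c)) ^ 2 := by
  obtain ⟨M, hM⟩ := exists_far (F := F) (l := l) w c hc
  refine ⟨M, ?_⟩
  have := Finset.sum_range_sub' (fun i : ℕ => NF F l (w + i * c)) M
  rw [hM M le_rfl] at this
  simp only [Nat.cast_zero, zero_mul, add_zero, sub_zero] at this
  rw [← this]
  apply Finset.sum_le_sum
  intro i _
  exact Int.le_self_sq _

lemma quad_lower (hneg : ∀ f ∈ F, -f ∈ F) {a b : ℝ} (hab : ZInd a b) :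
    2 * NF F l b ≤ CF F l 0 - CF F l a := by
  have ha := hab.ne_left
  obtain ⟨M, hM⟩ := chain_ray (F := F) (l := l) b a ha
  obtain ⟨M', hM'⟩ := chain_ray (F := F) (l := l) b (-a) (neg_ne_zero.2 ha)
  let d : ℝ → ℤ := fun w => (NF F l w - NF F l (w + a)) ^ 2
  let pt : ℤ × ℤ → ℝ := fun p => p.1 * a + p.2 * b
  have hpt : Function.Injective pt := by
    intro p q hpq
    have := hab.eq hpq
    exact Prod.ext this.1 this.2
  let P1 : Finset (ℤ × ℤ) := (Finset.range M).image (fun i : ℕ => ((i : ℤ), (1 : ℤ)))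
  let P2 : Finset (ℤ × ℤ) := (Finset.range M').image (fun i : ℕ => (-(i : ℤ) - 1, (1 : ℤ)))
  let P3 : Finset (ℤ × ℤ) := (Finset.range M).image (fun i : ℕ => (-(i : ℤ) - 1, (-1 : ℤ)))
  let P4 : Finset (ℤ × ℤ) := (Finset.range M').image (fun i : ℕ => ((i : ℤ), (-1 : ℤ)))
  have s1 : NF F l b ≤ ∑ p ∈ P1, d (pt p) := by
    refine hM.trans (le_of_eq ?_)
    rw [Finset.sum_image (by intro i _ j _ h; simpa using h)]
    apply Finset.sum_congr rfl
    intro i _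
    simp only [d, pt]
    push_cast
    ring_nf
  have s2 : NF F l b ≤ ∑ p ∈ P2, d (pt p) := by
    refine hM'.trans (le_of_eq ?_)
    rw [Finset.sum_image (by intro i _ j _ h; simpa using h)]
    apply Finset.sum_congr rfl
    intro i _
    simp only [d, pt]
    push_cast
    ring_nf
  have s3 : NF F l b ≤ ∑ p ∈ P3, d (pt p) := by
    refine hM.trans (le_of_eq ?_)
    rw [Finset.sum_image (by intro i _ j _ h; simpa using h)]
    apply Finset.sum_congr rfl
    intro i _
    simp only [d, pt]
    rw [← NF_neg hneg (_ * a + _), ← NF_neg hneg (_ * a + _ + a)]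
    push_cast
    ring_nf
  have s4 : NF F l b ≤ ∑ p ∈ P4, d (pt p) := by
    refine hM'.trans (le_of_eq ?_)
    rw [Finset.sum_image (by intro i _ j _ h; simpa using h)]
    apply Finset.sum_congr rfl
    intro i _
    simp only [d, pt]
    rw [← NF_neg hneg (_ * a + _), ← NF_neg hneg (_ * a + _ + a)]
    push_cast
    ring_nf
  have d12 : Disjoint P1 P2 := by
    rw [Finset.disjoint_left]
    simp only [P1, P2, Finset.mem_image]
    rintro _ ⟨i, _, rfl⟩ ⟨j, _, h⟩
    have := (Prod.ext_iff.1 h).1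
    simp only at this
    omega
  have d34 : Disjoint P3 P4 := by
    rw [Finset.disjoint_left]
    simp only [P3, P4, Finset.mem_image]
    rintro _ ⟨i, _, rfl⟩ ⟨j, _, h⟩
    have := (Prod.ext_iff.1 h).1
    simp only at this
    omega
  have d1234 : Disjoint (P1 ∪ P2) (P3 ∪ P4) := by
    rw [Finset.disjoint_left]
    simp only [P1, P2, P3, P4, Finset.mem_image, Finset.mem_union]
    rintro _ (⟨i, _, rfl⟩ | ⟨i, _, rfl⟩) (⟨j, _, h⟩ | ⟨j, _, h⟩) <;>
    · have := (Prod.ext_iff.1 h).2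
      simp only at this
      omega
  have := quad_bound (F := F) (l := l) a (((P1 ∪ P2) ∪ (P3 ∪ P4)).image pt)
  rw [Finset.sum_image (by intro i _ j _ h; exact hpt h), Finset.sum_union d1234,
    Finset.sum_union d12, Finset.sum_union d34] at this
  simp only [d] at s1 s2 s3 s4
  linarith

end FrameCount

end FileP3d

section FileP3e
open Module Submodule

section FrameConcl
variable {E : Type*} [AddCommGroup E] [Module ℝ E]
variable {F : Finset E} {l : E →ₗ[ℝ] ℝ}

lemma frame_ineq (hneg : ∀ f ∈ F, -f ∈ F) (h0 : ∀ f ∈ F, f ≠ -f) {a b : ℝ} (hab : ZInd a b) :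
    LP F l a + 2 * NF F l b ≤ LP F l 0 + F.card + NF F l 0 := by
  have h1 := CF_eq (l := l) hneg h0 0
  have h2 := CF_eq (l := l) hneg h0 a
  rw [if_pos rfl, zero_div] at h1
  rw [if_neg hab.ne_left] at h2
  have h3 := quad_lower (l := l) hneg hab
  have h4 := NF_nonneg (F := F) (l := l) (a / 2)
  linarith

lemma frame_eq (hneg : ∀ f ∈ F, -f ∈ F) (h0 : ∀ f ∈ F, f ≠ -f) {a b : ℝ} (hab : ZInd a b)
    (hc : F.card = 8) (hL : LP F l 0 + 8 ≤ LP F l a + 2) (hN : NF F l 0 + 1 ≤ NF F l b) :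
    ∃ q : ℤ, ∀ i : ℕ, i < 4 → 0 < NF F l (b + (q + i) * a) := by
  have ha := hab.ne_left
  have h1 := CF_eq (l := l) hneg h0 0
  have h2 := CF_eq (l := l) hneg h0 a
  rw [if_pos rfl, zero_div, hc] at h1
  rw [if_neg ha] at h2
  have h3 := quad_lower (l := l) hneg hab
  have h4 := NF_nonneg (F := F) (l := l) (a / 2)
  have h5 := NF_nonneg (F := F) (l := l) 0
  have hb1 : NF F l b = 1 := by push_cast at h1; omega
  have hq : ∀ W : Finset ℝ, ∑ w ∈ W, (NF F l w - NF F l (w + a)) ^ 2 ≤ 4 := by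
    intro W
    refine (quad_bound (F := F) (l := l) a W).trans ?_
    push_cast at h1
    omega
  obtain ⟨p, hp1, hp2⟩ := exists_top (F := F) (l := l) b a ha (by omega)
  obtain ⟨q, hq1, hq2⟩ := exists_top (F := F) (l := l) b (-a) (neg_ne_zero.2 ha) (by omega)
  let pt : ℤ × ℤ → ℝ := fun p => p.1 * a + p.2 * b
  have hpt : Function.Injective pt := by
    intro p q hpq
    have := hab.eq hpq
    exact Prod.ext this.1 this.2
  have hpos : ∀ j : ℤ, -(q:ℤ) ≤ j → j ≤ p → 0 < NF F l (b + j * a) := by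
    intro j hj1 hj2
    rcases le_total 0 j with hj | hj
    · have := hp1 j.toNat (by omega)
      have e : ((j.toNat : ℕ) : ℝ) = (j : ℝ) := by
        exact_mod_cast Int.toNat_of_nonneg hj
      rwa [e] at this
    · have := hq1 (-j).toNat (by omega)
      have e : (((-j).toNat : ℕ) : ℝ) = -(j : ℝ) := by
        exact_mod_cast Int.toNat_of_nonneg (a := -j) (by omega)
      rw [e] at this
      convert this using 2; ring
  by_cases hpq : 3 ≤ p + q
  · refine ⟨-q, fun i hi => ?_⟩
    have := hpos (-q + i) (by omega) (by omega)
    push_cast at this ⊢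
    exact this
  exfalso
  have z1 : NF F l (b + ((p:ℝ) + 1) * a) = 0 := by rw [← hp2]; push_cast; rfl
  have z2 : NF F l (b - ((q:ℝ) + 1) * a) = 0 := by rw [← hq2]; push_cast; congr 1; ring
  have y1 : 0 < NF F l (b + p * a) := hp1 p le_rfl
  have y2 : 0 < NF F l (b - q * a) := by
    have := hq1 q le_rfl
    convert this using 2; ring
  let D : Finset (ℤ × ℤ) := {((p:ℤ), 1), (-(q:ℤ) - 1, 1), (-(p:ℤ) - 1, -1), ((q:ℤ), -1)}
  have hDc : D.card = 4 := by
    have n1 : ((p:ℤ), (1:ℤ)) ∉ ({(-(q:ℤ) - 1, 1), (-(p:ℤ) - 1, -1), ((q:ℤ), -1)} : Finset (ℤ × ℤ)) := by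
      simp only [Finset.mem_insert, Finset.mem_singleton, Prod.mk.injEq]
      omega
    have n2 : (-(q:ℤ) - 1, (1:ℤ)) ∉ ({(-(p:ℤ) - 1, -1), ((q:ℤ), -1)} : Finset (ℤ × ℤ)) := by
      simp only [Finset.mem_insert, Finset.mem_singleton, Prod.mk.injEq]
      omega
    have n3 : (-(p:ℤ) - 1, (-1:ℤ)) ∉ ({((q:ℤ), -1)} : Finset (ℤ × ℤ)) := by
      simp only [Finset.mem_singleton, Prod.mk.injEq]
      omega
    simp only [D]
    rw [Finset.card_insert_of_notMem n1, Finset.card_insert_of_notMem n2,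
      Finset.card_insert_of_notMem n3, Finset.card_singleton]
  have hDd : ∀ w ∈ D.image pt, 1 ≤ (NF F l w - NF F l (w + a)) ^ 2 := by
    have key : ∀ x y : ℤ, (x ≠ y) → 1 ≤ (x - y) ^ 2 := by
      intro x y hxy
      have : 0 < (x - y) ^ 2 := by
        have : x - y ≠ 0 := sub_ne_zero.2 hxy
        positivity
      omega
    intro w hw
    rw [Finset.mem_image] at hw
    obtain ⟨z, hz, rfl⟩ := hw
    apply key
    simp only [D, Finset.mem_insert, Finset.mem_singleton] at hz
    rcases hz with rfl | rfl | rfl | rfl <;> simp only [pt]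
    · have e1 : ((p:ℤ):ℝ) * a + ((1:ℤ):ℝ) * b = b + p * a := by push_cast; ring
      have e2 : ((p:ℤ):ℝ) * a + ((1:ℤ):ℝ) * b + a = b + ((p:ℝ) + 1) * a := by push_cast; ring
      rw [e2, e1]; omega
    · have e1 : ((-(q:ℤ) - 1 : ℤ):ℝ) * a + ((1:ℤ):ℝ) * b = b - ((q:ℝ) + 1) * a := by push_cast; ring
      have e2 : ((-(q:ℤ) - 1 : ℤ):ℝ) * a + ((1:ℤ):ℝ) * b + a = b - q * a := by push_cast; ring
      rw [e2, e1]; omega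
    · have e1 : ((-(p:ℤ) - 1 : ℤ):ℝ) * a + ((-1:ℤ):ℝ) * b = -(b + ((p:ℝ) + 1) * a) := by push_cast; ring
      have e2 : ((-(p:ℤ) - 1 : ℤ):ℝ) * a + ((-1:ℤ):ℝ) * b + a = -(b + p * a) := by push_cast; ring
      rw [e2, e1, NF_neg hneg, NF_neg hneg]; omega
    · have e1 : ((q:ℤ):ℝ) * a + ((-1:ℤ):ℝ) * b = -(b - q * a) := by push_cast; ring
      have e2 : ((q:ℤ):ℝ) * a + ((-1:ℤ):ℝ) * b + a = -(b - ((q:ℝ) + 1) * a) := by push_cast; ring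
      rw [e2, e1, NF_neg hneg, NF_neg hneg]; omega
  have hout : ∀ w, w ∉ D.image pt → NF F l w = NF F l (w + a) := by
    intro w hw
    have := hq (insert w (D.image pt))
    rw [Finset.sum_insert hw] at this
    have h6 : (4:ℤ) ≤ ∑ w ∈ D.image pt, (NF F l w - NF F l (w + a)) ^ 2 := by
      have := Finset.card_nsmul_le_sum (D.image pt) (fun w => (NF F l w - NF F l (w + a)) ^ 2) 1 hDd
      rw [Finset.card_image_of_injective _ hpt, hDc] at this
      simpa using this
    have h7 : (NF F l w - NF F l (w + a)) ^ 2 = 0 := by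
      have : 0 ≤ (NF F l w - NF F l (w + a)) ^ 2 := by positivity
      omega
    have := pow_eq_zero_iff (two_ne_zero) |>.1 h7
    omega
  have hstep : ∀ j : ℤ, j ≠ p → j ≠ -q - 1 → NF F l (b + j * a) = NF F l (b + (j + 1 : ℤ) * a) := by
    intro j hj1 hj2
    rw [hout (b + j * a)]
    · congr 1; push_cast; ring
    · intro hm
      obtain ⟨z, hz, he⟩ := Finset.mem_image.1 hm
      have : pt z = pt (j, 1) := by rw [he]; simp only [pt]; push_cast; ring
      have := hpt this
      subst this
      simp only [D, Finset.mem_insert, Finset.mem_singleton, Prod.mk.injEq] at hz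
      omega
  have hup : ∀ i : ℕ, i ≤ p → NF F l (b + (i : ℤ) * a) = 1 := by
    intro i
    induction i with
    | zero => intro _; simpa using hb1
    | succ i ih =>
      intro hi
      rw [← ih (by omega), hstep i (by omega) (by omega)]
      push_cast; rfl
  have hdn : ∀ i : ℕ, i ≤ q → NF F l (b + (-(i : ℤ) : ℤ) * a) = 1 := by
    intro i
    induction i with
    | zero => intro _; simpa using hb1
    | succ i ih =>
      intro hi
      rw [hstep _ (by omega) (by omega)]
      have e : (-((i + 1 : ℕ) : ℤ) + 1 : ℤ) = -(i : ℤ) := by push_cast; ring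
      rw [e]
      exact ih (by omega)
  have hone : ∀ j : ℤ, -(q:ℤ) ≤ j → j ≤ p → NF F l (b + j * a) = 1 := by
    intro j hj1 hj2
    rcases le_total 0 j with hj | hj
    · have := hup j.toNat (by omega)
      rwa [Int.toNat_of_nonneg hj] at this
    · have := hdn (-j).toNat (by omega)
      rwa [Int.toNat_of_nonneg (a := -j) (by omega), neg_neg] at this
  let W : Finset ℝ := (Finset.Icc (-(q:ℤ)) p).image (fun j : ℤ => b + j * a) ∪
    (Finset.Icc (-(q:ℤ)) p).image (fun j : ℤ => -(b + j * a))
  have hW1 : ∀ w ∈ W, NF F l w = 1 := by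
    intro w hw
    rcases Finset.mem_union.1 hw with hw | hw
    · obtain ⟨j, hj, rfl⟩ := Finset.mem_image.1 hw
      rw [Finset.mem_Icc] at hj
      exact hone j hj.1 hj.2
    · obtain ⟨j, hj, rfl⟩ := Finset.mem_image.1 hw
      rw [Finset.mem_Icc] at hj
      rw [NF_neg hneg]
      exact hone j hj.1 hj.2
  have hWc : W.card ≤ 6 := by
    refine (Finset.card_union_le _ _).trans ?_
    have i1 := Finset.card_image_le (s := Finset.Icc (-(q:ℤ)) p) (f := fun j : ℤ => b + j * a)
    have i2 := Finset.card_image_le (s := Finset.Icc (-(q:ℤ)) p) (f := fun j : ℤ => -(b + j * a))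
    rw [Int.card_Icc] at i1 i2
    omega
  have hall : ∀ f ∈ F, l f ∈ W := by
    intro f hf
    by_contra hfW
    have hfN : 0 < NF F l (l f) := by
      unfold NF
      have : 0 < (F.filter (fun g => l g = l f)).card :=
        Finset.card_pos.2 ⟨f, Finset.mem_filter.2 ⟨hf, rfl⟩⟩
      exact_mod_cast this
    obtain ⟨r, hr1, hr2⟩ := exists_top (F := F) (l := l) (l f) a ha hfN
    have hm : l f + r * a ∈ D.image pt := by
      by_contra hm
      have := hout _ hm
      have h8 := hr1 r le_rfl
      have e : l f + r * a + a = l f + (r + 1 : ℕ) * a := by push_cast; ring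
      rw [e, hr2] at this
      omega
    obtain ⟨z, hz, he⟩ := Finset.mem_image.1 hm
    have h8 := hr1 r le_rfl
    rw [← he] at h8
    simp only [D, Finset.mem_insert, Finset.mem_singleton] at hz
    rcases hz with rfl | rfl | rfl | rfl <;> simp only [pt] at he h8
    · by_cases hrr : r ≤ p + q
      · apply hfW
        apply Finset.mem_union_left
        rw [Finset.mem_image]
        refine ⟨p - r, Finset.mem_Icc.2 ⟨by omega, by omega⟩, ?_⟩
        push_cast at he ⊢
        linarith
      · have := hr1 (r - (p + q + 1)) (by omega)
        have e : l f + ((r - (p + q + 1) : ℕ) : ℝ) * a = b - ((q:ℝ) + 1) * a := by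
          rw [Nat.cast_sub (by omega)]
          push_cast at he ⊢
          linarith
        rw [e, z2] at this
        omega
    · have e1 : ((-(q:ℤ) - 1 : ℤ):ℝ) * a + ((1:ℤ):ℝ) * b = b - ((q:ℝ) + 1) * a := by push_cast; ring
      rw [e1, z2] at h8
      omega
    · have e1 : ((-(p:ℤ) - 1 : ℤ):ℝ) * a + ((-1:ℤ):ℝ) * b = -(b + ((p:ℝ) + 1) * a) := by push_cast; ring
      rw [e1, NF_neg hneg, z1] at h8
      omega
    · by_cases hrr : r ≤ p + q
      · apply hfW
        apply Finset.mem_union_right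
        rw [Finset.mem_image]
        refine ⟨r - q, Finset.mem_Icc.2 ⟨by omega, by omega⟩, ?_⟩
        push_cast at he ⊢
        linarith
      · have := hr1 (r - (p + q + 1)) (by omega)
        have e : l f + ((r - (p + q + 1) : ℕ) : ℝ) * a = -(b + ((p:ℝ) + 1) * a) := by
          rw [Nat.cast_sub (by omega)]
          push_cast at he ⊢
          linarith
        rw [e, NF_neg hneg, z1] at this
        omega
  have hs := sum_fib (F := F) (l := l) W hall (fun _ => 1)
  rw [Finset.sum_congr rfl (g := fun _ => (1:ℤ)) (s₂ := W) (fun w hw => by rw [hW1 w hw]; rfl)] at hs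
  simp only [Finset.sum_const, nsmul_eq_mul, mul_one] at hs
  omega

variable {B : E →ₗ[ℝ] E →ₗ[ℝ] ℝ}

/-- an orthogonal frame -/
structure Frame (B : E →ₗ[ℝ] E →ₗ[ℝ] ℝ) (F : Finset E) : Prop where
  neg : ∀ f ∈ F, -f ∈ F
  two : ∀ f ∈ F, B f f = 2
  orth : ∀ f ∈ F, ∀ g ∈ F, g = f ∨ g = -f ∨ B f g = 0

lemma Frame.ne_neg (hF : Frame B F) : ∀ f ∈ F, f ≠ -f := by
  intro f hf h
  have h2 := hF.two f hf
  have : f = 0 := by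
    have : (2:ℝ) • f = 0 := by rw [two_smul]; nth_rewrite 1 [h]; simp
    simpa using this
  rw [this] at h2; simp at h2

lemma Frame.card_le (hF : Frame B F) : F.card ≤ 2 * finrank ℝ (span ℝ (F : Set E)) := by
  obtain ⟨b, hb, hs, hl⟩ := exists_linearIndependent ℝ (F : Set E)
  have hfin : b.Finite := F.finite_toSet.subset hb
  have := hfin.fintype
  have hcard : finrank ℝ (span ℝ (F : Set E)) = b.toFinset.card := by
    rw [← hs]; exact finrank_span_set_eq_card hl
  have hsub : F ⊆ b.toFinset ∪ b.toFinset.image (fun x => -x) := by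
    intro f hf
    by_contra hn
    simp only [Finset.mem_union, Finset.mem_image, Set.mem_toFinset, not_or, not_exists,
      not_and] at hn
    have horth : span ℝ b ≤ LinearMap.ker (B f) := by
      apply span_le.2
      intro x hx
      rcases hF.orth f hf x (hb hx) with h | h | h
      · exact (hn.1 (h ▸ hx)).elim
      · exact (hn.2 x hx (by rw [h, neg_neg])).elim
      · simpa using h
    have : f ∈ span ℝ b := by rw [hs]; exact subset_span hf
    have := horth this
    rw [LinearMap.mem_ker, hF.two f hf] at this
    norm_num at this
  calc F.card ≤ _ := Finset.card_le_card hsub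
    _ ≤ _ := Finset.card_union_le _ _
    _ ≤ b.toFinset.card + b.toFinset.card := by exact Nat.add_le_add_left Finset.card_image_le _
    _ = _ := by rw [hcard]; ring

/-- pairs versus long vectors -/
lemma Frame.LP_eq (hF : Frame B F) (X : Finset E)
    (hX : ∀ x, x ∈ X ↔ ∃ f ∈ F, ∃ g ∈ F, g ≠ f ∧ g ≠ -f ∧ x = f - g) (v : ℝ) :
    LP F l v = 2 * ((X.filter (fun x => l x = v)).card : ℤ) := by
  unfold LP
  have : ((F ×ˢ F).filter (fun p => p.1 ≠ p.2 ∧ p.1 ≠ -p.2 ∧ l p.1 - l p.2 = v)).card =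
      ∑ x ∈ X.filter (fun x => l x = v), 2 := by
    rw [Finset.card_eq_sum_card_fiberwise (f := fun p : E × E => p.1 - p.2)
      (t := X.filter (fun x => l x = v))]
    · apply Finset.sum_congr rfl
      intro x hx
      rw [Finset.mem_filter] at hx
      obtain ⟨f, hf, g, hg, h1, h2, rfl⟩ := (hX x).1 hx.1
      have hlv := hx.2
      rw [map_sub] at hlv
      have : Finset.filter (fun p : E × E => p.1 - p.2 = f - g)
          ((F ×ˢ F).filter (fun p => p.1 ≠ p.2 ∧ p.1 ≠ -p.2 ∧ l p.1 - l p.2 = v)) =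
          {(f, g), (-g, -f)} := by
        ext ⟨x, y⟩
        simp only [Finset.mem_filter, Finset.mem_product, Finset.mem_insert, Finset.mem_singleton,
          Prod.mk.injEq]
        constructor
        · rintro ⟨⟨⟨hx, hy⟩, n1, n2, -⟩, he⟩
          have ofg : B f g = 0 := by
            rcases hF.orth f hf g hg with h | h | h
            · exact (h1 h).elim
            · exact (h2 h).elim
            · exact h
          have oxy : B x y = 0 := by
            rcases hF.orth x hx y hy with h | h | h
            · exact (n1 h.symm).elim
            · exact (n2 (by rw [h, neg_neg])).elim
            · exact h
          have hex : B x (x - y) = B x (f - g) := by rw [he]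
          rw [map_sub, map_sub, hF.two x hx, oxy] at hex
          have key : x = f ∨ x = -g := by
            rcases hF.orth f hf x hx with h | h | h
            · exact Or.inl h
            · exfalso
              rw [h] at hex
              simp only [map_neg, LinearMap.neg_apply, hF.two f hf, ofg] at hex
              norm_num at hex
            · rcases hF.orth g hg x hx with h' | h' | h'
              · exfalso
                rcases hF.orth x hx f hf with k | k | k
                · exact h1 (by rw [← h', k])
                · exact h2 (by rw [← h', k, neg_neg])
                · rw [k, h', hF.two g hg] at hex; norm_num at hex
              · exact Or.inr h'
              · exfalso
                have k1 : B x f = 0 := by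
                  rcases hF.orth x hx f hf with k | k | k
                  · rw [k, hF.two x hx] at h; norm_num at h
                  · rw [k, map_neg, LinearMap.neg_apply, hF.two x hx] at h; norm_num at h
                  · exact k
                have k2 : B x g = 0 := by
                  rcases hF.orth x hx g hg with k | k | k
                  · rw [k, hF.two x hx] at h'; norm_num at h'
                  · rw [k, map_neg, LinearMap.neg_apply, hF.two x hx] at h'; norm_num at h'
                  · exact k
                rw [k1, k2] at hex; norm_num at hex
          rcases key with rfl | rfl
          · left; refine ⟨rfl, ?_⟩
            simpa using he
          · right; refine ⟨rfl, ?_⟩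
            have : y = -g - (-g - y) := by abel
            rw [this, he]; abel
        · rintro (⟨rfl, rfl⟩ | ⟨rfl, rfl⟩)
          · exact ⟨⟨⟨hf, hg⟩, fun h => h1 h.symm, fun h => h2 (by rw [h, neg_neg]), hlv⟩, rfl⟩
          · refine ⟨⟨⟨hF.neg _ hg, hF.neg _ hf⟩, fun h => h1 (neg_injective h), fun h => h2 ?_, ?_⟩, by abel⟩
            · rw [neg_neg] at h; rw [← h, neg_neg]
            · rw [map_neg, map_neg]; linarith
      rw [this, Finset.card_pair]
      intro h
      have h' : f = -g := (Prod.ext_iff.1 h).1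
      exact h2 (by rw [h', neg_neg])
    · rintro ⟨x, y⟩ hxy
      simp only [Finset.coe_filter, Finset.mem_product, Set.mem_ofPred_eq] at hxy
      rw [Finset.mem_coe, Finset.mem_filter]
      refine ⟨(hX _).2 ⟨x, hxy.1.1, y, hxy.1.2, fun h => hxy.2.1 h.symm, fun h => hxy.2.2.1 (by rw [h, neg_neg]), rfl⟩, ?_⟩
      rw [map_sub]; exact hxy.2.2.2
  rw [this, Finset.sum_const, smul_eq_mul]
  push_cast
  ring

end FrameConcl

end FileP3e

section FileP3f
open Module Submodule

section TwoLen
variable {E : Type*} [AddCommGroup E] [Module ℝ E]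

/-- normalised irreducible system with squared lengths two and four -/
structure T2 (B : E →ₗ[ℝ] E →ₗ[ℝ] ℝ) (Φ : Finset E) : Prop where
  rs : RS B Φ
  irr : Irr B Φ
  len : ∀ α ∈ Φ, B α α = 2 ∨ B α α = 4
  exs : ∃ α ∈ Φ, B α α = 2
  exl : ∃ α ∈ Φ, B α α = 4

/-- number of roots of given length and value -/
def cs (B : E →ₗ[ℝ] E →ₗ[ℝ] ℝ) (Φ : Finset E) (n : ℝ) (l : E →ₗ[ℝ] ℝ) (v : ℝ) : ℤ :=
  ((Φ.filter (fun α => B α α = n ∧ l α = v)).card : ℤ)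

/-- the frame of a short root -/
def FR (B : E →ₗ[ℝ] E →ₗ[ℝ] ℝ) (Φ : Finset E) (e : E) : Finset E :=
  Φ.filter (fun f => B f f = 2 ∧ (f = e ∨ f = -e ∨ (B e f = 0 ∧ e - f ∈ Φ)))

variable {B : E →ₗ[ℝ] E →ₗ[ℝ] ℝ} {Φ : Finset E}

lemma T2.refl_s (t : T2 B Φ) {s β : E} (hs : s ∈ Φ) (h2 : B s s = 2) (hb : β ∈ Φ) :
    β - (B s β) • s ∈ Φ := by
  have := t.rs.refl s hs β hb
  rw [h2] at this
  convert this using 3; ring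

lemma T2.refl_l (t : T2 B Φ) {s β : E} (hs : s ∈ Φ) (h2 : B s s = 4) (hb : β ∈ Φ) :
    β - (B s β / 2) • s ∈ Φ := by
  have := t.rs.refl s hs β hb
  rw [h2] at this
  convert this using 3; ring

lemma int_sq_lt_two {z : ℤ} (h : z ^ 2 < 4) : z = 0 ∨ z = 1 ∨ z = -1 := by
  have h1 : z < 2 := by nlinarith
  have h2 : -2 < z := by nlinarith
  omega

lemma T2.val_ss (t : T2 B Φ) {s β : E} (hs : s ∈ Φ) (h2 : B s s = 2) (hb : β ∈ Φ)
    (hb2 : B β β = 2) : β = s ∨ β = -s ∨ B s β = 0 ∨ B s β = 1 ∨ B s β = -1 := by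
  by_cases h1 : β = s
  · exact Or.inl h1
  by_cases h3 : β = -s
  · exact Or.inr (Or.inl h3)
  have h4 := t.rs.cs_lt hs hb h1 h3
  obtain ⟨z, hz⟩ := t.rs.int s hs β hb
  rw [h2] at hz h4
  rw [hb2] at h4
  have hz' : B s β = z := by linarith
  rw [hz'] at h4
  have : z ^ 2 < 4 := by
    have : ((z ^ 2 : ℤ) : ℝ) < ((4 : ℤ) : ℝ) := by push_cast; linarith
    exact_mod_cast this
  rw [hz']
  rcases int_sq_lt_two this with h | h | h <;> simp [h]

lemma T2.val_ll (t : T2 B Φ) {s β : E} (hs : s ∈ Φ) (h2 : B s s = 4) (hb : β ∈ Φ)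
    (hb2 : B β β = 4) : β = s ∨ β = -s ∨ B s β = 0 ∨ B s β = 2 ∨ B s β = -2 := by
  by_cases h1 : β = s
  · exact Or.inl h1
  by_cases h3 : β = -s
  · exact Or.inr (Or.inl h3)
  have h4 := t.rs.cs_lt hs hb h1 h3
  obtain ⟨z, hz⟩ := t.rs.int s hs β hb
  rw [h2] at hz h4
  rw [hb2] at h4
  have hz' : B s β = 2 * z := by linarith
  rw [hz'] at h4
  have : z ^ 2 < 4 := by
    have : ((z ^ 2 : ℤ) : ℝ) < ((4 : ℤ) : ℝ) := by push_cast; linarith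
    exact_mod_cast this
  rw [hz']
  rcases int_sq_lt_two this with h | h | h <;> simp [h]

lemma T2.val_ls (t : T2 B Φ) {s β : E} (hs : s ∈ Φ) (h2 : B s s = 4) (hb : β ∈ Φ)
    (hb2 : B β β = 2) : B s β = 0 ∨ B s β = 2 ∨ B s β = -2 := by
  have h1 : β ≠ s := by rintro rfl; linarith
  have h3 : β ≠ -s := by rintro rfl; simp at hb2; linarith
  have h4 := t.rs.cs_lt hs hb h1 h3
  obtain ⟨z, hz⟩ := t.rs.int s hs β hb
  rw [h2] at hz h4
  rw [hb2] at h4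
  have hz' : B s β = 2 * z := by linarith
  rw [hz'] at h4
  have : z ^ 2 < 4 := by
    have : ((z ^ 2 : ℤ) : ℝ) < ((4 : ℤ) : ℝ) := by push_cast; linarith
    exact_mod_cast this
  rw [hz']
  rcases int_sq_lt_two this with h | h | h <;> simp [h]

lemma T2.norm_sub (t : T2 B Φ) (e f : E) : B (e - f) (e - f) = B e e - 2 * B e f + B f f := by
  simp only [map_sub, LinearMap.sub_apply, t.rs.symm f e]; ring

lemma mem_FR {e f : E} : f ∈ FR B Φ e ↔ f ∈ Φ ∧ B f f = 2 ∧
    (f = e ∨ f = -e ∨ (B e f = 0 ∧ e - f ∈ Φ)) := by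
  unfold FR; rw [Finset.mem_filter]

lemma T2.FR_self {e : E} (he : e ∈ Φ) (h2 : B e e = 2) : e ∈ FR B Φ e :=
  mem_FR.2 ⟨he, h2, Or.inl rfl⟩

lemma T2.FR_neg (t : T2 B Φ) {e f : E} (hf : f ∈ FR B Φ e) : -f ∈ FR B Φ e := by
  obtain ⟨h1, h2, h3⟩ := mem_FR.1 hf
  refine mem_FR.2 ⟨t.rs.neg_mem h1, by simpa using h2, ?_⟩
  rcases h3 with rfl | rfl | ⟨h3, h4⟩
  · exact Or.inr (Or.inl rfl)
  · exact Or.inl (neg_neg _)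
  · refine Or.inr (Or.inr ⟨by rw [map_neg, h3, neg_zero], ?_⟩)
    have := t.refl_s h1 h2 h4
    rw [map_sub, t.rs.symm f e, h3, h2] at this
    convert this using 1
    module

/-- elements of a frame are orthogonal and their differences are roots -/
lemma T2.FR_pair (t : T2 B Φ) {e f g : E} (he : e ∈ Φ) (he2 : B e e = 2) (hf : f ∈ FR B Φ e)
    (hg : g ∈ FR B Φ e) : g = f ∨ g = -f ∨ (B f g = 0 ∧ f - g ∈ Φ) := by
  obtain ⟨f1, f2, f3⟩ := mem_FR.1 hf
  obtain ⟨g1, g2, g3⟩ := mem_FR.1 hg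
  rcases f3 with rfl | rfl | ⟨f3, f4⟩
  · exact g3
  · obtain ⟨_, _, n3⟩ := mem_FR.1 (t.FR_neg hg)
    rcases n3 with h | h | ⟨h, h'⟩
    · exact Or.inl (by rw [← h, neg_neg])
    · exact Or.inr (Or.inl (by rw [neg_neg, neg_injective h]))
    · refine Or.inr (Or.inr ⟨by simpa using h, ?_⟩)
      have := t.rs.neg_mem h'
      convert this using 1; abel
  · rcases g3 with rfl | rfl | ⟨g3, g4⟩
    · refine Or.inr (Or.inr ⟨by rw [t.rs.symm]; exact f3, ?_⟩)
      have := t.rs.neg_mem f4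
      convert this using 1; abel
    · refine Or.inr (Or.inr ⟨by rw [t.rs.symm]; simpa using f3, ?_⟩)
      obtain ⟨_, _, n3⟩ := mem_FR.1 (t.FR_neg hf)
      rcases n3 with h | h | ⟨h, h'⟩
      · exfalso
        have : f = -e := by rw [← h, neg_neg]
        rw [this, map_neg, he2] at f3; norm_num at f3
      · exfalso
        rw [neg_injective h, he2] at f3; norm_num at f3
      · convert h' using 1; abel
    · by_cases h1 : g = f
      · exact Or.inl h1
      by_cases h3 : g = -f
      · exact Or.inr (Or.inl h3)
      right; right
      have n1 : B (e - f) (e - f) = 4 := by rw [t.norm_sub, he2, f3, f2]; norm_num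
      have hv : B (e - f) (e - g) = 2 + B f g := by
        simp only [map_sub, LinearMap.sub_apply, he2, g3, t.rs.symm f e, f3]; ring
      have h0 : B f g = 0 := by
        obtain ⟨z, hz⟩ := t.rs.int _ f4 _ g4
        rw [n1, hv] at hz
        rcases t.val_ss f1 f2 g1 g2 with h | h | h | h | h
        · exact (h1 h).elim
        · exact (h3 h).elim
        · exact h
        · exfalso
          rw [h] at hz
          have : (3:ℝ) = 2 * z := by linarith
          have : (3:ℤ) = 2 * z := by exact_mod_cast this
          omega
        · exfalso
          rw [h] at hz
          have : (1:ℝ) = 2 * z := by linarith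
          have : (1:ℤ) = 2 * z := by exact_mod_cast this
          omega
      refine ⟨h0, ?_⟩
      have := t.refl_l f4 n1 g4
      rw [hv, h0] at this
      convert this using 1
      module

lemma T2.FR_trans (t : T2 B Φ) {e f g : E} (he : e ∈ Φ) (he2 : B e e = 2) (hf : f ∈ FR B Φ e)
    (hg : g ∈ FR B Φ e) : g ∈ FR B Φ f :=
  mem_FR.2 ⟨(mem_FR.1 hg).1, (mem_FR.1 hg).2.1, t.FR_pair he he2 hf hg⟩

lemma T2.FR_symm (t : T2 B Φ) {e f : E} (he : e ∈ Φ) (he2 : B e e = 2) (hf : f ∈ FR B Φ e) :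
    e ∈ FR B Φ f := t.FR_trans he he2 hf (T2.FR_self he he2)

lemma T2.FR_eq (t : T2 B Φ) {e f : E} (he : e ∈ Φ) (he2 : B e e = 2) (hf : f ∈ FR B Φ e) :
    FR B Φ f = FR B Φ e := by
  obtain ⟨f1, f2, _⟩ := mem_FR.1 hf
  ext g
  exact ⟨fun hg => t.FR_trans f1 f2 (t.FR_symm he he2 hf) hg, fun hg => t.FR_trans he he2 hf hg⟩

lemma T2.frame (t : T2 B Φ) {e : E} (he : e ∈ Φ) (he2 : B e e = 2) : Frame B (FR B Φ e) := by
  refine ⟨fun f hf => t.FR_neg hf, fun f hf => (mem_FR.1 hf).2.1, fun f hf g hg => ?_⟩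
  rcases t.FR_pair he he2 hf hg with h | h | h
  · exact Or.inl h
  · exact Or.inr (Or.inl h)
  · exact Or.inr (Or.inr h.1)

/-- being a difference of two frame members -/
def PR (F : Finset E) (x : E) : Prop := ∃ f ∈ F, ∃ g ∈ F, g ≠ f ∧ g ≠ -f ∧ x = f - g

lemma T2.long_self (t : T2 B Φ) {e l : E} (he : e ∈ Φ) (he2 : B e e = 2) (hl : l ∈ Φ)
    (hl4 : B l l = 4) (h0 : B l e ≠ 0) : PR (FR B Φ e) l := by
  rcases t.val_ls hl hl4 he he2 with h | h | h
  · exact (h0 h).elim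
  · have h1 := t.refl_l hl hl4 he
    rw [h] at h1
    have e1 : e - ((2:ℝ)/2) • l = e - l := by norm_num
    rw [e1] at h1
    have h2 : B (e - l) (e - l) = 2 := by rw [t.norm_sub, t.rs.symm e l, h, he2, hl4]; norm_num
    have h3 : B e (e - l) = 0 := by rw [map_sub, he2, t.rs.symm e l, h]; norm_num
    refine ⟨e, T2.FR_self he he2, e - l, mem_FR.2 ⟨h1, h2, Or.inr (Or.inr ⟨h3, ?_⟩)⟩, ?_, ?_, by abel⟩
    · convert hl using 1; abel
    · intro h4; rw [h4, he2] at h3; norm_num at h3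
    · intro h4; rw [h4, map_neg, he2] at h3; norm_num at h3
  · have h1 := t.refl_l hl hl4 he
    rw [h] at h1
    have e1 : e - ((-2:ℝ)/2) • l = e + l := by norm_num
    rw [e1] at h1
    have h2 : B (e + l) (e + l) = 2 := by
      have := t.norm_sub e (-l)
      rw [sub_neg_eq_add] at this
      rw [this]; simp only [map_neg, LinearMap.neg_apply, t.rs.symm e l, h, he2, hl4]; norm_num
    have h3 : B e (e + l) = 0 := by rw [map_add, he2, t.rs.symm e l, h]; norm_num
    refine ⟨e + l, mem_FR.2 ⟨h1, h2, Or.inr (Or.inr ⟨h3, ?_⟩)⟩, e, T2.FR_self he he2, ?_, ?_, by abel⟩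
    · have := t.rs.neg_mem hl
      convert this using 1; abel
    · intro h4; rw [← h4, he2] at h3; norm_num at h3
    · intro h4
      have h5 : e + l = -e := by rw [h4, neg_neg, ← h4]
      rw [h5, map_neg, he2] at h3; norm_num at h3

lemma T2.long_frame (t : T2 B Φ) {e f l : E} (he : e ∈ Φ) (he2 : B e e = 2)
    (hf : f ∈ FR B Φ e) (hl : l ∈ Φ)
    (hl4 : B l l = 4) (h0 : B l f ≠ 0) : PR (FR B Φ e) l := by
  rw [← t.FR_eq he he2 hf]
  exact t.long_self (mem_FR.1 hf).1 (mem_FR.1 hf).2.1 hl hl4 h0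

lemma PR.mem_span {F : Finset E} {x : E} (h : PR F x) : x ∈ span ℝ (F : Set E) := by
  obtain ⟨f, hf, g, hg, -, -, rfl⟩ := h
  exact sub_mem (subset_span hf) (subset_span hg)

lemma T2.PR_root (t : T2 B Φ) {e x : E} (he : e ∈ Φ) (he2 : B e e = 2)
    (h : PR (FR B Φ e) x) : x ∈ Φ ∧ B x x = 4 := by
  obtain ⟨f, hf, g, hg, h1, h2, rfl⟩ := h
  rcases t.FR_pair he he2 hf hg with h | h | h
  · exact (h1 h).elim
  · exact (h2 h).elim
  · refine ⟨h.2, ?_⟩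
    rw [t.norm_sub, (mem_FR.1 hf).2.1, (mem_FR.1 hg).2.1, h.1]; norm_num

/-- if the frame captures everything then pairs count long roots -/
lemma T2.LP_cs (t : T2 B Φ) {e : E} (he : e ∈ Φ) (he2 : B e e = 2)
    (hall : ∀ x ∈ Φ, B x x = 4 → PR (FR B Φ e) x) (l : E →ₗ[ℝ] ℝ) (v : ℝ) :
    LP (FR B Φ e) l v = 2 * cs B Φ 4 l v := by
  rw [(t.frame he he2).LP_eq (Φ.filter (fun x => B x x = 4)), cs, Finset.filter_filter]
  intro x
  rw [Finset.mem_filter]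
  exact ⟨fun h => hall x h.1 h.2, fun h => t.PR_root he he2 h⟩

lemma T2.FR_sub {e : E} : FR B Φ e ⊆ Φ := Finset.filter_subset _ _

lemma finrank_mono_finset {F G : Finset E} (h : F ⊆ G) :
    finrank ℝ (span ℝ (F : Set E)) ≤ finrank ℝ (span ℝ (G : Set E)) :=
  Submodule.finrank_mono (span_mono (by exact_mod_cast h))

lemma T2.case_B (t : T2 B Φ) {a b : ℝ} (hab : ZInd a b)
    (horth : ∀ s ∈ Φ, ∀ s' ∈ Φ, B s s = 2 → B s' s' = 2 → s' = s ∨ s' = -s ∨ B s s' = 0)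
    (l : E →ₗ[ℝ] ℝ) :
    cs B Φ 2 l b + cs B Φ 4 l a ≤ cs B Φ 2 l 0 + cs B Φ 4 l 0 +
      finrank ℝ (span ℝ (Φ : Set E)) := by
  obtain ⟨e, he, he2⟩ := t.exs
  have hFr := t.frame he he2
  have hsh : ∀ β ∈ Φ, B β β = 2 → (∃ f ∈ FR B Φ e, B f β ≠ 0) → β ∈ FR B Φ e := by
    rintro β hb h2 ⟨f, hf, h0⟩
    rcases horth f (mem_FR.1 hf).1 β hb (mem_FR.1 hf).2.1 h2 with h | h | h
    · rw [h]; exact hf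
    · rw [h]; exact t.FR_neg hf
    · exact (h0 h).elim
  have hlo : ∀ β ∈ Φ, B β β = 4 → (∃ f ∈ FR B Φ e, B f β ≠ 0) → PR (FR B Φ e) β := by
    rintro β hb h4 ⟨f, hf, h0⟩
    exact t.long_frame he he2 hf hb h4 (by rwa [t.rs.symm])
  have hall := span_principle (F := FR B Φ e) t.irr t.rs.symm
    ⟨e, T2.FR_self he he2, he, by rw [he2]; norm_num⟩ (by
      intro β hb hex
      rcases t.len β hb with h | h
      · exact subset_span (hsh β hb h hex)
      · exact (hlo β hb h hex).mem_span)
  have hLP := t.LP_cs he he2 (fun x hx h4 => hlo x hx h4 (hall x hx)) l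
  have hNF : ∀ v, NF (FR B Φ e) l v = cs B Φ 2 l v := by
    intro v
    unfold NF cs
    congr 2
    ext x
    rw [Finset.mem_filter, Finset.mem_filter]
    exact ⟨fun h => ⟨(mem_FR.1 h.1).1, (mem_FR.1 h.1).2.1, h.2⟩,
      fun h => ⟨hsh x h.1 h.2.1 (hall x h.1), h.2.2⟩⟩
  have h1 := frame_ineq (l := l) hFr.neg hFr.ne_neg hab
  rw [hLP, hLP, hNF, hNF] at h1
  have h2 := hFr.card_le
  have h3 := finrank_mono_finset (T2.FR_sub (B := B) (Φ := Φ) (e := e))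
  have h4 : 0 ≤ cs B Φ 2 l 0 := by unfold cs; positivity
  omega

end TwoLen

end FileP3f

section FileP3g
open Module Submodule

section TwoDual
variable {E : Type*} [AddCommGroup E] [Module ℝ E]

/-- rescaling factor for the dual system -/
def dc (B : E →ₗ[ℝ] E →ₗ[ℝ] ℝ) (α : E) : ℝ := if B α α = 2 then 1 else 1 / 2

/-- the dual system -/
def dual (B : E →ₗ[ℝ] E →ₗ[ℝ] ℝ) (Φ : Finset E) : Finset E := Φ.image (fun α => dc B α • α)

variable {B : E →ₗ[ℝ] E →ₗ[ℝ] ℝ} {Φ : Finset E}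

lemma dc_pos (α : E) : 0 < dc B α := by unfold dc; split_ifs <;> norm_num

lemma dc_short {α : E} (h : B α α = 2) : dc B α = 1 := by rw [dc, if_pos h]
lemma dc_long {α : E} (h : B α α = 4) : dc B α = 1 / 2 := by
  rw [dc, if_neg]; rw [h]; norm_num

lemma T2.dual_norm_s {α : E} (h : B α α = 2) :
    ((2:ℝ) • B) (dc B α • α) (dc B α • α) = 4 := by
  rw [dc_short h]; simp [h]; norm_num

lemma T2.dual_norm_l {α : E} (h : B α α = 4) :
    ((2:ℝ) • B) (dc B α • α) (dc B α • α) = 2 := by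
  rw [dc_long h]; simp [h]; norm_num

lemma T2.dual_inj (t : T2 B Φ) {α β : E} (ha : α ∈ Φ) (hb : β ∈ Φ)
    (h : dc B α • α = dc B β • β) : α = β := by
  have e : dc B α = dc B β := by
    have hn : ((2:ℝ) • B) (dc B α • α) (dc B α • α) = ((2:ℝ) • B) (dc B β • β) (dc B β • β) := by
      rw [h]
    rcases t.len α ha with h1 | h1 <;> rcases t.len β hb with h2 | h2
    · rw [dc_short h1, dc_short h2]
    · rw [T2.dual_norm_s h1, T2.dual_norm_l h2] at hn; norm_num at hn
    · rw [T2.dual_norm_l h1, T2.dual_norm_s h2] at hn; norm_num at hn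
    · rw [dc_long h1, dc_long h2]
  rw [e] at h
  exact smul_right_injective E (dc_pos β).ne' h

lemma dual_refl_eq (t : T2 B Φ) {α β : E} (ha : α ∈ Φ) :
    dc B β • β - (2 * ((2:ℝ) • B) (dc B α • α) (dc B β • β) /
      ((2:ℝ) • B) (dc B α • α) (dc B α • α)) • (dc B α • α) =
    dc B (β - (2 * B α β / B α α) • α) • (β - (2 * B α β / B α α) • α) := by
  have hn : dc B (β - (2 * B α β / B α α) • α) = dc B β := by
    unfold dc; rw [t.rs.norm_refl ha]
  rw [hn, smul_sub, smul_smul, smul_smul]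
  congr 2
  have h1 := (dc_pos (B := B) α).ne'
  have h2 := (t.rs.pos' ha).ne'
  simp only [map_smul, LinearMap.smul_apply, smul_eq_mul]
  field_simp

lemma T2.dual (t : T2 B Φ) : T2 ((2:ℝ) • B) (dual B Φ) := by
  have hmem : ∀ x, x ∈ GenRes.dual B Φ ↔ ∃ α ∈ Φ, dc B α • α = x := by
    intro x; unfold GenRes.dual; rw [Finset.mem_image]
  have hRS : RS ((2:ℝ) • B) (GenRes.dual B Φ) := by
    refine ⟨fun x y => by simp [t.rs.symm x y], fun x hx => by
      have := t.rs.pos x hx; simpa using this, ?_, ?_, ?_, ?_⟩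
    · intro h
      obtain ⟨α, ha, h1⟩ := (hmem _).1 h
      rcases smul_eq_zero.1 h1 with h2 | h2
      · exact (dc_pos α).ne' h2
      · exact t.rs.ne_zero ha h2
    · intro x hx y hy
      obtain ⟨α, ha, rfl⟩ := (hmem _).1 hx
      obtain ⟨β, hb, rfl⟩ := (hmem _).1 hy
      rw [dual_refl_eq t ha]
      exact (hmem _).2 ⟨_, t.rs.refl α ha β hb, rfl⟩
    · intro x hx y hy
      obtain ⟨α, ha, rfl⟩ := (hmem _).1 hx
      obtain ⟨β, hb, rfl⟩ := (hmem _).1 hy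
      rcases t.len α ha with h1 | h1 <;> rcases t.len β hb with h2 | h2
      · rw [T2.dual_norm_s h1, dc_short h1, dc_short h2]
        obtain ⟨z, hz⟩ := t.rs.int α ha β hb
        refine ⟨z, ?_⟩
        rw [← hz, h1]; simp; ring
      · rw [T2.dual_norm_s h1, dc_short h1, dc_long h2]
        obtain ⟨z, hz⟩ := t.rs.int β hb α ha
        refine ⟨z, ?_⟩
        rw [← hz, h2, t.rs.symm β α]; simp
      · rw [T2.dual_norm_l h1, dc_long h1, dc_short h2]
        obtain ⟨z, hz⟩ := t.rs.int β hb α ha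
        refine ⟨z, ?_⟩
        rw [← hz, h2, t.rs.symm β α]; simp
      · rw [T2.dual_norm_l h1, dc_long h1, dc_long h2]
        obtain ⟨z, hz⟩ := t.rs.int α ha β hb
        refine ⟨z, ?_⟩
        rw [← hz, h1]; simp; ring
    · intro x hx c hc
      obtain ⟨α, ha, rfl⟩ := (hmem _).1 hx
      obtain ⟨β, hb, h1⟩ := (hmem _).1 hc
      have hβ : β = (c * dc B α / dc B β) • α := by
        have h2 := (dc_pos (B := B) β).ne'
        have : (dc B β)⁻¹ • dc B β • β = (dc B β)⁻¹ • c • dc B α • α := by rw [h1]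
        rw [smul_smul, inv_mul_cancel₀ h2, one_smul, smul_smul, smul_smul] at this
        refine this.trans ?_; congr 1; field_simp
      have h3 := t.rs.red α ha (c * dc B α / dc B β) (by rw [← hβ]; exact hb)
      have h2 := (dc_pos (B := B) α).ne'
      have hn : dc B β = dc B α := by
        rcases h3 with h3 | h3
        · rw [h3, one_smul] at hβ; rw [hβ]
        · rw [h3] at hβ
          rw [hβ]; unfold dc; simp
      rw [hn, mul_div_assoc, div_self h2, mul_one] at h3
      exact h3
  refine ⟨hRS, ?_, ?_, ?_, ?_⟩
  · intro X hX hne hcl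
    have : Φ.filter (fun α => dc B α • α ∈ X) = Φ := by
      apply t.irr _ (Finset.filter_subset _ _)
      · obtain ⟨x, hx⟩ := hne
        obtain ⟨α, ha, rfl⟩ := (hmem _).1 (hX hx)
        exact ⟨α, Finset.mem_filter.2 ⟨ha, hx⟩⟩
      · intro α ha β hb h0
        rw [Finset.mem_filter] at ha ⊢
        refine ⟨hb, hcl _ ha.2 _ ((hmem _).2 ⟨β, hb, rfl⟩) ?_⟩
        have h1 := (dc_pos (B := B) α).ne'
        have h2 := (dc_pos (B := B) β).ne'
        simp [h0, h1, h2]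
    apply Finset.Subset.antisymm hX
    intro x hx
    obtain ⟨α, ha, rfl⟩ := (hmem _).1 hx
    rw [← this, Finset.mem_filter] at ha
    exact ha.2
  · intro x hx
    obtain ⟨α, ha, rfl⟩ := (hmem _).1 hx
    rcases t.len α ha with h1 | h1
    · exact Or.inr (T2.dual_norm_s h1)
    · exact Or.inl (T2.dual_norm_l h1)
  · obtain ⟨α, ha, h1⟩ := t.exl
    exact ⟨_, (hmem _).2 ⟨α, ha, rfl⟩, T2.dual_norm_l h1⟩
  · obtain ⟨α, ha, h1⟩ := t.exs
    exact ⟨_, (hmem _).2 ⟨α, ha, rfl⟩, T2.dual_norm_s h1⟩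

lemma T2.dual_cs4 (t : T2 B Φ) (l : E →ₗ[ℝ] ℝ) (v : ℝ) :
    cs ((2:ℝ) • B) (GenRes.dual B Φ) 4 l v = cs B Φ 2 l v := by
  unfold cs
  congr 1
  symm
  apply Finset.card_bij (fun α _ => dc B α • α)
  · intro α ha
    rw [Finset.mem_filter] at ha ⊢
    refine ⟨Finset.mem_image_of_mem _ ha.1, T2.dual_norm_s ha.2.1, ?_⟩
    rw [dc_short ha.2.1, one_smul]; exact ha.2.2
  · intro α ha β hb h
    rw [Finset.mem_filter] at ha hb
    exact t.dual_inj ha.1 hb.1 h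
  · intro x hx
    rw [Finset.mem_filter] at hx
    obtain ⟨α, ha, rfl⟩ := Finset.mem_image.1 hx.1
    refine ⟨α, Finset.mem_filter.2 ⟨ha, ?_⟩, rfl⟩
    rcases t.len α ha with h1 | h1
    · have := hx.2.2
      rw [dc_short h1, one_smul] at this
      exact ⟨h1, this⟩
    · have := hx.2.1
      rw [T2.dual_norm_l h1] at this; norm_num at this

lemma T2.dual_cs2 (t : T2 B Φ) (l : E →ₗ[ℝ] ℝ) (v : ℝ) :
    cs ((2:ℝ) • B) (GenRes.dual B Φ) 2 l v = cs B Φ 4 l (2 * v) := by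
  unfold cs
  congr 1
  symm
  apply Finset.card_bij (fun α _ => dc B α • α)
  · intro α ha
    rw [Finset.mem_filter] at ha ⊢
    refine ⟨Finset.mem_image_of_mem _ ha.1, T2.dual_norm_l ha.2.1, ?_⟩
    rw [dc_long ha.2.1, map_smul, ha.2.2, smul_eq_mul]; ring
  · intro α ha β hb h
    rw [Finset.mem_filter] at ha hb
    exact t.dual_inj ha.1 hb.1 h
  · intro x hx
    rw [Finset.mem_filter] at hx
    obtain ⟨α, ha, rfl⟩ := Finset.mem_image.1 hx.1
    refine ⟨α, Finset.mem_filter.2 ⟨ha, ?_⟩, rfl⟩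
    rcases t.len α ha with h1 | h1
    · have := hx.2.1
      rw [T2.dual_norm_s h1] at this; norm_num at this
    · have := hx.2.2
      rw [dc_long h1, map_smul, smul_eq_mul] at this
      exact ⟨h1, by linarith⟩

lemma dual_span (Φ : Finset E) :
    span ℝ ((GenRes.dual B Φ : Finset E) : Set E) = span ℝ (Φ : Set E) := by
  apply le_antisymm
  · apply span_le.2
    intro x hx
    obtain ⟨α, ha, rfl⟩ := Finset.mem_image.1 (Finset.mem_coe.1 hx)
    exact smul_mem _ _ (subset_span ha)
  · apply span_le.2
    intro α ha
    have h1 : dc B α • α ∈ span ℝ ((GenRes.dual B Φ : Finset E) : Set E) :=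
      subset_span (Finset.mem_coe.2 (Finset.mem_image_of_mem _ ha))
    have h2 := smul_mem _ (dc B α)⁻¹ h1
    rwa [smul_smul, inv_mul_cancel₀ (dc_pos α).ne', one_smul] at h2

lemma ZInd.dual {a b : ℝ} (h : ZInd a b) : ZInd b (a / 2) := by
  intro m j e
  have := h j (2 * m) (by push_cast; linarith)
  omega

lemma T2.case_C (t : T2 B Φ) {a b : ℝ} (hab : ZInd a b)
    (horth : ∀ s ∈ Φ, ∀ s' ∈ Φ, B s s = 4 → B s' s' = 4 → s' = s ∨ s' = -s ∨ B s s' = 0)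
    (l : E →ₗ[ℝ] ℝ) :
    cs B Φ 2 l b + cs B Φ 4 l a ≤ cs B Φ 2 l 0 + cs B Φ 4 l 0 +
      finrank ℝ (span ℝ (Φ : Set E)) := by
  have := t.dual.case_B hab.dual (by
    intro x hx y hy h1 h2
    obtain ⟨α, ha, rfl⟩ := Finset.mem_image.1 hx
    obtain ⟨β, hb, rfl⟩ := Finset.mem_image.1 hy
    have ha4 : B α α = 4 := by
      rcases t.len α ha with h | h
      · rw [T2.dual_norm_s h] at h1; norm_num at h1
      · exact h
    have hb4 : B β β = 4 := by
      rcases t.len β hb with h | h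
      · rw [T2.dual_norm_s h] at h2; norm_num at h2
      · exact h
    rw [dc_long ha4, dc_long hb4]
    rcases horth α ha β hb ha4 hb4 with h | h | h
    · left; rw [h]
    · right; left; rw [h, smul_neg]
    · right; right; simp [h]) l
  rw [t.dual_cs2, t.dual_cs2, t.dual_cs4, t.dual_cs4, dual_span, mul_zero,
    mul_div_cancel₀ _ (two_ne_zero)] at this
  linarith

end TwoDual

end FileP3g

section FileP3h
open Module Submodule

section FFour
variable {E : Type*} [AddCommGroup E] [Module ℝ E]
variable {B : E →ₗ[ℝ] E →ₗ[ℝ] ℝ} {Φ : Finset E}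

lemma RS.bil_refl (h : RS B Φ) {α : E} (ha : α ∈ Φ) (x y : E) :
    B (x - (2 * B α x / B α α) • α) (y - (2 * B α y / B α α) • α) = B x y := by
  have := (h.pos' ha).ne'
  simp only [map_sub, LinearMap.sub_apply, map_smul, LinearMap.smul_apply, smul_eq_mul, h.symm x α]
  field_simp
  ring

lemma RS.nbr (h : RS B Φ) (hirr : Irr B Φ) (n m : ℝ)
    (hval : ∀ s ∈ Φ, ∀ β ∈ Φ, B s s = n → B β β = n →
      β = s ∨ β = -s ∨ B s β = 0 ∨ B s β = m ∨ B s β = -m)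
    (hex : ∃ s ∈ Φ, ∃ s' ∈ Φ, B s s = n ∧ B s' s' = n ∧ B s s' = m) :
    ∀ β ∈ Φ, B β β = n → ∃ γ ∈ Φ, B γ γ = n ∧ B β γ = m := by
  intro β hb hbn
  obtain ⟨s, hs, s', hs', h1, h2, h3⟩ := hex
  obtain ⟨γ, hg, ⟨hgn, δ, hd, hdn, hgd⟩, h0⟩ := conj_lemma h hirr
    (fun γ => B γ γ = n ∧ ∃ δ ∈ Φ, B δ δ = n ∧ B γ δ = m) (by
      rintro α ha x hx ⟨hxn, δ, hd, hdn, hxd⟩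
      exact ⟨by rw [h.norm_refl ha]; exact hxn, _, h.refl α ha δ hd,
        by rw [h.norm_refl ha]; exact hdn, by rw [h.bil_refl ha]; exact hxd⟩)
    hs hb ⟨h1, s', hs', h2, h3⟩
  rcases hval γ hg β hb hgn hbn with e | e | e | e | e
  · rw [e]; exact ⟨δ, hd, hdn, hgd⟩
  · rw [e]; exact ⟨-δ, h.neg_mem hd, by simpa using hdn, by simpa using hgd⟩
  · exact (h0 e).elim
  · exact ⟨γ, hg, hgn, by rw [h.symm]; exact e⟩
  · exact ⟨-γ, h.neg_mem hg, by simpa using hgn, by rw [map_neg, h.symm, e, neg_neg]⟩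

/-- the extra hypothesis of the exceptional case -/
structure Fh (B : E →ₗ[ℝ] E →ₗ[ℝ] ℝ) (Φ : Finset E) : Prop extends T2 B Φ where
  ns : ∃ s ∈ Φ, ∃ s' ∈ Φ, B s s = 2 ∧ B s' s' = 2 ∧ B s s' = 1
  nl : ∃ s ∈ Φ, ∃ s' ∈ Φ, B s s = 4 ∧ B s' s' = 4 ∧ B s s' = 2

lemma Fh.nbr_s (t : Fh B Φ) {β : E} (hb : β ∈ Φ) (h2 : B β β = 2) :
    ∃ γ ∈ Φ, B γ γ = 2 ∧ B β γ = 1 :=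
  t.rs.nbr t.irr 2 1 (fun _ hs _ hb h1 h2 => t.val_ss hs h1 hb h2) t.ns β hb h2

lemma Fh.nbr_l (t : Fh B Φ) {β : E} (hb : β ∈ Φ) (h2 : B β β = 4) :
    ∃ γ ∈ Φ, B γ γ = 4 ∧ B β γ = 2 :=
  t.rs.nbr t.irr 4 2 (fun _ hs _ hb h1 h2 => t.val_ll hs h1 hb h2) t.nl β hb h2

lemma T2.short_vals (t : T2 B Φ) {e β : E} (he : e ∈ Φ) (he2 : B e e = 2) (hb : β ∈ Φ)
    (hb2 : B β β = 2) (hn : β ∉ FR B Φ e) (h0 : B e β ≠ 0) :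
    ∀ h ∈ FR B Φ e, B h β = 1 ∨ B h β = -1 := by
  have hne : ∀ h ∈ FR B Φ e, B h β = 0 ∨ B h β = 1 ∨ B h β = -1 := by
    intro h hh
    rcases t.val_ss (mem_FR.1 hh).1 (mem_FR.1 hh).2.1 hb hb2 with e | e | e
    · exact (hn (e ▸ hh)).elim
    · exact (hn (e ▸ t.FR_neg hh)).elim
    · exact e
  have h1 : B e β = 1 ∨ B e β = -1 := by
    rcases hne e (T2.FR_self he he2) with h | h
    · exact (h0 h).elim
    · exact h
  intro h hh
  obtain ⟨m1, m2, m3⟩ := mem_FR.1 hh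
  rcases m3 with rfl | rfl | ⟨m3, m4⟩
  · exact h1
  · rw [map_neg, LinearMap.neg_apply]
    rcases h1 with h | h
    · right; rw [h]
    · left; rw [h, neg_neg]
  · have n4 : B (e - h) (e - h) = 4 := by rw [t.norm_sub, he2, m2, m3]; norm_num
    have hv := t.val_ls m4 n4 hb hb2
    rw [map_sub, LinearMap.sub_apply] at hv
    rcases hne h hh with k | k
    · exfalso
      rw [k] at hv
      rcases h1 with h1 | h1 <;> rw [h1] at hv <;> norm_num at hv
    · exact k

lemma half_eq (h : RS B Φ) {g : Fin 4 → E} (hg : ∀ i j, B (g i) (g j) = if i = j then 2 else 0)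
    {s : E} (hs : B s s = 2) (hv : ∀ i, B (g i) s = 1 ∨ B (g i) s = -1) :
    s = ∑ i, (B (g i) s / 2) • g i := by
  apply h.eq_of_sub
  set y := ∑ i, (B (g i) s / 2) • g i with hy
  have hsq : ∀ i, B (g i) s * B (g i) s = 1 := by
    intro i; rcases hv i with k | k <;> rw [k] <;> norm_num
  have h1 : B s y = 2 := by
    rw [hy, map_sum, Fin.sum_univ_four]
    simp only [map_smul, smul_eq_mul, h.symm s, LinearMap.smul_apply]
    linarith [hsq 0, hsq 1, hsq 2, hsq 3]
  have hyg : ∀ i, B (g i) y = B (g i) s := by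
    intro i
    rw [hy, map_sum]
    simp only [map_smul, smul_eq_mul, hg]
    simp
  have h2 : B y y = 2 := by
    have : ∀ z, B y z = ∑ i, (B (g i) s / 2) * B (g i) z := by
      intro z
      rw [hy, map_sum, LinearMap.sum_apply]
      simp only [map_smul, LinearMap.smul_apply, smul_eq_mul]
    rw [this]
    simp only [hyg]
    rw [Fin.sum_univ_four]
    linarith [hsq 0, hsq 1, hsq 2, hsq 3]
  simp only [map_sub, LinearMap.sub_apply, h.symm y s, h1, h2, hs]
  norm_num

/-- a frame contains four orthogonal vectors -/
lemma Fh.exists_four (t : Fh B Φ) {e : E} (he : e ∈ Φ) (he2 : B e e = 2) :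
    ∃ g : Fin 4 → E, (∀ i, g i ∈ FR B Φ e) ∧ (∀ i j, B (g i) (g j) = if i = j then 2 else 0) ∧
      ∀ h ∈ FR B Φ e, ∃ i, h = g i ∨ h = -g i := by
  have t' := t.toT2
  have hFr := t'.frame he he2
  have heF := T2.FR_self he he2
  -- a second vector
  obtain ⟨f, hf, hfe, hfe', hef4⟩ : ∃ f ∈ FR B Φ e, f ≠ e ∧ f ≠ -e ∧ B (e - f) (e - f) = 4 ∧ e - f ∈ Φ := by
    obtain ⟨l, hl, hl4⟩ := t.exl
    obtain ⟨γ, hg, hg4, hge⟩ := exists_nonorth_len t.rs t.irr hl he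
    rw [hl4] at hg4
    rcases t'.val_ls hg hg4 he he2 with k | k | k
    · exact (hge k).elim
    · have h1 := t'.refl_l hg hg4 he
      rw [k] at h1
      have e1 : e - ((2:ℝ)/2) • γ = e - γ := by norm_num
      rw [e1] at h1
      have h2 : B (e - γ) (e - γ) = 2 := by rw [t'.norm_sub, t.rs.symm e γ, k, he2, hg4]; norm_num
      have h3 : B e (e - γ) = 0 := by rw [map_sub, he2, t.rs.symm e γ, k]; norm_num
      have e2 : e - (e - γ) = γ := by abel
      refine ⟨e - γ, mem_FR.2 ⟨h1, h2, Or.inr (Or.inr ⟨h3, by rw [e2]; exact hg⟩)⟩, ?_, ?_, by rw [e2]; exact hg4, by rw [e2]; exact hg⟩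
      · intro h4; rw [h4, he2] at h3; norm_num at h3
      · intro h4; rw [h4, map_neg, he2] at h3; norm_num at h3
    · have h1 := t'.refl_l hg hg4 he
      rw [k] at h1
      have e1 : e - ((-2:ℝ)/2) • γ = e - (-γ) := by norm_num
      rw [e1] at h1
      have h2 : B (e - -γ) (e - -γ) = 2 := by
        rw [t'.norm_sub]; simp only [map_neg, LinearMap.neg_apply, t.rs.symm e γ, k, he2, hg4]; norm_num
      have h3 : B e (e - -γ) = 0 := by rw [map_sub, map_neg, he2, t.rs.symm e γ, k]; norm_num
      have e2 : e - (e - -γ) = -γ := by abel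
      refine ⟨e - -γ, mem_FR.2 ⟨h1, h2, Or.inr (Or.inr ⟨h3, by rw [e2]; exact t.rs.neg_mem hg⟩)⟩, ?_, ?_, by rw [e2]; simpa using hg4, by rw [e2]; exact t.rs.neg_mem hg⟩
      · intro h4; rw [h4, he2] at h3; norm_num at h3
      · intro h4; rw [h4, map_neg, he2] at h3; norm_num at h3
  obtain ⟨hef4, hefm⟩ := hef4
  have oef : B e f = 0 := by
    rcases hFr.orth e heF f hf with k | k | k
    · exact (hfe k).elim
    · exact (hfe' k).elim
    · exact k
  have hf2 := (mem_FR.1 hf).2.1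
  -- a third vector
  obtain ⟨g, hg, oeg, ofg⟩ : ∃ g ∈ FR B Φ e, B e g = 0 ∧ B f g = 0 := by
    obtain ⟨γ, hg, hg4, hv⟩ := t.nbr_l hefm hef4
    have hpr : PR (FR B Φ e) γ := by
      by_cases k : B γ e = 0
      · apply t'.long_frame he he2 hf hg hg4
        intro k'
        rw [t.rs.symm, map_sub, k, k'] at hv; norm_num at hv
      · exact t'.long_frame he he2 heF hg hg4 k
    obtain ⟨x, hx, y, hy, n1, n2, rfl⟩ := hpr
    by_contra hno
    push Not at hno
    have hv' : B e x - B e y - B f x + B f y = 2 := by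
      rw [← hv]; simp only [map_sub, LinearMap.sub_apply]; ring
    have oxy : B x y = 0 := by
      rcases hFr.orth x hx y hy with k | k | k
      · exact (n1 k).elim
      · exact (n2 k).elim
      · exact k
    have cl : ∀ z ∈ FR B Φ e, z = e ∨ z = -e ∨ z = f ∨ z = -f := by
      intro z hz
      rcases hFr.orth e heF z hz with k | k | k
      · exact Or.inl k
      · exact Or.inr (Or.inl k)
      · rcases hFr.orth f hf z hz with k' | k' | k'
        · exact Or.inr (Or.inr (Or.inl k'))
        · exact Or.inr (Or.inr (Or.inr k'))
        · exact (hno z hz k k').elim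
    have ofe : B f e = 0 := by rw [t.rs.symm]; exact oef
    rcases cl x hx with rfl | rfl | rfl | rfl <;> rcases cl y hy with rfl | rfl | rfl | rfl <;>
      simp only [map_neg, LinearMap.neg_apply, he2, hf2, oef, ofe] at hv' oxy <;>
      first
        | (norm_num at hv'; done)
        | (norm_num at oxy; done)
  have hg2 := (mem_FR.1 hg).2.1
  obtain ⟨β, hb, hb2, heb⟩ := t.nbr_s he he2
  have hbn : β ∉ FR B Φ e := by
    intro hm
    rcases hFr.orth e heF β hm with k | k | k
    · rw [k, he2] at heb; norm_num at heb
    · rw [k, map_neg, he2] at heb; norm_num at heb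
    · rw [k] at heb; norm_num at heb
  have hbv := t'.short_vals he he2 hb hb2 hbn (by rw [heb]; norm_num)
  -- normalise signs
  obtain ⟨f, hf, hf2, oef, ofg, hfb⟩ : ∃ f ∈ FR B Φ e, B f f = 2 ∧ B e f = 0 ∧ B f g = 0 ∧ B f β = 1 := by
    rcases hbv f hf with k | k
    · exact ⟨f, hf, hf2, oef, ofg, k⟩
    · exact ⟨-f, t'.FR_neg hf, by simpa using hf2, by simpa using oef, by simpa using ofg, by simp [k]⟩
  obtain ⟨g, hg, hg2, oeg, ofg, hgb⟩ : ∃ g ∈ FR B Φ e, B g g = 2 ∧ B e g = 0 ∧ B f g = 0 ∧ B g β = 1 := by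
    rcases hbv g hg with k | k
    · exact ⟨g, hg, hg2, oeg, ofg, k⟩
    · exact ⟨-g, t'.FR_neg hg, by simpa using hg2, by simpa using oeg, by simpa using ofg, by simp [k]⟩
  have pairroot : ∀ x ∈ FR B Φ e, ∀ y ∈ FR B Φ e, B x y = 0 → x + y ∈ Φ ∧ B (x + y) (x + y) = 4 := by
    intro x hx y hy h0
    have hx2 := (mem_FR.1 hx).2.1
    have hy' := t'.FR_neg hy
    have := t'.PR_root he he2 (x := x - -y) ⟨x, hx, -y, hy', ?_, ?_, rfl⟩
    · rwa [sub_neg_eq_add] at this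
    · intro k
      have : y = -x := by rw [← k, neg_neg]
      rw [this, map_neg, hx2] at h0; norm_num at h0
    · intro k
      rw [neg_injective k, hx2] at h0; norm_num at h0
  have ofe : B f e = 0 := by rw [t.rs.symm]; exact oef
  have oge : B g e = 0 := by rw [t.rs.symm]; exact oeg
  have ogf : B g f = 0 := by rw [t.rs.symm]; exact ofg
  have hbe : B β e = 1 := by rw [t.rs.symm]; exact heb
  have hbf : B β f = 1 := by rw [t.rs.symm]; exact hfb
  have hbg : B β g = 1 := by rw [t.rs.symm]; exact hgb
  obtain ⟨r1, r2⟩ := pairroot e heF f hf oef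
  have s1 := t'.refl_l r1 r2 hb
  have s1' : β - e - f ∈ Φ := by
    rw [map_add, LinearMap.add_apply, heb, hfb] at s1
    convert s1 using 1; module
  have s2 := t'.refl_s (mem_FR.1 hg).1 hg2 s1'
  have s2' : β - e - f - g ∈ Φ := by
    rw [map_sub, map_sub, hgb, oge, ogf] at s2
    convert s2 using 1; module
  have s3 := t'.refl_s hb hb2 s2'
  have s3' : (2:ℝ) • β - e - f - g ∈ Φ := by
    rw [map_sub, map_sub, map_sub, hb2, hbe, hbf, hbg] at s3
    convert s3 using 1; module
  set k := (2:ℝ) • β - e - f - g with hk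
  have oek : B e k = 0 := by
    rw [hk]; simp only [map_sub, map_smul, smul_eq_mul, heb, he2, oef, oeg]; norm_num
  have ofk : B f k = 0 := by
    rw [hk]; simp only [map_sub, map_smul, smul_eq_mul, hfb, hf2, ofe, ofg]; norm_num
  have ogk : B g k = 0 := by
    rw [hk]; simp only [map_sub, map_smul, smul_eq_mul, hgb, hg2, oge, ogf]; norm_num
  have hbk : B β k = 1 := by
    rw [hk]; simp only [map_sub, map_smul, smul_eq_mul, hb2, hbe, hbf, hbg]; norm_num
  have hk2 : B k k = 2 := by
    have : B k k = B ((2:ℝ) • β - e - f - g) k := by rw [← hk]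
    rw [this]
    simp only [map_sub, map_smul, LinearMap.sub_apply, LinearMap.smul_apply, smul_eq_mul, oek, ofk, ogk, hbk]
    norm_num
  have hkF : k ∈ FR B Φ e := by
    have h1 := (pairroot f hf g hg ofg).1
    have h2 := t'.refl_s hb hb2 h1
    rw [map_add, hbf, hbg] at h2
    have h3 := t.rs.neg_mem h2
    have h4 : e - -k ∈ Φ := by
      convert h3 using 1
      rw [hk]; module
    have : -k ∈ FR B Φ e := mem_FR.2 ⟨t.rs.neg_mem s3', by simpa using hk2,
      Or.inr (Or.inr ⟨by simpa using oek, h4⟩)⟩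
    simpa using t'.FR_neg this
  have oke : B k e = 0 := by rw [t.rs.symm]; exact oek
  have okf : B k f = 0 := by rw [t.rs.symm]; exact ofk
  have okg : B k g = 0 := by rw [t.rs.symm]; exact ogk
  refine ⟨![e, f, g, k], ?_, ?_, ?_⟩
  · intro i; fin_cases i
    · exact heF
    · exact hf
    · exact hg
    · exact hkF
  · intro i j
    fin_cases i <;> fin_cases j <;> simp <;> assumption
  · intro z hz
    by_contra hno
    push Not at hno
    have o : ∀ x ∈ FR B Φ e, z ≠ x → z ≠ -x → B x z = 0 := by
      intro x hx n1 n2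
      rcases hFr.orth x hx z hz with k | k | k
      · exact (n1 k).elim
      · exact (n2 k).elim
      · exact k
    have o1 := o e heF (hno 0).1 (hno 0).2
    have o2 := o f hf (hno 1).1 (hno 1).2
    have o3 := o g hg (hno 2).1 (hno 2).2
    have o4 := o k hkF (hno 3).1 (hno 3).2
    have : B k z = 2 * B β z := by
      rw [hk]; simp only [map_sub, map_smul, LinearMap.sub_apply, LinearMap.smul_apply, smul_eq_mul, o1, o2, o3]
      ring
    rw [o4, t.rs.symm β z] at this
    rcases hbv z hz with k | k <;> rw [k] at this <;> norm_num at this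

end FFour

end FileP3h

section FileP3i
open Module Submodule

section FFourCount
variable {E : Type*} [AddCommGroup E] [Module ℝ E]
variable {B : E →ₗ[ℝ] E →ₗ[ℝ] ℝ} {Φ : Finset E}

lemma Fh.card_FR (t : Fh B Φ) {e : E} (he : e ∈ Φ) (he2 : B e e = 2) : (FR B Φ e).card = 8 := by
  obtain ⟨g, hg, ho, hall⟩ := t.exists_four he he2
  have : FR B Φ e = (Finset.univ : Finset (Fin 4 × Bool)).image
      (fun p => if p.2 then g p.1 else -g p.1) := by
    ext x
    rw [Finset.mem_image]
    constructor
    · intro hx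
      obtain ⟨i, hi | hi⟩ := hall x hx
      · exact ⟨(i, true), Finset.mem_univ _, by simp [hi]⟩
      · exact ⟨(i, false), Finset.mem_univ _, by simp [hi]⟩
    · rintro ⟨⟨i, c⟩, _, rfl⟩
      cases c
      · simpa using t.FR_neg (hg i)
      · simpa using hg i
  rw [this, Finset.card_image_of_injective]
  · simp
  · rintro ⟨i, c⟩ ⟨j, d⟩ h
    have h1 : B (g i) (if c then g i else -g i) = B (g i) (if d then g j else -g j) := by
      simp only at h
      rw [h]
    by_cases hij : i = j
    · subst hij
      cases c <;> cases d <;> simp [ho] at h1 ⊢ <;> norm_num at h1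
    · exfalso
      cases c <;> cases d <;> simp [ho, hij] at h1

lemma Fh.nonorth (t : Fh B Φ) {e : E} (he : e ∈ Φ) (he2 : B e e = 2) :
    ∀ β ∈ Φ, ∃ f ∈ FR B Φ e, B f β ≠ 0 := by
  obtain ⟨g, hg, ho, hall⟩ := t.exists_four he he2
  apply span_principle t.irr t.rs.symm ⟨e, T2.FR_self he he2, he, by rw [he2]; norm_num⟩
  rintro β hb ⟨f, hf, h0⟩
  rcases t.len β hb with h2 | h4
  · by_cases hbF : β ∈ FR B Φ e
    · exact subset_span hbF
    · have hE := t.FR_eq he he2 hf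
      have hv := t.short_vals (mem_FR.1 hf).1 (mem_FR.1 hf).2.1 hb h2 (by rw [hE]; exact hbF) h0
      rw [hE] at hv
      rw [half_eq t.rs ho h2 (fun i => hv _ (hg i))]
      exact sum_mem fun i _ => smul_mem _ _ (subset_span (hg i))
  · exact (t.long_frame he he2 hf hb h4 (by rwa [t.rs.symm])).mem_span

lemma Fh.long_PR (t : Fh B Φ) {e : E} (he : e ∈ Φ) (he2 : B e e = 2) :
    ∀ x ∈ Φ, B x x = 4 → PR (FR B Φ e) x := by
  intro x hx h4
  obtain ⟨f, hf, h0⟩ := t.nonorth he he2 x hx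
  exact t.long_frame he he2 hf hx h4 (by rwa [t.rs.symm])

lemma Fh.short_out (t : Fh B Φ) {e : E} (he : e ∈ Φ) (he2 : B e e = 2) {s : E} (hs : s ∈ Φ)
    (h2 : B s s = 2) (hn : s ∉ FR B Φ e) : ∀ h ∈ FR B Φ e, B h s = 1 ∨ B h s = -1 := by
  obtain ⟨f, hf, h0⟩ := t.nonorth he he2 s hs
  have hE := t.FR_eq he he2 hf
  have hv := t.short_vals (mem_FR.1 hf).1 (mem_FR.1 hf).2.1 hs h2 (by rw [hE]; exact hn) h0
  rwa [hE] at hv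

lemma Fh.rank (t : Fh B Φ) : 4 ≤ finrank ℝ (span ℝ (Φ : Set E)) := by
  obtain ⟨e, he, he2⟩ := t.exs
  have h1 := (t.frame he he2).card_le
  rw [t.card_FR he he2] at h1
  have h3 := finrank_mono_finset (T2.FR_sub (B := B) (Φ := Φ) (e := e))
  omega

lemma Fh.ineq (t : Fh B Φ) {e : E} (he : e ∈ Φ) (he2 : B e e = 2) {a b : ℝ} (hab : ZInd a b)
    (l : E →ₗ[ℝ] ℝ) : 2 * NF (FR B Φ e) l b ≤
      2 * (cs B Φ 4 l 0 + 4 - cs B Φ 4 l a) + NF (FR B Φ e) l 0 := by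
  have hFr := t.frame he he2
  have h1 := frame_ineq (l := l) hFr.neg hFr.ne_neg hab
  rw [t.LP_cs he he2 (t.long_PR he he2), t.LP_cs he he2 (t.long_PR he he2), t.card_FR he he2] at h1
  push_cast at h1
  linarith

lemma Fh.double (t : Fh B Φ) (l : E →ₗ[ℝ] ℝ) (v : ℝ) :
    ∑ e ∈ Φ.filter (fun e => B e e = 2), NF (FR B Φ e) l v = 8 * cs B Φ 2 l v := by
  have h1 : ∀ e ∈ Φ.filter (fun e => B e e = 2), NF (FR B Φ e) l v =
      ∑ f ∈ Φ.filter (fun α => B α α = 2 ∧ l α = v), if f ∈ FR B Φ e then (1:ℤ) else 0 := by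
    intro e _
    unfold NF
    rw [Finset.sum_boole, Finset.filter_filter]
    congr 2
    ext x
    simp only [Finset.mem_filter, mem_FR]
    tauto
  rw [Finset.sum_congr rfl h1, Finset.sum_comm]
  have h2 : ∀ f ∈ Φ.filter (fun α => B α α = 2 ∧ l α = v),
      (∑ e ∈ Φ.filter (fun e => B e e = 2), if f ∈ FR B Φ e then (1:ℤ) else 0) = 8 := by
    intro f hf
    rw [Finset.mem_filter] at hf
    rw [Finset.sum_boole]
    have : (Φ.filter (fun e => B e e = 2)).filter (fun e => f ∈ FR B Φ e) = FR B Φ f := by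
      ext x
      rw [Finset.mem_filter, Finset.mem_filter]
      constructor
      · rintro ⟨⟨h1, h2⟩, h3⟩; exact t.FR_symm h1 h2 h3
      · intro h
        exact ⟨⟨(mem_FR.1 h).1, (mem_FR.1 h).2.1⟩, t.FR_symm hf.1 hf.2.1 h⟩
    rw [this, t.card_FR hf.1 hf.2.1]; norm_num
  rw [Finset.sum_congr rfl h2, Finset.sum_const, cs]
  simp; ring

/-- short roots outside the frame with prescribed signs -/
lemma Fh.signs (t : Fh B Φ) {e : E} (he : e ∈ Φ) (he2 : B e e = 2) {g : Fin 4 → E}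
    (hg : ∀ i, g i ∈ FR B Φ e) (ho : ∀ i j, B (g i) (g j) = if i = j then 2 else 0)
    (δ : Fin 4 → ℝ) (hδ : ∀ i, δ i = 1 ∨ δ i = -1) :
    ∃ s ∈ Φ, B s s = 2 ∧ ∀ i, B (g i) s = δ i := by
  have flip : ∀ s ∈ Φ, B s s = 2 → (∀ i, B (g i) s = 1 ∨ B (g i) s = -1) → ∀ i : Fin 4,
      ∃ s' ∈ Φ, B s' s' = 2 ∧ (∀ j, B (g j) s' = 1 ∨ B (g j) s' = -1) ∧ B (g i) s' = δ i ∧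
        ∀ j, j ≠ i → B (g j) s' = B (g j) s := by
    intro s hs hs2 hv i
    by_cases hi : B (g i) s = δ i
    · exact ⟨s, hs, hs2, hv, hi, fun _ _ => rfl⟩
    have hi' : B (g i) s = - δ i := by
      rcases hv i with k | k <;> rcases hδ i with k' | k' <;>
        first
        | exact absurd (k.trans k'.symm) hi
        | (rw [k, k']; norm_num; done)
        | (rw [k, k']; done)
    have hr := t.refl_s (mem_FR.1 (hg i)).1 (mem_FR.1 (hg i)).2.1 hs
    have e1 : B (g i) (s - (B (g i) s) • g i) = δ i := by
      rw [map_sub, map_smul, smul_eq_mul, ho, if_pos rfl, hi']; ring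
    have e2 : ∀ j, j ≠ i → B (g j) (s - (B (g i) s) • g i) = B (g j) s := by
      intro j hj
      rw [map_sub, map_smul, smul_eq_mul, ho, if_neg hj]; ring
    refine ⟨_, hr, ?_, ?_, e1, e2⟩
    · have := t.rs.norm_refl (mem_FR.1 (hg i)).1 s
      rw [(mem_FR.1 (hg i)).2.1, mul_div_cancel_left₀ _ (two_ne_zero)] at this
      rw [this, hs2]
    · intro j
      by_cases hj : j = i
      · rw [hj, e1]; exact hδ i
      · rw [e2 j hj]; exact hv j
  obtain ⟨β, hb, hb2, heb⟩ := t.nbr_s he he2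
  have hbn : β ∉ FR B Φ e := by
    intro hm
    rcases (t.frame he he2).orth e (T2.FR_self he he2) β hm with k | k | k
    · rw [k, he2] at heb; norm_num at heb
    · rw [k, map_neg, he2] at heb; norm_num at heb
    · rw [k] at heb; norm_num at heb
  have hv0 : ∀ i, B (g i) β = 1 ∨ B (g i) β = -1 :=
    fun i => t.short_out he he2 hb hb2 hbn _ (hg i)
  obtain ⟨s0, m0, n0, v0, p0, q0⟩ := flip β hb hb2 hv0 0
  obtain ⟨s1, m1, n1, v1, p1, q1⟩ := flip s0 m0 n0 v0 1
  obtain ⟨s2, m2, n2, v2, p2, q2⟩ := flip s1 m1 n1 v1 2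
  obtain ⟨s3, m3, n3, v3, p3, q3⟩ := flip s2 m2 n2 v2 3
  refine ⟨s3, m3, n3, ?_⟩
  intro i
  fin_cases i
  · exact (q3 0 (by decide)).trans ((q2 0 (by decide)).trans ((q1 0 (by decide)).trans p0))
  · exact (q3 1 (by decide)).trans ((q2 1 (by decide)).trans p1)
  · exact (q3 2 (by decide)).trans p2
  · exact p3

lemma cs_split (B : E →ₗ[ℝ] E →ₗ[ℝ] ℝ) (Φ : Finset E) (e : E) (l : E →ₗ[ℝ] ℝ) (v : ℝ) :
    cs B Φ 2 l v = NF (FR B Φ e) l v +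
      ((Φ.filter (fun s => B s s = 2 ∧ s ∉ FR B Φ e ∧ l s = v)).card : ℤ) := by
  unfold cs NF
  rw [← Nat.cast_add, ← Finset.card_union_of_disjoint]
  · congr 2
    ext x
    simp only [Finset.mem_union, Finset.mem_filter, mem_FR]
    tauto
  · rw [Finset.disjoint_left]
    intro x hx hx'
    exact (Finset.mem_filter.1 hx').2.2.1 (Finset.mem_filter.1 hx).1

/-- the equality case of the frame inequality -/
lemma Fh.tight (t : Fh B Φ) {e : E} (he : e ∈ Φ) (he2 : B e e = 2) {a b : ℝ} (hab : ZInd a b)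
    (l : E →ₗ[ℝ] ℝ) (hA : cs B Φ 4 l 0 + 4 - cs B Φ 4 l a = 1)
    (hN : NF (FR B Φ e) l 0 + 1 ≤ NF (FR B Φ e) l b) :
    cs B Φ 2 l b ≤ cs B Φ 2 l 0 + 1 := by
  have hFr := t.frame he he2
  have h1 := t.ineq he he2 hab l
  have h0 := NF_nonneg (F := FR B Φ e) (l := l) 0
  obtain ⟨q, hq⟩ := frame_eq (l := l) hFr.neg hFr.ne_neg hab (t.card_FR he he2) (by
    rw [t.LP_cs he he2 (t.long_PR he he2), t.LP_cs he he2 (t.long_PR he he2)]; omega) hN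
  have hex : ∀ i : Fin 4, ∃ g ∈ FR B Φ e, l g = b + (q + (i : ℕ)) * a := by
    intro i
    have := hq i i.2
    unfold NF at this
    have h2 : 0 < ((FR B Φ e).filter (fun f => l f = b + (q + (i : ℕ)) * a)).card := by
      exact_mod_cast this
    obtain ⟨g, hg⟩ := Finset.card_pos.1 h2
    rw [Finset.mem_filter] at hg
    exact ⟨g, hg.1, hg.2⟩
  choose g hg hlg using hex
  have ho : ∀ i j, B (g i) (g j) = if i = j then 2 else 0 := by
    intro i j
    split_ifs with hij
    · rw [hij]; exact hFr.two _ (hg j)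
    · rcases hFr.orth _ (hg i) _ (hg j) with k | k | k
      · exfalso
        have : l (g j) = l (g i) := by rw [k]
        rw [hlg, hlg] at this
        have := hab.eq (m := q + (j:ℕ)) (j := 1) (m' := q + (i:ℕ)) (j' := 1) (by push_cast; linarith)
        apply hij; ext; omega
      · exfalso
        have : l (g j) = -l (g i) := by rw [k, map_neg]
        rw [hlg, hlg] at this
        have := hab.eq (m := q + (j:ℕ)) (j := 1) (m' := -(q + (i:ℕ))) (j' := -1) (by push_cast; linarith)
        omega
      · exact k
  have hls : ∀ s, B s s = 2 → (∀ i, B (g i) s = 1 ∨ B (g i) s = -1) →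
      2 * l s = B (g 0) s * (b + q * a) + B (g 1) s * (b + (q + 1) * a) +
        B (g 2) s * (b + (q + 2) * a) + B (g 3) s * (b + (q + 3) * a) := by
    intro s h2 hv
    have := half_eq t.rs ho h2 hv
    have h3 : l s = ∑ i, (B (g i) s / 2) * (b + (q + (i : ℕ)) * a) := by
      conv_lhs => rw [this]
      rw [map_sum]
      simp only [map_smul, smul_eq_mul, hlg]
    rw [h3, Fin.sum_univ_four]
    simp
    ring
  -- at least one outside root with value zero
  have hT0 : 1 ≤ ((Φ.filter (fun s => B s s = 2 ∧ s ∉ FR B Φ e ∧ l s = 0)).card : ℤ) := by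
    obtain ⟨s, hs, hs2, hv⟩ := t.signs he he2 hg ho ![1, -1, -1, 1] (by
      intro i; fin_cases i <;> simp)
    have hv' : ∀ i, B (g i) s = 1 ∨ B (g i) s = -1 := by
      intro i; rw [hv]; fin_cases i <;> simp
    have h3 := hls s hs2 hv'
    rw [hv, hv, hv, hv] at h3
    have : 0 < (Φ.filter (fun s => B s s = 2 ∧ s ∉ FR B Φ e ∧ l s = 0)).card := by
      refine Finset.card_pos.2 ⟨s, Finset.mem_filter.2 ⟨hs, hs2, ?_, ?_⟩⟩
      · intro hm
        have h4 := hv' 0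
        rcases hFr.orth _ (hg 0) s hm with k | k | k
        · rw [k, hFr.two _ (hg 0)] at h4; norm_num at h4
        · rw [k, map_neg, hFr.two _ (hg 0)] at h4; norm_num at h4
        · rw [k] at h4; norm_num at h4
      · simp at h3
        linarith
    omega
  -- at most one outside root with value b
  have hTb : ((Φ.filter (fun s => B s s = 2 ∧ s ∉ FR B Φ e ∧ l s = b)).card : ℤ) ≤ 1 := by
    have : (Φ.filter (fun s => B s s = 2 ∧ s ∉ FR B Φ e ∧ l s = b)).card ≤ 1 := by
      rw [Finset.card_le_one]
      have key : ∀ s ∈ Φ.filter (fun s => B s s = 2 ∧ s ∉ FR B Φ e ∧ l s = b),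
          ∃ z : Fin 4 → ℤ, (∀ i, B (g i) s = z i) ∧ (∀ i, z i = 1 ∨ z i = -1) ∧
            z 0 + z 1 + z 2 + z 3 = 2 ∧ 2 * q + z 1 + 2 * z 2 + 3 * z 3 = 0 ∧
            s = ∑ i, ((z i : ℝ) / 2) • g i := by
        intro s hs
        obtain ⟨hs, hs2, hsn, hsb⟩ := Finset.mem_filter.1 hs
        have hv : ∀ i, B (g i) s = 1 ∨ B (g i) s = -1 :=
          fun i => t.short_out he he2 hs hs2 hsn _ (hg i)
        have hzex : ∀ i, ∃ z : ℤ, B (g i) s = z ∧ (z = 1 ∨ z = -1) := by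
          intro i
          rcases hv i with k | k
          · exact ⟨1, by rw [k]; norm_num, Or.inl rfl⟩
          · exact ⟨-1, by rw [k]; norm_num, Or.inr rfl⟩
        choose z hz1 hz2 using hzex
        have h3 := hls s hs2 hv
        rw [hsb, hz1, hz1, hz1, hz1] at h3
        have h4 := hab.eq (m := z 0 * q + z 1 * (q + 1) + z 2 * (q + 2) + z 3 * (q + 3))
          (j := z 0 + z 1 + z 2 + z 3) (m' := 0) (j' := 2) (by push_cast; linarith)
        refine ⟨z, hz1, hz2, h4.2, ?_, ?_⟩
        · have e1 : z 0 * q + z 1 * (q + 1) + z 2 * (q + 2) + z 3 * (q + 3) =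
              (z 0 + z 1 + z 2 + z 3) * q + z 1 + 2 * z 2 + 3 * z 3 := by ring
          rw [e1, h4.2] at h4
          exact h4.1
        · have := half_eq t.rs ho hs2 hv
          simp only [hz1] at this
          exact this
      intro s hs s' hs'
      obtain ⟨z, -, h2, h3, h4, h5⟩ := key s hs
      obtain ⟨z', -, h2', h3', h4', h5'⟩ := key s' hs'
      have : z = z' := by
        have a0 := h2 0
        have a1 := h2 1
        have a2 := h2 2
        have a3 := h2 3
        have b0 := h2' 0
        have b1 := h2' 1
        have b2 := h2' 2
        have b3 := h2' 3
        have : z 0 = z' 0 ∧ z 1 = z' 1 ∧ z 2 = z' 2 ∧ z 3 = z' 3 := by omega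
        funext i
        fin_cases i
        · exact this.1
        · exact this.2.1
        · exact this.2.2.1
        · exact this.2.2.2
      rw [h5, h5', this]
    exact_mod_cast this
  have c1 := cs_split B Φ e l b
  have c2 := cs_split B Φ e l 0
  omega

lemma Fh.half_goal (t : Fh B Φ) {a b : ℝ} (hab : ZInd a b) (l : E →ₗ[ℝ] ℝ)
    (hA : cs B Φ 4 l 0 + 4 - cs B Φ 4 l a ≤ 1) :
    cs B Φ 2 l b + cs B Φ 4 l a ≤ cs B Φ 2 l 0 + cs B Φ 4 l 0 + 4 := by
  by_contra hcon
  push Not at hcon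
  set A := cs B Φ 4 l 0 + 4 - cs B Φ 4 l a with hAdef
  have hd : A + 1 ≤ cs B Φ 2 l b - cs B Φ 2 l 0 := by omega
  have hle : ∀ e ∈ Φ.filter (fun e => B e e = 2),
      NF (FR B Φ e) l b - NF (FR B Φ e) l 0 ≤ A := by
    intro e he
    rw [Finset.mem_filter] at he
    have h1 := t.ineq he.1 he.2 hab l
    have h0 := NF_nonneg (F := FR B Φ e) (l := l) 0
    omega
  have hsum : ∑ e ∈ Φ.filter (fun e => B e e = 2), (NF (FR B Φ e) l b - NF (FR B Φ e) l 0) =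
      8 * (cs B Φ 2 l b - cs B Φ 2 l 0) := by
    rw [Finset.sum_sub_distrib, t.double, t.double]; ring
  by_cases hA1 : A = 1
  · have : ∃ e ∈ Φ.filter (fun e => B e e = 2), 0 < NF (FR B Φ e) l b - NF (FR B Φ e) l 0 := by
      by_contra hno
      push Not at hno
      have := Finset.sum_nonpos hno
      omega
    obtain ⟨e, he, h1⟩ := this
    rw [Finset.mem_filter] at he
    have := t.tight he.1 he.2 hab l hA1 (by omega)
    omega
  · have hN : 8 ≤ ((Φ.filter (fun e => B e e = 2)).card : ℤ) := by
      obtain ⟨e, he, he2⟩ := t.exs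
      have h1 := t.card_FR he he2
      have h2 : FR B Φ e ⊆ Φ.filter (fun e => B e e = 2) := by
        intro x hx
        exact Finset.mem_filter.2 ⟨(mem_FR.1 hx).1, (mem_FR.1 hx).2.1⟩
      have := Finset.card_le_card h2
      omega
    have h1 := Finset.sum_le_card_nsmul _ _ A hle
    rw [hsum, nsmul_eq_mul] at h1
    have hA0 : A ≤ 0 := by omega
    nlinarith

lemma Fh.dual (t : Fh B Φ) : Fh ((2:ℝ) • B) (GenRes.dual B Φ) := by
  refine { toT2 := t.toT2.dual, ns := ?_, nl := ?_ }
  · obtain ⟨s, hs, s', hs', h1, h2, h3⟩ := t.nl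
    refine ⟨_, Finset.mem_image_of_mem _ hs, _, Finset.mem_image_of_mem _ hs',
      T2.dual_norm_l h1, T2.dual_norm_l h2, ?_⟩
    rw [dc_long h1, dc_long h2]; simp [h3]
  · obtain ⟨s, hs, s', hs', h1, h2, h3⟩ := t.ns
    refine ⟨_, Finset.mem_image_of_mem _ hs, _, Finset.mem_image_of_mem _ hs',
      T2.dual_norm_s h1, T2.dual_norm_s h2, ?_⟩
    rw [dc_short h1, dc_short h2]; simp [h3]

lemma Fh.goal (t : Fh B Φ) {a b : ℝ} (hab : ZInd a b) (l : E →ₗ[ℝ] ℝ) :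
    cs B Φ 2 l b + cs B Φ 4 l a ≤ cs B Φ 2 l 0 + cs B Φ 4 l 0 +
      finrank ℝ (span ℝ (Φ : Set E)) := by
  have hr := t.rank
  by_cases h1 : cs B Φ 4 l 0 + 4 - cs B Φ 4 l a ≤ 1
  · have := t.half_goal hab l h1
    omega
  by_cases h2 : cs B Φ 2 l 0 + 4 - cs B Φ 2 l b ≤ 1
  · have := t.dual.half_goal hab.dual l (by
      rw [t.dual_cs4, t.dual_cs4]; exact h2)
    rw [t.dual_cs2, t.dual_cs2, t.dual_cs4, t.dual_cs4, mul_zero,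
      mul_div_cancel₀ _ (two_ne_zero)] at this
    omega
  · omega

theorem T2.goal (t : T2 B Φ) {a b : ℝ} (hab : ZInd a b) (l : E →ₗ[ℝ] ℝ) :
    cs B Φ 2 l b + cs B Φ 4 l a ≤ cs B Φ 2 l 0 + cs B Φ 4 l 0 +
      finrank ℝ (span ℝ (Φ : Set E)) := by
  by_cases ns : ∃ s ∈ Φ, ∃ s' ∈ Φ, B s s = 2 ∧ B s' s' = 2 ∧ B s s' = 1
  swap
  · apply t.case_B hab
    intro s hs s' hs' h1 h2
    rcases t.val_ss hs h1 hs' h2 with h | h | h | h | h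
    · exact Or.inl h
    · exact Or.inr (Or.inl h)
    · exact Or.inr (Or.inr h)
    · exact (ns ⟨s, hs, s', hs', h1, h2, h⟩).elim
    · exact (ns ⟨s, hs, -s', t.rs.neg_mem hs', h1, by simpa using h2, by simp [h]⟩).elim
  by_cases nl : ∃ s ∈ Φ, ∃ s' ∈ Φ, B s s = 4 ∧ B s' s' = 4 ∧ B s s' = 2
  swap
  · apply t.case_C hab
    intro s hs s' hs' h1 h2
    rcases t.val_ll hs h1 hs' h2 with h | h | h | h | h
    · exact Or.inl h
    · exact Or.inr (Or.inl h)
    · exact Or.inr (Or.inr h)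
    · exact (nl ⟨s, hs, s', hs', h1, h2, h⟩).elim
    · exact (nl ⟨s, hs, -s', t.rs.neg_mem hs', h1, by simpa using h2, by simp [h]⟩).elim
  exact Fh.goal { toT2 := t, ns := ns, nl := nl } hab l

end FFourCount

end FileP3i

section FileP3j
open Module Submodule

section KeyIneq
variable {E : Type*} [AddCommGroup E] [Module ℝ E]
variable {B : E →ₗ[ℝ] E →ₗ[ℝ] ℝ} {Φ : Finset E} {κ : E → ℝ}

lemma KP.scale (k : KP B Φ κ) {t : ℝ} (ht : 0 < t) : KP (t • B) Φ κ := by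
  have e : ∀ α β, 2 * (t • B) α β / (t • B) α α = 2 * B α β / B α α := by
    intro α β
    simp only [LinearMap.smul_apply, smul_eq_mul]
    rw [show 2 * (t * B α β) = t * (2 * B α β) by ring, mul_div_mul_left _ _ ht.ne']
  refine ⟨fun α ha β hb => ?_, k.nz, fun α ha β hb hne => ?_⟩
  · rw [e]; exact k.inv α ha β hb
  · apply k.ind α ha β hb
    intro h
    apply hne
    simp only [LinearMap.smul_apply, h]

lemma b2_case (h : RS B Φ) (hirr : Irr B Φ) (k : KP B Φ κ)
    (hlen : ∀ α ∈ Φ, B α α = 2 ∨ B α α = 4) (hs : ∃ s ∈ Φ, B s s = 2) (hl : ∃ s ∈ Φ, B s s = 4)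
    (l : E →ₗ[ℝ] ℝ) : KI Φ κ l := by
  have t : T2 B Φ := ⟨h, hirr, hlen, hs, hl⟩
  obtain ⟨s, hs, hs2⟩ := hs
  obtain ⟨g, hg, hg4⟩ := hl
  have hz : ZInd (κ g) (κ s) := k.ind g hg s hs (by rw [hs2, hg4]; norm_num)
  have key := t.goal hz l
  have split : ∀ f : E → ℝ, ((Φ.filter (fun α => l α = f α)).card : ℤ) =
      ((Φ.filter (fun α => B α α = 2 ∧ l α = f α)).card : ℤ) +
      ((Φ.filter (fun α => B α α = 4 ∧ l α = f α)).card : ℤ) := by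
    intro f
    rw [← Nat.cast_add, ← Finset.card_union_of_disjoint]
    · congr 2
      ext x
      simp only [Finset.mem_union, Finset.mem_filter]
      constructor
      · rintro ⟨h1, h2⟩
        rcases hlen x h1 with h3 | h3
        · exact Or.inl ⟨h1, h3, h2⟩
        · exact Or.inr ⟨h1, h3, h2⟩
      · rintro (⟨h1, h3, h2⟩ | ⟨h1, h3, h2⟩) <;> exact ⟨h1, h2⟩
    · rw [Finset.disjoint_left]
      intro x hx hx'
      have h1 := (Finset.mem_filter.1 hx).2.1
      have h2 := (Finset.mem_filter.1 hx').2.1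
      rw [h1] at h2; norm_num at h2
  have e1 : cs B Φ 2 l (κ s) = ((Φ.filter (fun α => B α α = 2 ∧ l α = κ α)).card : ℤ) := by
    unfold cs
    congr 2
    apply Finset.filter_congr
    intro x hx
    constructor
    · rintro ⟨h1, h2⟩; exact ⟨h1, h2.trans (kappa_len h hirr k hs hx (by rw [hs2, h1]))⟩
    · rintro ⟨h1, h2⟩; exact ⟨h1, h2.trans (kappa_len h hirr k hx hs (by rw [hs2, h1]))⟩
  have e2 : cs B Φ 4 l (κ g) = ((Φ.filter (fun α => B α α = 4 ∧ l α = κ α)).card : ℤ) := by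
    unfold cs
    congr 2
    apply Finset.filter_congr
    intro x hx
    constructor
    · rintro ⟨h1, h2⟩; exact ⟨h1, h2.trans (kappa_len h hirr k hg hx (by rw [hg4, h1]))⟩
    · rintro ⟨h1, h2⟩; exact ⟨h1, h2.trans (kappa_len h hirr k hx hg (by rw [hg4, h1]))⟩
  have s1 := split κ
  have s2 := split (fun _ => 0)
  unfold KI
  rw [e1, e2] at key
  unfold cs at key
  zify
  linarith

theorem KI_irr (h : RS B Φ) (hirr : Irr B Φ) (hne : Φ.Nonempty) (k : KP B Φ κ)
    (l : E →ₗ[ℝ] ℝ) : KI Φ κ l := by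
  rcases len_cases h hirr with h1 | ⟨s, hs, g, hg, hr, hlen⟩
  · obtain ⟨a, ha⟩ := hne
    have := const_ineq h hirr ⟨a, ha⟩ l (κ a) (k.nz a ha)
    unfold KI
    convert this using 2
    apply Finset.filter_congr
    intro x hx
    rw [kappa_len h hirr k hx ha (h1 x hx a ha)]
  · have hp := h.pos' hs
    have ht : 0 < 2 / B s s := by positivity
    have e : ∀ x, ((2 / B s s) • B) x x = 2 / B s s * B x x := fun x => rfl
    have es : ((2 / B s s) • B) s s = 2 := by rw [e]; field_simp
    rcases hr with hr | hr
    · have eg : ((2 / B s s) • B) g g = 4 := by rw [e, hr]; field_simp; norm_num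
      refine b2_case (h.scale ht) (hirr.scale ht) (k.scale ht) ?_ ⟨s, hs, es⟩ ⟨g, hg, eg⟩ l
      intro x hx
      rcases hlen x hx with h2 | h2
      · left; rw [e, h2, ← e, es]
      · right; rw [e, h2, ← e, eg]
    · have eg : ((2 / B s s) • B) g g = 6 := by rw [e, hr]; field_simp; norm_num
      refine g2_case (h.scale ht) (hirr.scale ht) (k.scale ht) ?_ ⟨s, hs, es⟩ ⟨g, hg, eg⟩ l
      intro x hx
      rcases hlen x hx with h2 | h2
      · left; rw [e, h2, ← e, es]
      · right; rw [e, h2, ← e, eg]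

theorem key_ineq (h : RS B Φ) (k : KP B Φ κ) (l : E →ₗ[ℝ] ℝ) : KI Φ κ l :=
  KI_of_irr (fun _ h1 h2 h3 h4 l => KI_irr h1 h2 h3 h4 l) h k l

end KeyIneq

end FileP3j

section FileP4a
section FormSec
open Module Submodule

/-- the canonical invariant form on `V` -/
def fV : V →ₗ[ℝ] V →ₗ[ℝ] ℝ := ∑ γ ∈ rs.roots, LinearMap.smulRight γ γ

lemma fV_apply (v w : V) : fV rs v w = ∑ γ ∈ rs.roots, γ v * γ w := by
  simp [fV, LinearMap.sum_apply]

lemma reflV_apply (α : Dual ℝ V) (v : V) : reflV rs α v = v - α v • rs.coroot α := by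
  simp [reflV]

lemma root_reflV (α γ : Dual ℝ V) (v : V) :
    γ (reflV rs α v) = (γ - γ (rs.coroot α) • α) v := by
  rw [reflV_apply]; simp; ring

lemma refl_refl {α : Dual ℝ V} (ha : α ∈ rs.roots) (γ : Dual ℝ V) :
    (γ - γ (rs.coroot α) • α) - (γ - γ (rs.coroot α) • α) (rs.coroot α) • α = γ := by
  have := rs.coroot_two α ha
  simp only [LinearMap.sub_apply, LinearMap.smul_apply, smul_eq_mul, this]
  module

lemma fV_inv {α : Dual ℝ V} (ha : α ∈ rs.roots) (v w : V) :
    fV rs (reflV rs α v) (reflV rs α w) = fV rs v w := by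
  rw [fV_apply, fV_apply]
  refine Finset.sum_nbij' (fun γ => γ - γ (rs.coroot α) • α) (fun γ => γ - γ (rs.coroot α) • α)
    (fun γ hg => rs.reflect_mem α ha γ hg) (fun γ hg => rs.reflect_mem α ha γ hg)
    (fun γ _ => refl_refl rs ha γ) (fun γ _ => refl_refl rs ha γ) (fun γ _ => ?_)
  rw [root_reflV, root_reflV]

lemma fV_symm (v w : V) : fV rs v w = fV rs w v := by
  rw [fV_apply, fV_apply]
  exact Finset.sum_congr rfl fun _ _ => mul_comm _ _

lemma eq_zero_of_roots {v : V} (S : Set (Dual ℝ V)) (hS : span ℝ S = ⊤)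
    (h : ∀ γ ∈ S, γ v = 0) : v = 0 := by
  rw [← Module.forall_dual_apply_eq_zero_iff ℝ]
  intro φ
  have : φ ∈ span ℝ S := by rw [hS]; trivial
  induction this using span_induction with
  | mem x hx => exact h x hx
  | zero => simp
  | add x y _ _ h1 h2 => simp [h1, h2]
  | smul c x _ h1 => simp [h1]

lemma fV_pos {v : V} (hv : v ≠ 0) : 0 < fV rs v v := by
  rw [fV_apply]
  apply lt_of_le_of_ne (Finset.sum_nonneg fun γ _ => mul_self_nonneg _)
  intro h
  apply hv
  apply eq_zero_of_roots _ rs.spanning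
  intro γ hg
  have := (Finset.sum_eq_zero_iff_of_nonneg (fun γ _ => mul_self_nonneg (γ v))).1 h.symm γ hg
  exact mul_self_eq_zero.1 this

lemma fV_coroot {α : Dual ℝ V} (ha : α ∈ rs.roots) (v : V) :
    2 * fV rs (rs.coroot α) v = fV rs (rs.coroot α) (rs.coroot α) * α v := by
  have h := fV_inv rs ha (rs.coroot α) v
  rw [reflV_apply, reflV_apply, rs.coroot_two α ha] at h
  simp only [map_sub, map_smul, LinearMap.sub_apply, LinearMap.smul_apply, smul_eq_mul] at h
  linarith

lemma coroot_ne_zero {α : Dual ℝ V} (ha : α ∈ rs.roots) : rs.coroot α ≠ 0 := by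
  intro h
  have := rs.coroot_two α ha
  rw [h] at this; simp at this

lemma coroot_inj {α β : Dual ℝ V} (ha : α ∈ rs.roots) (hb : β ∈ rs.roots)
    (h : rs.coroot α = rs.coroot β) : α = β := by
  ext v
  have h1 := fV_coroot rs ha v
  have h2 := fV_coroot rs hb v
  have := (fV_pos rs (coroot_ne_zero rs ha)).ne'
  rw [← h] at h2
  exact mul_left_cancel₀ this (h1.symm.trans h2)

lemma exists_form [FiniteDimensional ℝ V] : ∃ B : Dual ℝ V →ₗ[ℝ] Dual ℝ V →ₗ[ℝ] ℝ,
    (∀ x y, B x y = B y x) ∧ (∀ x, x ≠ 0 → 0 < B x x) ∧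
    ∀ α ∈ rs.roots, ∀ β, 2 * B α β / B α α = β (rs.coroot α) := by
  have hinj : Function.Injective (fV rs) := by
    rw [← LinearMap.ker_eq_bot, LinearMap.ker_eq_bot']
    intro v hv
    by_contra h
    have := fV_pos rs h
    rw [hv] at this; simp at this
  let T : V ≃ₗ[ℝ] Dual ℝ V := LinearMap.linearEquivOfInjective (fV rs) hinj
    (Subspace.dual_finrank_eq).symm
  have hT : ∀ φ v, fV rs (T.symm φ) v = φ v := by
    intro φ v
    exact congrArg (fun ψ : Dual ℝ V => ψ v) (T.apply_symm_apply φ)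
  let B : Dual ℝ V →ₗ[ℝ] Dual ℝ V →ₗ[ℝ] ℝ := (fV rs).compl₁₂ T.symm.toLinearMap T.symm.toLinearMap
  have hB : ∀ x y, B x y = fV rs (T.symm x) (T.symm y) := fun x y => rfl
  refine ⟨B, fun x y => by rw [hB, hB, fV_symm], fun x hx => ?_, fun α ha β => ?_⟩
  · rw [hB]; apply fV_pos; simpa using hx
  · have hc := (fV_pos rs (coroot_ne_zero rs ha))
    set c := fV rs (rs.coroot α) (rs.coroot α) with hcdef
    have h1 : T.symm α = (2 / c) • rs.coroot α := by
      apply hinj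
      ext v
      rw [hT, map_smul, LinearMap.smul_apply, smul_eq_mul]
      have := fV_coroot rs ha v
      rw [← hcdef] at this
      field_simp
      linarith
    have h2 : ∀ φ, B α φ = 2 / c * φ (rs.coroot α) := by
      intro φ
      rw [hB, fV_symm, hT, h1, map_smul, smul_eq_mul]
    rw [h2, h2, rs.coroot_two α ha]
    field_simp

end FormSec

section RSSec
open Module Submodule

lemma rs_RS {B : Dual ℝ V →ₗ[ℝ] Dual ℝ V →ₗ[ℝ] ℝ} (hs : ∀ x y, B x y = B y x)
    (hp : ∀ x, x ≠ 0 → 0 < B x x)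
    (hc : ∀ α ∈ rs.roots, ∀ β, 2 * B α β / B α α = β (rs.coroot α))
    (W : Submodule ℝ (Dual ℝ V)) : RS B (rs.roots.filter (fun α => α ∈ W)) := by
  refine ⟨hs, hp, ?_, ?_, ?_, ?_⟩
  · intro h; exact rs.zero_not_mem (Finset.mem_filter.1 h).1
  · intro α ha β hb
    rw [Finset.mem_filter] at *
    rw [hc α ha.1]
    exact ⟨rs.reflect_mem α ha.1 β hb.1, W.sub_mem hb.2 (W.smul_mem _ ha.2)⟩
  · intro α ha β hb
    rw [Finset.mem_filter] at *
    rw [hc α ha.1]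
    exact rs.integral α ha.1 β hb.1
  · intro α ha c h
    exact rs.reduced α (Finset.mem_filter.1 ha).1 c (Finset.mem_filter.1 h).1

end RSSec

end FileP4a

section FileP4b
section BaireSec
open Module Submodule

lemma functional_open_dense {K : Type*} [NormedAddCommGroup K] [NormedSpace ℝ K]
    [FiniteDimensional ℝ K] (f : K →ₗ[ℝ] ℝ) (hf : f ≠ 0) :
    IsOpen {k | f k ≠ 0} ∧ Dense {k | f k ≠ 0} := by
  have hc : Continuous f := f.continuous_of_finiteDimensional
  refine ⟨isOpen_ne_fun hc continuous_const, ?_⟩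
  have e : {k | f k ≠ 0} = ((LinearMap.ker f : Submodule ℝ K) : Set K)ᶜ := by
    ext k; simp
  rw [e, ← interior_eq_empty_iff_dense_compl]
  by_contra h
  have := Submodule.eq_top_of_nonempty_interior' (LinearMap.ker f)
    (Set.nonempty_iff_ne_empty.2 h)
  exact hf (LinearMap.ker_eq_top.1 this)

lemma baire_functionals {K : Type*} [NormedAddCommGroup K] [NormedSpace ℝ K]
    [FiniteDimensional ℝ K] (F : Set (K →ₗ[ℝ] ℝ)) (hF : F.Countable) :
    Dense {k | ∀ f ∈ F, f ≠ 0 → f k ≠ 0} := by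
  have : Countable {f // f ∈ F ∧ f ≠ 0} := (hF.mono (fun f hf => hf.1)).to_subtype
  have : CompleteSpace K := FiniteDimensional.complete ℝ K
  have h := dense_iInter_of_isOpen (f := fun f : {f // f ∈ F ∧ f ≠ 0} => {k | f.1 k ≠ 0})
    (fun f => (functional_open_dense f.1 f.2.2).1) (fun f => (functional_open_dense f.1 f.2.2).2)
  convert h using 1
  ext k
  simp

lemma open_functionals {K : Type*} [NormedAddCommGroup K] [NormedSpace ℝ K]
    [FiniteDimensional ℝ K] (F : Set (K →ₗ[ℝ] ℝ)) (hF : F.Finite) :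
    IsOpen {k | ∀ f ∈ F, f ≠ 0 → f k ≠ 0} := by
  have : Finite {f // f ∈ F ∧ f ≠ 0} := (hF.subset (fun f hf => hf.1)).to_subtype
  have h := isOpen_iInter_of_finite (s := fun f : {f // f ∈ F ∧ f ≠ 0} => {k | f.1 k ≠ 0})
    (fun f => (functional_open_dense f.1 f.2.2).1)
  convert h using 1
  ext k
  simp

end BaireSec

section FinSec
open Module Submodule

lemma ncard_roots (p : Dual ℝ V → Prop) :
    {α : rs.roots | p α}.ncard = (rs.roots.filter p).card := by
  rw [← Set.ncard_image_of_injective _ Subtype.val_injective, ← Set.ncard_coe_finset]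
  congr 1
  ext x
  simp [and_comm]

/-- evaluation of parameters -/
def evK (α : rs.roots) : ParamSub rs →ₗ[ℝ] ℝ := (LinearMap.proj α).comp (ParamSub rs).subtype

@[simp] lemma evK_apply (α : rs.roots) (k : ParamSub rs) :
    evK rs α k = (k : rs.roots → ℝ) α := rfl

/-- the constant parameter one -/
def oneK : ParamSub rs := ⟨fun _ => 1, fun _ _ => rfl⟩

lemma oneK_apply (α : rs.roots) : (oneK rs : rs.roots → ℝ) α = 1 := rfl

/-- extension of a parameter by zero -/
def extK (k : rs.roots → ℝ) (α : Dual ℝ V) : ℝ := if h : α ∈ rs.roots then k ⟨α, h⟩ else 0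

lemma extK_coe (k : rs.roots → ℝ) (α : rs.roots) : extK rs k α = k α := by
  simp [extK]

lemma extK_mem (k : rs.roots → ℝ) {α : Dual ℝ V} (h : α ∈ rs.roots) :
    extK rs k α = k ⟨α, h⟩ := by
  simp [extK, h]

/-- the set of roots with generic value equal to the parameter -/
def SS (ξ : ParamSub rs →ₗ[ℝ] V) : Finset (Dual ℝ V) :=
  rs.roots.filter (fun α => ∀ k : ParamSub rs, α (ξ k) = extK rs k α)

lemma isLinResidual_iff (k : rs.roots → ℝ) (x : V) : IsLinResidual rs k x ↔
    (rs.roots.filter (fun α => α x = extK rs k α)).card =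
      (rs.roots.filter (fun α => α x = 0)).card + finrank ℝ V := by
  unfold IsLinResidual
  rw [← ncard_roots, ← ncard_roots]
  simp only [extK_coe]

theorem span_SS [FiniteDimensional ℝ V] (ξ : ParamSub rs →ₗ[ℝ] V) (h : IsGeneric rs ξ) :
    span ℝ (SS rs ξ : Set (Dual ℝ V)) = ⊤ := by
  obtain ⟨U, hUo, hUd, hU⟩ := h
  obtain ⟨B, hs, hp, hc⟩ := exists_form rs
  have hRS := rs_RS rs hs hp hc
  let nn : ParamSub rs := ⟨fun α => B α α, by
    intro α β
    have := (hRS ⊤).norm_refl (α := α) (Finset.mem_filter.2 ⟨α.2, trivial⟩) β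
    rw [hc α α.2] at this
    exact this⟩
  have hnn : ∀ α : rs.roots, (nn : rs.roots → ℝ) α = B α α := fun _ => rfl
  let f1 : rs.roots → (ParamSub rs →ₗ[ℝ] ℝ) := fun α => (α : Dual ℝ V).comp ξ - evK rs α
  let f2 : rs.roots → (ParamSub rs →ₗ[ℝ] ℝ) := fun α => (α : Dual ℝ V).comp ξ
  let f4 : rs.roots × rs.roots × ℤ × ℤ → (ParamSub rs →ₗ[ℝ] ℝ) :=
    fun q => (q.2.2.1 : ℝ) • evK rs q.1 + (q.2.2.2 : ℝ) • evK rs q.2.1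
  have hF : (Set.range f1 ∪ Set.range f2 ∪ Set.range f4 ∪ Set.range (evK rs)).Countable :=
    (((Set.countable_range _).union (Set.countable_range _)).union
      (Set.countable_range _)).union (Set.countable_range _)
  obtain ⟨k, hkU, hk⟩ : ∃ k ∈ U, k ∈ {k : ParamSub rs | ∀ f ∈ Set.range f1 ∪ Set.range f2 ∪
      Set.range f4 ∪ Set.range (evK rs), f ≠ 0 → f k ≠ 0} := by
    obtain ⟨k, h1, h2⟩ := (baire_functionals _ hF).inter_open_nonempty U hUo hUd.nonempty
    exact ⟨k, h1, h2⟩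
  rw [Set.mem_ofPred_eq] at hk
  have hk1 : ∀ α : rs.roots, (α : Dual ℝ V) (ξ k) = (k : rs.roots → ℝ) α →
      ∀ k' : ParamSub rs, (α : Dual ℝ V) (ξ k') = (k' : rs.roots → ℝ) α := by
    intro α ha k'
    by_contra hne
    refine hk (f1 α) (by simp) ?_ ?_
    · intro h0
      have : f1 α k' = 0 := by rw [h0]; rfl
      exact hne (sub_eq_zero.1 this)
    · exact sub_eq_zero.2 ha
  have hk3 : ∀ α : rs.roots, (k : rs.roots → ℝ) α ≠ 0 := by
    intro α
    refine hk (evK rs α) (by simp) ?_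
    intro h0
    have : evK rs α (oneK rs) = 0 := by rw [h0]; rfl
    rw [evK_apply, oneK_apply] at this
    norm_num at this
  have hk4 : ∀ α β : rs.roots, B α α ≠ B β β → ∀ m j : ℤ,
      m * (k : rs.roots → ℝ) α + j * (k : rs.roots → ℝ) β = 0 → m = 0 ∧ j = 0 := by
    intro α β hab m j h0
    have hz : f4 (α, β, m, j) = 0 := by
      by_contra hne
      exact hk (f4 (α, β, m, j)) (Or.inl (Or.inr ⟨_, rfl⟩)) hne h0
    have e1 : f4 (α, β, m, j) (oneK rs) = 0 := by rw [hz]; rfl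
    have e2 : f4 (α, β, m, j) nn = 0 := by rw [hz]; rfl
    have e1' : (m : ℝ) * 1 + j * 1 = 0 := e1
    have e2' : (m : ℝ) * B α α + j * B β β = 0 := e2
    have hm : (m : ℝ) * (B α α - B β β) = 0 := by linear_combination e2' - B β β * e1'
    have hm0 : (m : ℝ) = 0 := by
      rcases mul_eq_zero.1 hm with h | h
      · exact h
      · exact absurd (sub_eq_zero.1 h) hab
    have hj0 : (j : ℝ) = 0 := by rw [hm0] at e1'; linarith
    exact ⟨by exact_mod_cast hm0, by exact_mod_cast hj0⟩
  set S := SS rs ξ with hSdef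
  set W := span ℝ (S : Set (Dual ℝ V)) with hW
  set Φ := rs.roots.filter (fun α => α ∈ W) with hΦ
  have hKP : KP B Φ (extK rs k) := by
    have hm : ∀ α ∈ Φ, α ∈ rs.roots := fun α ha => (Finset.mem_filter.1 ha).1
    refine ⟨fun α ha β hb => ?_, fun α ha => ?_, fun α ha β hb hne m j h0 => ?_⟩
    · rw [hc α (hm α ha)]
      rw [extK_mem rs _ (hm β hb), extK_mem rs _ (rs.reflect_mem α (hm α ha) β (hm β hb))]
      exact k.2 ⟨α, hm α ha⟩ ⟨β, hm β hb⟩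
    · rw [extK_mem rs _ (hm α ha)]; exact hk3 _
    · refine hk4 ⟨α, hm α ha⟩ ⟨β, hm β hb⟩ hne m j ?_
      rw [extK_mem rs _ (hm α ha), extK_mem rs _ (hm β hb)] at h0
      exact h0
  have key := key_ineq (hRS W) hKP (Dual.eval ℝ V (ξ k))
  have hres := (isLinResidual_iff rs _ _).1 (hU k hkU)
  unfold KI at key
  rw [← hΦ] at key
  have hS : rs.roots.filter (fun α => α (ξ k) = extK rs k α) =
      Φ.filter (fun α => Dual.eval ℝ V (ξ k) α = extK rs k α) := by
    ext α
    simp only [Finset.mem_filter, hΦ, Dual.eval_apply]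
    constructor
    · rintro ⟨h1, h2⟩
      refine ⟨⟨h1, subset_span ?_⟩, h2⟩
      rw [hSdef, SS, Finset.mem_coe, Finset.mem_filter]
      refine ⟨h1, fun k' => ?_⟩
      rw [extK_mem rs _ h1] at h2 ⊢
      exact hk1 ⟨α, h1⟩ h2 k'
    · rintro ⟨⟨h1, _⟩, h2⟩; exact ⟨h1, h2⟩
  have hZ : (Φ.filter (fun α => Dual.eval ℝ V (ξ k) α = 0)).card ≤
      (rs.roots.filter (fun α => α (ξ k) = 0)).card := by
    apply Finset.card_le_card
    intro α
    simp only [Finset.mem_filter, hΦ, Dual.eval_apply]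
    rintro ⟨⟨h1, _⟩, h2⟩; exact ⟨h1, h2⟩
  have hd : finrank ℝ (span ℝ (Φ : Set (Dual ℝ V))) ≤ finrank ℝ W := by
    apply Submodule.finrank_mono
    rw [span_le]
    intro α ha
    exact (Finset.mem_filter.1 ha).2
  rw [hS] at hres
  apply Submodule.eq_top_of_finrank_eq
  apply le_antisymm (Submodule.finrank_le _)
  rw [Subspace.dual_finrank_eq]
  change _ ≤ finrank ℝ W
  omega

theorem generic_finite [FiniteDimensional ℝ V] :
    {ξ : ParamSub rs →ₗ[ℝ] V | IsGeneric rs ξ}.Finite := by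
  refine Set.Finite.of_injOn (f := SS rs) (t := (rs.roots.powerset : Set (Finset (Dual ℝ V))))
    ?_ ?_ (Finset.finite_toSet _)
  · intro ξ _
    rw [Finset.mem_coe, Finset.mem_powerset]
    exact Finset.filter_subset _ _
  · intro ξ h1 ξ' h2 he
    ext k
    rw [← sub_eq_zero]
    apply eq_zero_of_roots _ (span_SS rs ξ h1)
    intro γ hg
    have hg' := hg
    rw [he] at hg'
    rw [Finset.mem_coe, SS, Finset.mem_filter] at hg hg'
    rw [map_sub, hg.2 k, hg'.2 k, sub_self]

end FinSec

section WeylSec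
open Module Submodule

lemma generic_reflV {α : Dual ℝ V} (ha : α ∈ rs.roots) (ξ : ParamSub rs →ₗ[ℝ] V)
    (h : IsGeneric rs ξ) : IsGeneric rs ((reflV rs α).comp ξ) := by
  obtain ⟨U, hUo, hUd, hU⟩ := h
  refine ⟨U, hUo, hUd, fun k hk => ?_⟩
  have := (isLinResidual_iff rs _ _).1 (hU k hk)
  rw [isLinResidual_iff]
  have e : ∀ f : Dual ℝ V → ℝ, (∀ γ ∈ rs.roots, f (γ - γ (rs.coroot α) • α) = f γ) →
      (rs.roots.filter (fun γ => γ (((reflV rs α).comp ξ) k) = f γ)).card =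
      (rs.roots.filter (fun γ => γ (ξ k) = f γ)).card := by
    intro f hf
    refine Finset.card_nbij' (fun γ => γ - γ (rs.coroot α) • α)
      (fun γ => γ - γ (rs.coroot α) • α) ?_ ?_ (fun γ _ => refl_refl rs ha γ)
      (fun γ _ => refl_refl rs ha γ)
    · intro γ hg
      rw [Finset.mem_coe, Finset.mem_filter] at *
      rw [hf γ hg.1]
      refine ⟨rs.reflect_mem α ha γ hg.1, ?_⟩
      rw [← root_reflV]; exact hg.2
    · intro γ hg
      rw [Finset.mem_coe, Finset.mem_filter] at *
      rw [hf γ hg.1]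
      refine ⟨rs.reflect_mem α ha γ hg.1, ?_⟩
      rw [LinearMap.comp_apply, root_reflV, refl_refl rs ha]; exact hg.2
  rw [e, e (fun _ => 0) (fun _ _ => rfl)]
  · exact this
  · intro γ hg
    rw [extK_mem rs _ hg, extK_mem rs _ (rs.reflect_mem α ha γ hg)]
    exact k.2 ⟨α, ha⟩ ⟨γ, hg⟩

lemma generic_weyl (L : List (Dual ℝ V)) (hL : ∀ α ∈ L, α ∈ rs.roots)
    (ξ : ParamSub rs →ₗ[ℝ] V) (h : IsGeneric rs ξ) :
    IsGeneric rs ((weylOf rs L).comp ξ) := by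
  induction L with
  | nil => exact h
  | cons a L ih =>
    have := generic_reflV rs (hL a (by simp)) _ (ih fun α hα => hL α (by simp [hα]))
    have e : weylOf rs (a :: L) = reflV rs a * weylOf rs L := by
      simp [weylOf]
    rw [e]
    exact this

end WeylSec

end FileP4b

section FileP4c
section BaseSec
open Module Submodule

lemma exists_simple [FiniteDimensional ℝ V] : ∃ (s : Finset rs.roots) (bb : Basis s ℝ (Dual ℝ V)),
    (∀ i, bb i = (i : rs.roots)) ∧ ∀ α : rs.roots, ∃ f : rs.roots → ℕ,
      ((α : Dual ℝ V) = ∑ j ∈ s, f j • (j : Dual ℝ V) ∨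
        (α : Dual ℝ V) = -∑ j ∈ s, f j • (j : Dual ℝ V)) := by
  let p : Dual ℝ V →ₗ[ℝ] V →ₗ[ℝ] ℝ := LinearMap.id
  have hperf : p.IsPerfPair := LinearMap.IsPerfPair.id
  let r : rs.roots ↪ Dual ℝ V := Function.Embedding.subtype _
  let c : rs.roots ↪ V := ⟨fun α => rs.coroot α, fun α β h => by
    exact Subtype.ext (coroot_inj rs α.2 β.2 h)⟩
  have hp : ∀ i, p (r i) (c i) = 2 := fun i => rs.coroot_two i i.2
  have hs : ∀ i, Set.MapsTo (preReflection (r i) (p.flip (c i))) (Set.range r) (Set.range r) := by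
    rintro i - ⟨j, rfl⟩
    exact ⟨⟨_, rs.reflect_mem i i.2 j j.2⟩, rfl⟩
  have hsp : span ℝ (Set.range r) = ⊤ := by
    rw [← rs.spanning]
    congr 1
    ext x
    simp [r]
  have hintg : ∀ i j, ∃ z : ℤ, z = p (r i) (c j) := fun i j => by
    obtain ⟨z, hz⟩ := rs.integral j j.2 i i.2
    exact ⟨z, hz.symm⟩
  let P := RootPairing.mk'' p r c hp hs hsp
  have i1 : P.IsRootSystem := RootPairing.isRootSystem_mk'' hintg
  have i2 : P.IsCrystallographic := ⟨hintg⟩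
  have hroot : ∀ i, P.root i = (i : Dual ℝ V) := fun i => rfl
  have i3 : P.IsReduced := by
    constructor
    intro i j h
    rw [hroot, hroot] at *
    have hi : (i : Dual ℝ V) ≠ 0 := fun h0 => rs.zero_not_mem (h0 ▸ i.2)
    rw [LinearIndependent.pair_iff' hi] at h
    push Not at h
    obtain ⟨a, ha⟩ := h
    rcases rs.reduced i i.2 a (by rw [ha]; exact j.2) with rfl | rfl
    · left; rw [← ha, one_smul]
    · right; rw [← ha]; module
  obtain ⟨b⟩ := P.nonempty_base
  refine ⟨b.support, b.toWeightBasis, fun i => by rw [b.toWeightBasis_apply, hroot], fun α => ?_⟩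
  obtain ⟨f, -, hf⟩ := b.exists_root_eq_sum_nat_or_neg α
  exact ⟨f, hf⟩

theorem generic_nonempty [FiniteDimensional ℝ V] :
    ∃ ξ : ParamSub rs →ₗ[ℝ] V, IsGeneric rs ξ := by
  obtain ⟨s, bb, hbb, hsum⟩ := exists_simple rs
  let ξ : ParamSub rs →ₗ[ℝ] V := (evalEquiv ℝ V).symm.toLinearMap ∘ₗ
    (bb.constr ℝ).toLinearMap ∘ₗ LinearMap.pi (fun i : s => evK rs i)
  have hξ0 : ∀ (φ : Dual ℝ V) k, φ (ξ k) = bb.constr ℝ (fun i : s => evK rs i k) φ := by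
    intro φ k
    have := (evalEquiv ℝ V).apply_symm_apply (bb.constr ℝ (fun i : s => evK rs i k))
    have h2 := congrArg (fun F : Dual ℝ (Dual ℝ V) => F φ) this
    exact h2
  have hξ : ∀ i ∈ s, ∀ k : ParamSub rs, (i : Dual ℝ V) (ξ k) = (k : rs.roots → ℝ) i := by
    intro i hi k
    have := hξ0 (bb ⟨i, hi⟩) k
    rw [Basis.constr_basis, hbb] at this
    exact this
  have hone : ∀ f : rs.roots → ℕ, (∑ j ∈ s, f j • (j : Dual ℝ V)) (ξ (oneK rs)) =
      ((∑ j ∈ s, f j : ℕ) : ℝ) := by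
    intro f
    rw [LinearMap.sum_apply]
    push_cast
    apply Finset.sum_congr rfl
    intro j hj
    rw [LinearMap.smul_apply, hξ j hj, oneK_apply]
    simp
  have h2 : ∀ α : rs.roots, (α : Dual ℝ V).comp ξ ≠ 0 := by
    intro α h0
    have h1 : (α : Dual ℝ V) (ξ (oneK rs)) = 0 := congrArg (fun F => F (oneK rs)) h0
    obtain ⟨f, hf⟩ := hsum α
    have h3 : ∑ j ∈ s, f j = 0 := by
      rcases hf with hf | hf
      · rw [hf, hone] at h1; exact_mod_cast h1
      · rw [hf, LinearMap.neg_apply, hone, neg_eq_zero] at h1; exact_mod_cast h1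
    rw [Finset.sum_eq_zero_iff] at h3
    have h4 : ∑ j ∈ s, f j • (j : Dual ℝ V) = 0 :=
      Finset.sum_eq_zero fun j hj => by rw [h3 j hj, zero_smul]
    rw [h4, neg_zero, or_self] at hf
    exact rs.zero_not_mem (hf ▸ α.2)
  have h3 : ∀ α : rs.roots, α ∉ s → (α : Dual ℝ V).comp ξ - evK rs α ≠ 0 := by
    intro α hα h0
    have h1 : (α : Dual ℝ V) (ξ (oneK rs)) - 1 = 0 := congrArg (fun F => F (oneK rs)) h0
    obtain ⟨f, hf⟩ := hsum α
    rcases hf with hf | hf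
    · rw [hf, hone, sub_eq_zero] at h1
      have h3 : ∑ j ∈ s, f j = 1 := by exact_mod_cast h1
      obtain ⟨j, hj, hj0⟩ : ∃ j ∈ s, f j ≠ 0 := by
        by_contra hcon
        push Not at hcon
        rw [Finset.sum_eq_zero hcon] at h3
        omega
      rw [← Finset.add_sum_erase s f hj] at h3
      have h4 : ∑ x ∈ s.erase j, f x = 0 := by omega
      have h5 : f j = 1 := by omega
      rw [Finset.sum_eq_zero_iff] at h4
      rw [← Finset.add_sum_erase s _ hj, h5, one_smul,
        Finset.sum_eq_zero (fun x hx => by rw [h4 x hx, zero_smul]), add_zero] at hf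
      exact hα (Subtype.ext hf ▸ hj)
    · rw [hf, LinearMap.neg_apply, hone] at h1
      have : (0 : ℝ) ≤ ((∑ j ∈ s, f j : ℕ) : ℝ) := Nat.cast_nonneg _
      linarith
  let F : Set (ParamSub rs →ₗ[ℝ] ℝ) := Set.range (fun α : rs.roots => (α : Dual ℝ V).comp ξ) ∪
    Set.range (fun α : rs.roots => (α : Dual ℝ V).comp ξ - evK rs α)
  have hF : F.Finite := (Set.finite_range _).union (Set.finite_range _)
  refine ⟨ξ, {k | ∀ f ∈ F, f ≠ 0 → f k ≠ 0}, open_functionals F hF,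
    baire_functionals F hF.countable, fun k hk => ?_⟩
  rw [Set.mem_ofPred_eq] at hk
  unfold IsLinResidual
  have e1 : {α : rs.roots | (α : Dual ℝ V) (ξ k) = (k : rs.roots → ℝ) α} = (s : Set rs.roots) := by
    ext α
    rw [Set.mem_ofPred_eq, Finset.mem_coe]
    constructor
    · intro h
      by_contra hα
      exact hk _ (Or.inr ⟨α, rfl⟩) (h3 α hα) (sub_eq_zero.2 h)
    · intro h; exact hξ α h k
  have e2 : {α : rs.roots | (α : Dual ℝ V) (ξ k) = 0} = ∅ := by
    rw [Set.eq_empty_iff_forall_notMem]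
    intro α h
    exact hk _ (Or.inl ⟨α, rfl⟩) (h2 α) h
  rw [e1, e2, Set.ncard_empty, Set.ncard_coe_finset, zero_add, ← Subspace.dual_finrank_eq,
    finrank_eq_card_basis bb, Fintype.card_coe]

end BaseSec

end FileP4c

/-- The set of generic linear residual points of a reduced root system `R1` spanning
`V*` is finite, nonempty, and stable under the action of the Weyl group `W0` (generated
by the reflections in the roots) by postcomposition. -/
theorem generic_residual_points_finite_nonempty_weyl_stable (V : Type*) [AddCommGroup V]
    [Module ℝ V] [FiniteDimensional ℝ V] (rs : RedRootSystem V) :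
    {ξ : (ParamSub rs) →ₗ[ℝ] V | IsGeneric rs ξ}.Finite ∧
    (∃ ξ : (ParamSub rs) →ₗ[ℝ] V, IsGeneric rs ξ) ∧
    (∀ L : List (Module.Dual ℝ V), (∀ α ∈ L, α ∈ rs.roots) →
      ∀ ξ : (ParamSub rs) →ₗ[ℝ] V, IsGeneric rs ξ →
        IsGeneric rs ((weylOf rs L).comp ξ)) := by
  exact ⟨generic_finite rs, generic_nonempty rs, fun L hL ξ hξ => generic_weyl rs L hL ξ hξ⟩

end GenRes

end
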